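/- arXiv:2501.10590 — 2 statements merged into one kernel-verified Lean document; each statement's English description precedes it below -/
import Mathlib

section
/- For j = 1,2, let c_j be a wave speed (for the same constant c0 > 0), let f_j ∈ C²([0,∞)) be not identically zero with supp f_j ⊂ (0,1), and let u_j be a classical solution of the half-line wave problem for (c_j, f_j) that decays exponentially near the boundary region. Assume u_1(t,1) = u_2(t,1) for all t ≥ 0. Then there exists a function ρ : ℝ → ℝ with ρ(ξ) ≠ 0 for every ξ ∈ ℝ such that v_{c_2}(ξ,x) = ρ(ξ) v_{c_1}(ξ,x) for all x ≥ 1 and all ξ ∈ ℝ. -/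
open Set

/-- `c` is a wave speed for the constant `c0 > 0`: a positive `C²` function on `[0,∞)`
equal to `c0` outside `(0,1)`. -/
def IsWaveSpeed (c0 : ℝ) (c : ℝ → ℝ) : Prop :=
  ContDiffOn ℝ 2 c (Ici 0) ∧ (∀ x ∈ Ici (0:ℝ), 0 < c x) ∧
    ∀ x ∈ Ici (0:ℝ), x ∉ Ioo (0:ℝ) 1 → c x = c0

/-- `u` is a classical solution of the half-line wave problem for `(c, f)`. -/
def IsWaveSolution (c : ℝ → ℝ) (f : ℝ → ℝ) (u : ℝ → ℝ → ℝ) : Prop :=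
  ContDiffOn ℝ 2 (Function.uncurry u) (Ici 0 ×ˢ Ici 0) ∧
  (∀ t > (0:ℝ), ∀ x > (0:ℝ),
      deriv (fun s => deriv (fun r => u r x) s) t
        = (c x)^2 * deriv (fun y => deriv (fun w => u t w) y) x) ∧
  (∀ x ∈ Ici (0:ℝ), u 0 x = f x) ∧
  (∀ x ∈ Ici (0:ℝ), derivWithin (fun s => u s x) (Ici 0) 0 = 0) ∧
  (∀ t ∈ Ici (0:ℝ), u t 0 = 0)

/-- `u` decays exponentially near the boundary region `[0,1]`. -/
def DecaysExp (u : ℝ → ℝ → ℝ) : Prop :=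
  ∃ C > (0:ℝ), ∃ κ > (0:ℝ), ∀ t ∈ Ici (0:ℝ), ∀ x ∈ Icc (0:ℝ) 1,
    |u t x| + |derivWithin (fun y => u t y) (Ici 0) x| ≤ C * Real.exp (-κ * t)

/-- `v = v_c` is the family of solutions of `-c(x)² ∂²ₓ v(z,x) = z² v(z,x)` with
`v(z,0) = 0`, `∂ₓ v(z,0) = 1`. -/
def IsFreqSolution (c : ℝ → ℝ) (v : ℂ → ℝ → ℂ) : Prop :=
  ∀ z : ℂ, ContDiff ℝ 2 (v z) ∧
    (∀ x ∈ Ici (0:ℝ), -(c x : ℂ)^2 * deriv (deriv (v z)) x = z^2 * v z x) ∧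
    v z 0 = 0 ∧ deriv (v z) 0 = 1

open MeasureTheory Filter Topology

/-- Grönwall estimate for a second order scalar equation. -/
theorem aux_gronwall {y y' y'' : ℝ → ℝ} {a b K ε : ℝ} (hK : 1 ≤ K) (hε : 0 ≤ ε)
    (h1 : ∀ x ∈ Icc a b, HasDerivAt y (y' x) x)
    (h2 : ∀ x ∈ Icc a b, HasDerivAt y' (y'' x) x)
    (hb : ∀ x ∈ Icc a b, |y'' x| ≤ K * |y x| + ε)
    (ha : y a = 0) (ha' : y' a = 0) :
    ∀ x ∈ Icc a b, |y x| ≤ gronwallBound 0 K ε (x - a) ∧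
      |y' x| ≤ gronwallBound 0 K ε (x - a) := by
  have key := norm_le_gronwallBound_of_norm_deriv_right_le (f := fun x => (y x, y' x))
    (f' := fun x => (y' x, y'' x)) (δ := 0) (K := K) (ε := ε) (a := a) (b := b) ?_ ?_ ?_ ?_
  · intro x hx
    have := key x hx
    rw [Prod.norm_def] at this
    exact ⟨(le_max_left _ _).trans this, (le_max_right _ _).trans this⟩
  · exact fun x hx => ((h1 x hx).continuousAt.prodMk (h2 x hx).continuousAt).continuousWithinAt
  · intro x hx
    have hx' := Ico_subset_Icc_self hx
    exact ((h1 x hx').prodMk (h2 x hx')).hasDerivWithinAt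
  · simp [ha, ha']
  · intro x hx
    have hx' := Ico_subset_Icc_self hx
    simp only [Prod.norm_def, Real.norm_eq_abs]
    have e1 := le_max_left |y x| |y' x|
    have e2 := le_max_right |y x| |y' x|
    have e3 := hb x hx'
    have e4 : 0 ≤ max |y x| |y' x| := (abs_nonneg _).trans e1
    apply max_le <;> nlinarith

theorem aux_unique {y y' q : ℝ → ℝ} {a b M : ℝ}
    (h1 : ∀ x ∈ Icc a b, HasDerivAt y (y' x) x)
    (h2 : ∀ x ∈ Icc a b, HasDerivAt y' (q x * y x) x)
    (hb : ∀ x ∈ Icc a b, |q x| ≤ M)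
    (ha : y a = 0) (ha' : y' a = 0) :
    ∀ x ∈ Icc a b, y x = 0 ∧ y' x = 0 := by
  intro x hx
  have := aux_gronwall (K := |M| + 1) (ε := 0) (by linarith [abs_nonneg M]) le_rfl h1 h2 ?_
    ha ha' x hx
  · rw [gronwallBound_ε0_δ0] at this
    exact ⟨abs_eq_zero.1 (le_antisymm this.1 (abs_nonneg _)),
      abs_eq_zero.1 (le_antisymm this.2 (abs_nonneg _))⟩
  · intro x hx
    rw [abs_mul]
    have := hb x hx
    have := le_abs_self M
    have := abs_nonneg (y x)
    nlinarith

theorem aux_unique_back {y y' q : ℝ → ℝ} {a b M : ℝ}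
    (h1 : ∀ x ∈ Icc a b, HasDerivAt y (y' x) x)
    (h2 : ∀ x ∈ Icc a b, HasDerivAt y' (q x * y x) x)
    (hb : ∀ x ∈ Icc a b, |q x| ≤ M)
    (ha : y b = 0) (ha' : y' b = 0) :
    ∀ x ∈ Icc a b, y x = 0 ∧ y' x = 0 := by
  intro x hx
  have := aux_unique (y := fun s => y (-s)) (y' := fun s => -y' (-s)) (q := fun s => q (-s))
    (a := -b) (b := -a) (M := M) ?_ ?_ ?_ (by simpa) (by simpa) (-x)
    ⟨by linarith [hx.2], by linarith [hx.1]⟩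
  · simpa using this
  · intro s hs
    have := (h1 (-s) ⟨by linarith [hs.2], by linarith [hs.1]⟩).comp s (hasDerivAt_neg s)
    simpa [Function.comp_def] using this
  · intro s hs
    have := ((h2 (-s) ⟨by linarith [hs.2], by linarith [hs.1]⟩).comp s (hasDerivAt_neg s)).neg
    refine (this.congr_deriv (by simp)).congr_of_eventuallyEq ?_
    exact Eventually.of_forall fun _ => rfl
  · intro s hs
    exact hb (-s) ⟨by linarith [hs.2], by linarith [hs.1]⟩

/-- The real frequency-domain data: solutions together with their derivatives. -/
structure FreqData (c : ℝ → ℝ) (ψ ψ' : ℝ → ℝ → ℝ) : Prop where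
  d1 : ∀ ξ : ℝ, ∀ x ∈ Ici (0:ℝ), HasDerivAt (ψ ξ) (ψ' ξ x) x
  d2 : ∀ ξ : ℝ, ∀ x ∈ Ici (0:ℝ), HasDerivAt (ψ' ξ) (-(ξ ^ 2 / c x ^ 2) * ψ ξ x) x
  z0 : ∀ ξ : ℝ, ψ ξ 0 = 0
  z1 : ∀ ξ : ℝ, ψ' ξ 0 = 1

theorem aux_speed_bound {c0 : ℝ} {c : ℝ → ℝ} (hc : IsWaveSpeed c0 c) :
    ∃ M : ℝ, 0 < M ∧ ∀ x ∈ Ici (0:ℝ), 1 / c x ^ 2 ≤ M := by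
  obtain ⟨h1, h2, h3⟩ := hc
  have hcont : ContinuousOn (fun x => 1 / c x ^ 2) (Icc 0 1) := by
    refine continuousOn_const.div ((h1.continuousOn.mono Icc_subset_Ici_self).pow 2) ?_
    intro x hx
    exact (pow_pos (h2 x hx.1) 2).ne'
  obtain ⟨M, hM⟩ := (isCompact_Icc.bddAbove_image hcont)
  have hM' : ∀ x ∈ Icc (0:ℝ) 1, 1 / c x ^ 2 ≤ M := fun x hx => hM ⟨x, hx, rfl⟩
  refine ⟨M, ?_, ?_⟩
  · have := hM' 0 ⟨le_rfl, zero_le_one⟩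
    have h := pow_pos (h2 0 self_mem_Ici) 2
    exact lt_of_lt_of_le (by positivity) this
  · intro x hx
    by_cases hx1 : x ≤ 1
    · exact hM' x ⟨hx, hx1⟩
    · have e1 := h3 x hx (fun h => hx1 h.2.le)
      have e2 := h3 1 (by simp) (fun h => lt_irrefl _ h.2)
      have := hM' 1 ⟨zero_le_one, le_rfl⟩
      rw [e1]; rwa [e2] at this

theorem aux_hasDerivAt_re {g : ℝ → ℂ} {g' : ℂ} {x : ℝ} (h : HasDerivAt g g' x) :
    HasDerivAt (fun x => (g x).re) g'.re x :=
  Complex.reCLM.hasFDerivAt.comp_hasDerivAt x h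

theorem aux_hasDerivAt_im {g : ℝ → ℂ} {g' : ℂ} {x : ℝ} (h : HasDerivAt g g' x) :
    HasDerivAt (fun x => (g x).im) g'.im x :=
  Complex.imCLM.hasFDerivAt.comp_hasDerivAt x h

theorem aux_freqData {c0 : ℝ} {c : ℝ → ℝ} (hc : IsWaveSpeed c0 c) {v : ℂ → ℝ → ℂ}
    (hv : IsFreqSolution c v) :
    ∃ ψ ψ' : ℝ → ℝ → ℝ, FreqData c ψ ψ' ∧ ∀ ξ : ℝ, ∀ x ∈ Ici (0:ℝ), v ξ x = ψ ξ x := by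
  obtain ⟨M, hM0, hM⟩ := aux_speed_bound hc
  have hd1 : ∀ ξ : ℝ, ∀ x, HasDerivAt (v ξ) (deriv (v ξ) x) x := fun ξ x =>
    ((hv ξ).1.differentiable (by norm_num) x).hasDerivAt
  have hd2 : ∀ ξ : ℝ, ∀ x ∈ Ici (0:ℝ), HasDerivAt (deriv (v ξ))
      ((-(ξ ^ 2 / c x ^ 2) : ℝ) * v ξ x) x := by
    intro ξ x hx
    have h : ContDiff ℝ 1 (deriv (v ξ)) :=
      (contDiff_succ_iff_deriv (n := 1).1 (by rw [one_add_one_eq_two]; exact (hv ξ).1)).2.2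
    have h1 := (h.differentiable (by norm_num) x).hasDerivAt
    refine h1.congr_deriv ?_
    have h2 := (hv ξ).2.1 x hx
    have h3 : (c x : ℂ) ≠ 0 := by exact_mod_cast (hc.2.1 x hx).ne'
    have h4 : deriv (deriv (v ξ)) x = -((ξ:ℂ) ^ 2 / (c x : ℂ) ^ 2) * v ξ x := by
      field_simp
      linear_combination -h2
    rw [h4]
    push_cast
    ring
  refine ⟨fun ξ x => (v ξ x).re, fun ξ x => (deriv (v ξ) x).re, ⟨?_, ?_, ?_, ?_⟩, ?_⟩
  · exact fun ξ x hx => (aux_hasDerivAt_re (hd1 ξ x))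
  · intro ξ x hx
    have := aux_hasDerivAt_re (hd2 ξ x hx)
    rwa [Complex.re_ofReal_mul] at this
  · intro ξ; simp [(hv ξ).2.2.1]
  · intro ξ; simp [(hv ξ).2.2.2]
  · intro ξ x hx
    have := aux_unique (y := fun x => (v ξ x).im) (y' := fun x => (deriv (v ξ) x).im)
      (q := fun x => -(ξ ^ 2 / c x ^ 2)) (a := 0) (b := x) (M := ξ ^ 2 * M) ?_ ?_ ?_
      (by simp [(hv ξ).2.2.1]) (by simp [(hv ξ).2.2.2]) x ⟨hx, le_rfl⟩
    · apply Complex.ext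
      · simp
      · simpa using this.1
    · exact fun x hx => aux_hasDerivAt_im (hd1 ξ x)
    · intro x hx
      have := aux_hasDerivAt_im (hd2 ξ x hx.1)
      rwa [Complex.im_ofReal_mul] at this
    · intro x hx
      have := hM x hx.1
      rw [abs_neg, abs_of_nonneg (by positivity), div_eq_mul_one_div]
      gcongr

theorem FreqData.cont {c0 : ℝ} {c : ℝ → ℝ} (hc : IsWaveSpeed c0 c) {ψ ψ' : ℝ → ℝ → ℝ}
    (h : FreqData c ψ ψ') (ξ₀ : ℝ) {η : ℝ} (hη : 0 < η) :
    ∀ᶠ ξ in 𝓝 ξ₀, ∀ x ∈ Icc (0:ℝ) 1, |ψ ξ x - ψ ξ₀ x| < η ∧ |ψ' ξ x - ψ' ξ₀ x| < η := by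
  obtain ⟨M, hM0, hM⟩ := aux_speed_bound hc
  obtain ⟨R, hR⟩ : ∃ R, ∀ x ∈ Icc (0:ℝ) 1, |ψ ξ₀ x| ≤ R := by
    have : ContinuousOn (fun x => |ψ ξ₀ x|) (Icc 0 1) := fun x hx =>
      ((h.d1 ξ₀ x hx.1).continuousAt.abs).continuousWithinAt
    obtain ⟨R, hR⟩ := isCompact_Icc.bddAbove_image this
    exact ⟨R, fun x hx => hR ⟨x, hx, rfl⟩⟩
  have hR0 : 0 ≤ R := (abs_nonneg _).trans (hR 0 ⟨le_rfl, zero_le_one⟩)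
  set K : ℝ := (|ξ₀| + 1) ^ 2 * M + 1 with hK
  have hK1 : 1 ≤ K := by rw [hK]; nlinarith [mul_nonneg (sq_nonneg (|ξ₀| + 1)) hM0.le]
  have hlim : Tendsto (fun ξ : ℝ => gronwallBound 0 K (|ξ ^ 2 - ξ₀ ^ 2| * (M * R)) 1) (𝓝 ξ₀)
      (𝓝 0) := by
    have : Continuous (fun ξ : ℝ => gronwallBound 0 K (|ξ ^ 2 - ξ₀ ^ 2| * (M * R)) 1) :=
      (gronwallBound_continuous_ε 0 K 1).comp (by fun_prop)
    have h2 := this.tendsto ξ₀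
    simpa [gronwallBound_ε0_δ0] using h2
  have hlt := hlim.eventually (gt_mem_nhds hη)
  have hball : ∀ᶠ ξ in 𝓝 ξ₀, |ξ| < |ξ₀| + 1 :=
    (continuous_abs.tendsto ξ₀).eventually (gt_mem_nhds (by linarith))
  filter_upwards [hlt, hball] with ξ h1 h2 x hx
  have := aux_gronwall (y := fun x => ψ ξ x - ψ ξ₀ x) (y' := fun x => ψ' ξ x - ψ' ξ₀ x)
    (y'' := fun x => -(ξ ^ 2 / c x ^ 2) * ψ ξ x - -(ξ₀ ^ 2 / c x ^ 2) * ψ ξ₀ x)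
    (a := 0) (b := 1) (K := K) (ε := |ξ ^ 2 - ξ₀ ^ 2| * (M * R)) hK1 (by positivity)
    (fun x hx => (h.d1 ξ x hx.1).sub (h.d1 ξ₀ x hx.1))
    (fun x hx => (h.d2 ξ x hx.1).sub (h.d2 ξ₀ x hx.1)) ?_ (by simp [h.z0]) (by simp [h.z1]) x hx
  · have hm : gronwallBound 0 K (|ξ ^ 2 - ξ₀ ^ 2| * (M * R)) (x - 0) ≤
        gronwallBound 0 K (|ξ ^ 2 - ξ₀ ^ 2| * (M * R)) 1 :=
      gronwallBound_mono le_rfl (by positivity) (by linarith) (by linarith [hx.2])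
    exact ⟨by linarith [this.1], by linarith [this.2]⟩
  · intro x hx
    have e : -(ξ ^ 2 / c x ^ 2) * ψ ξ x - -(ξ₀ ^ 2 / c x ^ 2) * ψ ξ₀ x =
        -(ξ ^ 2 * (1 / c x ^ 2) * (ψ ξ x - ψ ξ₀ x)) - (ξ ^ 2 - ξ₀ ^ 2) * ((1 / c x ^ 2) * ψ ξ₀ x) := by
      ring
    rw [e]
    have hq0 : 0 ≤ 1 / c x ^ 2 := by positivity
    have hq := hM x hx.1
    have hξ : ξ ^ 2 ≤ (|ξ₀| + 1) ^ 2 := by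
      rw [← sq_abs ξ]; gcongr
    refine (abs_sub _ _).trans ?_
    rw [abs_neg, abs_mul, abs_mul, abs_mul, abs_mul, abs_of_nonneg hq0, abs_of_nonneg (sq_nonneg ξ)]
    have t1 : ξ ^ 2 * (1 / c x ^ 2) * |ψ ξ x - ψ ξ₀ x| ≤ K * |ψ ξ x - ψ ξ₀ x| := by
      apply mul_le_mul_of_nonneg_right _ (abs_nonneg _)
      have : ξ ^ 2 * (1 / c x ^ 2) ≤ (|ξ₀| + 1) ^ 2 * M := by gcongr
      linarith
    have t2 : |ξ ^ 2 - ξ₀ ^ 2| * (1 / c x ^ 2 * |ψ ξ₀ x|) ≤ |ξ ^ 2 - ξ₀ ^ 2| * (M * R) := by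
      have := hR x hx
      gcongr
    linarith

/-- A continuous exponentially decaying function whose cosine transform vanishes near a point
vanishes identically. -/
theorem aux_cos_unique {g : ℝ → ℝ} {C κ : ℝ} (hκ : 0 < κ)
    (hg : ContinuousOn g (Ici 0)) (hb : ∀ t ∈ Ici (0:ℝ), |g t| ≤ C * Real.exp (-κ * t))
    {ξ₀ : ℝ} (hz : ∀ᶠ ξ in 𝓝 ξ₀, ∫ t in Ioi (0:ℝ), Real.cos (ξ * t) * g t = 0) :
    ∀ t ∈ Ici (0:ℝ), g t = 0 := by
  have hC : 0 ≤ C := by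
    have := (abs_nonneg _).trans (hb 0 self_mem_Ici)
    simpa using this
  set h : ℝ → ℂ := fun t => (g |t| : ℂ) with hh
  have hcont : Continuous h := by
    apply Complex.continuous_ofReal.comp
    exact hg.comp_continuous continuous_abs (fun t => abs_nonneg t)
  have hhb : ∀ t, ‖h t‖ ≤ C * Real.exp (-κ * |t|) := by
    intro t
    simp only [hh, Complex.norm_real, Real.norm_eq_abs]
    exact hb _ (abs_nonneg t)
  have hexpint : ∀ k : ℝ, 0 < k → Integrable (fun t : ℝ => Real.exp (-k * |t|)) := by
    intro k hk
    rw [← integrableOn_univ, ← Iic_union_Ioi (a := (0:ℝ))]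
    refine IntegrableOn.union ?_ ?_
    · refine (integrableOn_exp_mul_Iic hk 0).congr_fun (fun t ht => ?_) measurableSet_Iic
      simp only [abs_of_nonpos (show t ≤ 0 from ht), neg_mul_neg]
    · refine (exp_neg_integrableOn_Ioi 0 hk).congr_fun (fun t ht => ?_) measurableSet_Ioi
      simp only [abs_of_pos (show 0 < t from ht)]
  have hint : Integrable h := by
    refine ((hexpint κ hκ).const_mul C).mono' hcont.aestronglyMeasurable ?_
    exact Eventually.of_forall hhb
  set F : ℂ → ℂ := fun z => ∫ t : ℝ, Complex.exp (Complex.I * z * t) * h t with hF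
  have hnexp : ∀ (z : ℂ) (t : ℝ), |z.im| < κ / 2 →
      ‖Complex.exp (Complex.I * z * t)‖ ≤ Real.exp (κ / 2 * |t|) := by
    intro z t hz
    rw [Complex.norm_exp]
    apply Real.exp_le_exp.2
    have : (Complex.I * z * t).re = -(z.im * t) := by simp
    rw [this]
    calc -(z.im * t) ≤ |z.im * t| := neg_le_abs _
      _ = |z.im| * |t| := abs_mul _ _
      _ ≤ _ := by gcongr
  -- differentiability
  set S : Set ℂ := {z | |z.im| < κ / 2} with hS
  have hSo : IsOpen S := isOpen_lt (by fun_prop) (by fun_prop)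
  have hFd : ∀ z ∈ S, DifferentiableAt ℂ F z := by
    intro z hz
    have := hasDerivAt_integral_of_dominated_loc_of_deriv_le (μ := volume) (𝕜 := ℂ)
      (F := fun z (t : ℝ) => Complex.exp (Complex.I * z * t) * h t)
      (F' := fun z (t : ℝ) => (Complex.exp (Complex.I * z * t) * (Complex.I * t)) * h t)
      (x₀ := z) (s := S) (bound := fun t => C * (4 / κ) * Real.exp (-(κ / 4) * |t|))
      (hSo.mem_nhds hz) ?_ ?_ ?_ ?_ ?_ ?_
    · exact this.2.differentiableAt
    · refine Eventually.of_forall fun z => ?_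
      exact Continuous.aestronglyMeasurable (by fun_prop)
    · refine ((hexpint (κ / 2) (by positivity)).const_mul C).mono'
        (Continuous.aestronglyMeasurable (by fun_prop)) ?_
      refine Eventually.of_forall fun t => ?_
      rw [norm_mul]
      calc _ ≤ Real.exp (κ / 2 * |t|) * (C * Real.exp (-κ * |t|)) := by
            gcongr
            · exact hnexp z t hz
            · exact hhb t
        _ = C * (Real.exp (κ / 2 * |t|) * Real.exp (-κ * |t|)) := by ring
        _ = _ := by rw [← Real.exp_add]; congr 2; ring
    · exact Continuous.aestronglyMeasurable (by fun_prop)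
    · refine Eventually.of_forall fun t z hz => ?_
      rw [norm_mul, norm_mul]
      have hI : ‖Complex.I * (t:ℂ)‖ = |t| := by simp
      rw [hI]
      have ht : |t| ≤ 4 / κ * Real.exp (κ / 4 * |t|) := by
        have := Real.add_one_le_exp (κ / 4 * |t|)
        have h2 : κ / 4 * |t| ≤ Real.exp (κ / 4 * |t|) := by linarith
        calc |t| = 4 / κ * (κ / 4 * |t|) := by field_simp
          _ ≤ _ := by gcongr
      calc _ ≤ Real.exp (κ / 2 * |t|) * (4 / κ * Real.exp (κ / 4 * |t|)) *
              (C * Real.exp (-κ * |t|)) := by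
            gcongr
            · exact hnexp z t hz
            · exact hhb t
        _ = C * (4 / κ) * (Real.exp (κ / 2 * |t|) * Real.exp (κ / 4 * |t|) *
              Real.exp (-κ * |t|)) := by ring
        _ = _ := by rw [← Real.exp_add, ← Real.exp_add]; congr 2; ring
    · exact (hexpint (κ / 4) (by positivity)).const_mul _
    · refine Eventually.of_forall fun t z hz => ?_
      apply HasDerivAt.mul_const
      apply HasDerivAt.cexp
      have := ((hasDerivAt_id z).const_mul Complex.I).mul_const (t:ℂ)
      simpa using this
  have hreal : ∀ ξ : ℝ, F ξ = ((2 * ∫ t in Ioi (0:ℝ), Real.cos (ξ * t) * g t : ℝ) : ℂ) := by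
    intro ξ
    have hi : ∀ ξ : ℝ, Integrable (fun t : ℝ => Complex.exp (Complex.I * ξ * t) * h t) := by
      intro ξ
      refine hint.norm.mono' (Continuous.aestronglyMeasurable (by fun_prop)) ?_
      refine Eventually.of_forall fun t => ?_
      rw [norm_mul, Complex.norm_exp]
      simp
    have h1 : F ξ = ∫ t : ℝ, Complex.exp (Complex.I * ((-ξ : ℝ) : ℂ) * t) * h t := by
      rw [hF]
      simp only
      rw [← integral_neg_eq_self]
      congr 1
      ext t
      simp [hh]
    have h2 : F ξ + F ξ = ∫ t : ℝ, ((2 * (Real.cos (ξ * |t|) * g |t|) : ℝ) : ℂ) := by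
      nth_rw 2 [h1]
      rw [hF]
      simp only
      rw [← integral_add (hi ξ) (hi (-ξ))]
      congr 1
      ext t
      have hc : Real.cos (ξ * |t|) = Real.cos (ξ * t) := by
        rcases abs_choice t with h | h <;> rw [h]
        rw [mul_neg, Real.cos_neg]
      rw [hc, ← add_mul]
      push_cast
      rw [← mul_assoc, Complex.two_cos]
      congr 2 <;> congr 1 <;> ring
    rw [integral_complex_ofReal,
      integral_comp_abs (f := fun t => 2 * (Real.cos (ξ * t) * g t)), integral_const_mul] at h2
    have h3 : (2:ℂ) * F ξ = 2 * ((2 * ∫ t in Ioi (0:ℝ), Real.cos (ξ * t) * g t : ℝ) : ℂ) := by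
      rw [two_mul, h2]; push_cast; ring
    exact mul_left_cancel₀ two_ne_zero h3
  have hFz : ∀ z ∈ S, F z = 0 := by
    have han : AnalyticOnNhd ℂ F S := by
      have : DifferentiableOn ℂ F S := fun z hz => (hFd z hz).differentiableWithinAt
      exact this.analyticOnNhd hSo
    have hconv : Convex ℝ S := by
      have : S = Complex.im ⁻¹' (Ioo (-(κ / 2)) (κ / 2)) := by
        ext z; simp [hS, abs_lt]
      rw [this]
      exact (convex_Ioo _ _).linear_preimage Complex.imLm
    have h0 : (ξ₀ : ℂ) ∈ S := by simp [hS]; positivity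
    apply han.eqOn_zero_of_preconnected_of_frequently_eq_zero hconv.isPreconnected h0
    have hfr : ∃ᶠ ξ : ℝ in 𝓝[≠] ξ₀, F ξ = 0 := by
      apply Eventually.frequently
      apply eventually_nhdsWithin_of_eventually_nhds
      filter_upwards [hz] with ξ hξ
      rw [hreal, hξ]; simp
    have ht : Tendsto (fun ξ : ℝ => (ξ : ℂ)) (𝓝[≠] ξ₀) (𝓝[≠] (ξ₀ : ℂ)) := by
      apply tendsto_nhdsWithin_of_tendsto_nhds_of_eventually_within
      · exact (Complex.continuous_ofReal.tendsto ξ₀).mono_left nhdsWithin_le_nhds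
      · filter_upwards [self_mem_nhdsWithin] with ξ hξ
        simpa using hξ
    exact ht.frequently hfr
  have hfour : FourierTransform.fourier h = 0 := by
    ext w
    rw [Real.fourier_eq']
    have := hFz ((-2 * Real.pi * w : ℝ) : ℂ) (by simp [hS]; positivity)
    rw [hF] at this
    simp only at this
    simp only [smul_eq_mul, Pi.zero_apply]
    rw [← this]
    congr 1
    ext t
    congr 2
    simp
    ring
  have hinv := hcont.fourierInv_fourier_eq hint (by rw [hfour]; exact integrable_zero _ _ _)
  intro t ht
  have h1 : h t = 0 := by
    rw [← hinv, hfour, Real.fourierInv_eq']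
    simp
  simp only [hh] at h1
  rw [abs_of_nonneg ht] at h1
  exact_mod_cast h1

/-- First and second partial derivatives of a `C²` function on the closed quarter plane. -/
structure C2Data (u ut ux utt utx uxx : ℝ → ℝ → ℝ) : Prop where
  cu : ContinuousOn (fun p : ℝ × ℝ => u p.1 p.2) (Ici 0 ×ˢ Ici 0)
  ct : ContinuousOn (fun p : ℝ × ℝ => ut p.1 p.2) (Ici 0 ×ˢ Ici 0)
  cx : ContinuousOn (fun p : ℝ × ℝ => ux p.1 p.2) (Ici 0 ×ˢ Ici 0)
  ctt : ContinuousOn (fun p : ℝ × ℝ => utt p.1 p.2) (Ici 0 ×ˢ Ici 0)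
  cxx : ContinuousOn (fun p : ℝ × ℝ => uxx p.1 p.2) (Ici 0 ×ˢ Ici 0)
  d : ∀ p ∈ (Ici 0 ×ˢ Ici 0 : Set (ℝ × ℝ)), HasFDerivWithinAt (fun p : ℝ × ℝ => u p.1 p.2)
    (ut p.1 p.2 • ContinuousLinearMap.fst ℝ ℝ ℝ + ux p.1 p.2 • ContinuousLinearMap.snd ℝ ℝ ℝ)
    (Ici 0 ×ˢ Ici 0) p
  dt : ∀ p ∈ (Ici 0 ×ˢ Ici 0 : Set (ℝ × ℝ)), HasFDerivWithinAt (fun p : ℝ × ℝ => ut p.1 p.2)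
    (utt p.1 p.2 • ContinuousLinearMap.fst ℝ ℝ ℝ + utx p.1 p.2 • ContinuousLinearMap.snd ℝ ℝ ℝ)
    (Ici 0 ×ˢ Ici 0) p
  dx : ∀ p ∈ (Ici 0 ×ˢ Ici 0 : Set (ℝ × ℝ)), HasFDerivWithinAt (fun p : ℝ × ℝ => ux p.1 p.2)
    (utx p.1 p.2 • ContinuousLinearMap.fst ℝ ℝ ℝ + uxx p.1 p.2 • ContinuousLinearMap.snd ℝ ℝ ℝ)
    (Ici 0 ×ˢ Ici 0) p

theorem aux_decomp (L : ℝ × ℝ →L[ℝ] ℝ) :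
    L = L (1, 0) • ContinuousLinearMap.fst ℝ ℝ ℝ + L (0, 1) • ContinuousLinearMap.snd ℝ ℝ ℝ := by
  ext <;> simp

theorem aux_C2Data {u : ℝ → ℝ → ℝ}
    (hu : ContDiffOn ℝ 2 (Function.uncurry u) (Ici 0 ×ˢ Ici 0)) :
    ∃ ut ux utt utx uxx, C2Data u ut ux utt utx uxx := by
  set S : Set (ℝ × ℝ) := Ici 0 ×ˢ Ici 0 with hS
  have hSu : UniqueDiffOn ℝ S := (uniqueDiffOn_Ici 0).prod (uniqueDiffOn_Ici 0)
  set U := Function.uncurry u with hU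
  set D := fderivWithin ℝ U S with hD
  have hD1 : ContDiffOn ℝ 1 D S := hu.fderivWithin hSu (by norm_num)
  set E := fderivWithin ℝ D S with hE
  have hE0 : ContDiffOn ℝ 0 E S := hD1.fderivWithin hSu (by norm_num)
  have hEc : ContinuousOn E S := hE0.continuousOn
  have hdD : ∀ p ∈ S, HasFDerivWithinAt D (E p) S p := fun p hp =>
    (hD1.differentiableOn (by norm_num) p hp).hasFDerivWithinAt
  have hev : ∀ w : ℝ × ℝ, ∀ p ∈ S, HasFDerivWithinAt (fun p => D p w)
      ((E p (1, 0) w) • ContinuousLinearMap.fst ℝ ℝ ℝ +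
        (E p (0, 1) w) • ContinuousLinearMap.snd ℝ ℝ ℝ) S p := by
    intro w p hp
    have := (hdD p hp).clm_apply (hasFDerivWithinAt_const w p S)
    refine this.congr_fderiv ?_
    rw [aux_decomp (_ + _)]
    simp
  have hsymm : ∀ p ∈ S, E p (1, 0) (0, 1) = E p (0, 1) (1, 0) := by
    intro p hp
    have hcl : p ∈ closure (interior S) := by
      rw [hS, interior_prod_eq, closure_prod_eq]
      simp only [interior_Ici, closure_Ioi]
      exact hp
    have := (hu p hp).isSymmSndFDerivWithinAt (by simp) hSu hcl hp
    exact this.eq _ _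
  refine ⟨fun t x => D (t, x) (1, 0), fun t x => D (t, x) (0, 1), fun t x => E (t, x) (1, 0) (1, 0),
    fun t x => E (t, x) (1, 0) (0, 1), fun t x => E (t, x) (0, 1) (0, 1), ?_, ?_, ?_, ?_, ?_,
    ?_, ?_, ?_⟩
  · exact hu.continuousOn
  · exact hD1.continuousOn.clm_apply continuousOn_const
  · exact hD1.continuousOn.clm_apply continuousOn_const
  · exact (hEc.clm_apply continuousOn_const).clm_apply continuousOn_const
  · exact (hEc.clm_apply continuousOn_const).clm_apply continuousOn_const
  · intro p hp
    have : HasFDerivWithinAt U (D p) S p :=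
      (hu.differentiableOn (by norm_num) p hp).hasFDerivWithinAt
    rw [aux_decomp (D p)] at this
    exact this
  · intro p hp
    have := hev (1, 0) p hp
    rw [← hsymm p hp] at this
    exact this
  · intro p hp
    exact hev (0, 1) p hp

theorem aux_slice_t {g gt gx : ℝ → ℝ → ℝ} {t x : ℝ} (hx : 0 ≤ x)
    (h : HasFDerivWithinAt (fun p : ℝ × ℝ => g p.1 p.2)
    (gt t x • ContinuousLinearMap.fst ℝ ℝ ℝ + gx t x • ContinuousLinearMap.snd ℝ ℝ ℝ)
    (Ici 0 ×ˢ Ici 0) (t, x)) :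
    HasDerivWithinAt (fun s => g s x) (gt t x) (Ici 0) t := by
  have h2 : HasDerivWithinAt (fun s : ℝ => (s, x)) ((1:ℝ), (0:ℝ)) (Ici 0) t :=
    (hasDerivWithinAt_id t _).prodMk (hasDerivWithinAt_const t _ x)
  have hm : MapsTo (fun s : ℝ => (s, x)) (Ici 0) (Ici 0 ×ˢ Ici 0) := fun s hs => ⟨hs, hx⟩
  have := h.comp_hasDerivWithinAt t h2 hm
  simpa [Function.comp_def] using this

theorem aux_slice_x {g gt gx : ℝ → ℝ → ℝ} {t x : ℝ} (ht : 0 ≤ t)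
    (h : HasFDerivWithinAt (fun p : ℝ × ℝ => g p.1 p.2)
    (gt t x • ContinuousLinearMap.fst ℝ ℝ ℝ + gx t x • ContinuousLinearMap.snd ℝ ℝ ℝ)
    (Ici 0 ×ˢ Ici 0) (t, x)) :
    HasDerivWithinAt (fun y => g t y) (gx t x) (Ici 0) x := by
  have h2 : HasDerivWithinAt (fun y : ℝ => (t, y)) ((0:ℝ), (1:ℝ)) (Ici 0) x :=
    (hasDerivWithinAt_const x _ t).prodMk (hasDerivWithinAt_id x _)
  have hm : MapsTo (fun s : ℝ => (t, s)) (Ici 0) (Ici 0 ×ˢ Ici 0) := fun s hs => ⟨ht, hs⟩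
  have := h.comp_hasDerivWithinAt x h2 hm
  simpa [Function.comp_def] using this

/-- All facts on a wave solution which are used below. -/
structure WaveData (c f : ℝ → ℝ) (u ut ux utt utx uxx : ℝ → ℝ → ℝ) : Prop
    extends C2Data u ut ux utt utx uxx where
  pde : ∀ t > (0:ℝ), ∀ x > (0:ℝ), utt t x = c x ^ 2 * uxx t x
  inip : ∀ x ∈ Ici (0:ℝ), u 0 x = f x
  iniv : ∀ x ∈ Ici (0:ℝ), ut 0 x = 0
  bdry : ∀ t ∈ Ici (0:ℝ), u t 0 = 0

theorem aux_waveData {c f : ℝ → ℝ} {u : ℝ → ℝ → ℝ} (hu : IsWaveSolution c f u) :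
    ∃ ut ux utt utx uxx, WaveData c f u ut ux utt utx uxx := by
  obtain ⟨h1, h2, h3, h4, h5⟩ := hu
  obtain ⟨ut, ux, utt, utx, uxx, hd⟩ := aux_C2Data h1
  refine ⟨ut, ux, utt, utx, uxx, hd, ?_, h3, ?_, h5⟩
  · intro t ht x hx
    have e1 : deriv (fun s => deriv (fun r => u r x) s) t = utt t x := by
      have : (fun s => deriv (fun r => u r x) s) =ᶠ[𝓝 t] fun s => ut s x := by
        filter_upwards [lt_mem_nhds ht] with s hs
        exact ((aux_slice_t hx.le (hd.d (s, x) ⟨hs.le, hx.le⟩)).hasDerivAt (Ici_mem_nhds hs)).deriv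
      rw [this.deriv_eq]
      exact ((aux_slice_t hx.le (hd.dt (t, x) ⟨ht.le, hx.le⟩)).hasDerivAt (Ici_mem_nhds ht)).deriv
    have e2 : deriv (fun s => deriv (fun r => u t r) s) x = uxx t x := by
      have : (fun s => deriv (fun r => u t r) s) =ᶠ[𝓝 x] fun s => ux t s := by
        filter_upwards [lt_mem_nhds hx] with s hs
        exact ((aux_slice_x ht.le (hd.d (t, s) ⟨ht.le, hs.le⟩)).hasDerivAt (Ici_mem_nhds hs)).deriv
      rw [this.deriv_eq]
      exact ((aux_slice_x ht.le (hd.dx (t, x) ⟨ht.le, hx.le⟩)).hasDerivAt (Ici_mem_nhds hx)).deriv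
    rw [← e1, ← e2]
    exact h2 t ht x hx
  · intro x hx
    refine Eq.trans ?_ (h4 x hx)
    symm
    exact (aux_slice_t hx (hd.d (0, x) ⟨self_mem_Ici, hx⟩)).derivWithin
      (uniqueDiffOn_Ici (0:ℝ) 0 self_mem_Ici)

/-- The outgoing condition at `x = 1`. -/
theorem WaveData.outgoing {c0 : ℝ} (hc0 : 0 < c0) {c f : ℝ → ℝ} (hc : IsWaveSpeed c0 c)
    (hs : ∀ x ∈ Ici (0:ℝ), x ∉ Ioo (0:ℝ) 1 → f x = 0)
    {u ut ux utt utx uxx : ℝ → ℝ → ℝ} (h : WaveData c f u ut ux utt utx uxx) :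
    ∀ t ∈ Ici (0:ℝ), ut t 1 + c0 * ux t 1 = 0 := by
  intro t ht
  have hx0 : ∀ x, 1 ≤ x → ux 0 x = 0 := by
    intro x hx
    have h0 : (0:ℝ) ≤ x := by linarith
    have h1 := (aux_slice_x le_rfl (h.d (0, x) ⟨self_mem_Ici, h0⟩)).mono
      (Ici_subset_Ici.2 h0)
    have h2 : HasDerivWithinAt (fun y => u 0 y) 0 (Ici x) x := by
      refine (hasDerivWithinAt_const x (Ici x) (0:ℝ)).congr_of_mem ?_ self_mem_Ici
      intro y hy
      have hy1 : x ≤ y := hy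
      rw [h.inip y (h0.trans hy1)]
      exact hs y (h0.trans hy1) (fun h => by linarith [h.2])
    exact (uniqueDiffOn_Ici x x self_mem_Ici).eq_deriv _ h1 h2
  rcases (show (0:ℝ) ≤ t from ht).eq_or_lt with rfl | htp
  · rw [h.iniv 1 (by simp), hx0 1 le_rfl]; simp
  set γ : ℝ → ℝ × ℝ := fun s => (t - s, 1 + c0 * s) with hγ
  have hγd : ∀ s, HasDerivAt γ ((-1:ℝ), c0) s := by
    intro s
    apply HasDerivAt.prodMk
    · simpa using (hasDerivAt_id s).const_sub t
    · simpa using ((hasDerivAt_id s).const_mul c0).const_add 1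
  have hγm : MapsTo γ (Icc 0 t) (Ici 0 ×ˢ Ici 0) := by
    intro s hs
    have h1 := hs.1
    refine ⟨by simpa [hγ] using hs.2, ?_⟩
    simp only [hγ, mem_Ici]
    positivity
  set q : ℝ → ℝ := fun s => ut (γ s).1 (γ s).2 + c0 * ux (γ s).1 (γ s).2 with hq
  have hqd : ∀ s ∈ Icc 0 t, HasDerivWithinAt q ((utt (γ s).1 (γ s).2 * (-1) + utx (γ s).1 (γ s).2 * c0)
      + c0 * (utx (γ s).1 (γ s).2 * (-1) + uxx (γ s).1 (γ s).2 * c0)) (Icc 0 t) s := by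
    intro s hs
    have e1 := (h.dt (γ s) (hγm hs)).comp_hasDerivWithinAt s (hγd s).hasDerivWithinAt hγm
    have e2 := (h.dx (γ s) (hγm hs)).comp_hasDerivWithinAt s (hγd s).hasDerivWithinAt hγm
    have := e1.add (e2.const_mul c0)
    refine (this.congr_deriv (by simp)).congr_of_mem (fun _ _ => rfl) hs
  have hconst : q t = q 0 := by
    have hcq : ContinuousOn q (Icc 0 t) := fun s hs => (hqd s hs).continuousWithinAt
    obtain ⟨s, hs, e⟩ := exists_hasDerivAt_eq_slope q (fun s => (utt (γ s).1 (γ s).2 * (-1) +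
      utx (γ s).1 (γ s).2 * c0) + c0 * (utx (γ s).1 (γ s).2 * (-1) + uxx (γ s).1 (γ s).2 * c0))
      htp hcq (fun s hs => (hqd s (Ioo_subset_Icc_self hs)).hasDerivAt (Icc_mem_nhds hs.1 hs.2))
    have hs1 : 0 < c0 * s := mul_pos hc0 hs.1
    have hp := h.pde (γ s).1 (by simpa [hγ] using hs.2) (γ s).2 (by simp only [hγ]; linarith)
    have hcc : c (γ s).2 = c0 := hc.2.2 _ (by simp only [hγ, mem_Ici]; linarith)
      (fun h => by simp only [hγ, mem_Ioo] at h; linarith [h.2])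
    rw [hp, hcc] at e
    have e0 : (q t - q 0) / (t - 0) = 0 := by rw [← e]; ring
    rcases div_eq_zero_iff.1 e0 with h | h <;> linarith
  have hqt : q t = 0 := by
    have hct : 0 ≤ c0 * t := by positivity
    simp only [hq, hγ, sub_self]
    rw [h.iniv _ (by simp only [mem_Ici]; linarith), hx0 _ (by linarith)]
    simp
  have hq0 : q 0 = ut t 1 + c0 * ux t 1 := by simp [hq, hγ]
  rw [← hq0, ← hconst, hqt]

theorem aux_bound_cpt {m : ℝ → ℝ} {g : ℝ → ℝ → ℝ} {X : ℝ} (hm : ContinuousOn m (Icc 0 X))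
    (hg : ContinuousOn (fun p : ℝ × ℝ => g p.1 p.2) (Ici 0 ×ˢ Ici 0)) (T : ℝ) :
    ∃ B, ∀ t ∈ Icc 0 T, ∀ y ∈ Icc 0 X, ‖m y * g t y‖ ≤ B := by
  have hc : ContinuousOn (fun p : ℝ × ℝ => ‖m p.2 * g p.1 p.2‖) (Icc 0 T ×ˢ Icc 0 X) := by
    refine ((hm.comp continuousOn_snd (fun p hp => hp.2)).mul (hg.mono ?_)).norm
    exact prod_mono Icc_subset_Ici_self Icc_subset_Ici_self
  obtain ⟨B, hB⟩ := (isCompact_Icc.prod isCompact_Icc).bddAbove_image hc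
  exact ⟨B, fun t ht y hy => hB ⟨(t, y), ⟨ht, hy⟩, rfl⟩⟩

theorem aux_contOn_slice {m : ℝ → ℝ} {g : ℝ → ℝ → ℝ} {X : ℝ} (hm : ContinuousOn m (Icc 0 X))
    (hg : ContinuousOn (fun p : ℝ × ℝ => g p.1 p.2) (Ici 0 ×ˢ Ici 0)) {t : ℝ} (ht : 0 ≤ t) :
    ContinuousOn (fun y => m y * g t y) (Icc 0 X) := by
  refine hm.mul (hg.comp (f := fun y => (t, y)) (by fun_prop) ?_)
  exact fun y hy => ⟨ht, hy.1⟩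

theorem aux_meas_slice {m : ℝ → ℝ} {g : ℝ → ℝ → ℝ} {X : ℝ} (hX : 0 ≤ X)
    (hm : ContinuousOn m (Icc 0 X))
    (hg : ContinuousOn (fun p : ℝ × ℝ => g p.1 p.2) (Ici 0 ×ˢ Ici 0)) {t : ℝ} (ht : 0 ≤ t) :
    AEStronglyMeasurable (fun y => m y * g t y) (volume.restrict (uIoc 0 X)) := by
  rw [uIoc_of_le hX]
  exact ((aux_contOn_slice hm hg ht).mono Ioc_subset_Icc_self).aestronglyMeasurable
    measurableSet_Ioc

theorem aux_param_deriv {m : ℝ → ℝ} {g gt : ℝ → ℝ → ℝ} {X : ℝ} (hX : 0 ≤ X)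
    (hm : ContinuousOn m (Icc 0 X))
    (hg : ContinuousOn (fun p : ℝ × ℝ => g p.1 p.2) (Ici 0 ×ˢ Ici 0))
    (hgt : ContinuousOn (fun p : ℝ × ℝ => gt p.1 p.2) (Ici 0 ×ˢ Ici 0))
    (hd : ∀ t ∈ Ici (0:ℝ), ∀ x ∈ Ici (0:ℝ), HasDerivWithinAt (fun s => g s x) (gt t x) (Ici 0) t)
    {t : ℝ} (ht : 0 < t) :
    HasDerivAt (fun t => ∫ y in (0:ℝ)..X, m y * g t y) (∫ y in (0:ℝ)..X, m y * gt t y) t := by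
  obtain ⟨B, hB⟩ := aux_bound_cpt hm hgt (t + 1)
  refine (intervalIntegral.hasDerivAt_integral_of_dominated_loc_of_deriv_le (μ := volume)
    (F := fun t y => m y * g t y) (F' := fun t y => m y * gt t y) (x₀ := t) (s := Ioo 0 (t + 1))
    (bound := fun _ => B) (Ioo_mem_nhds ht (by linarith)) ?_ ?_ ?_ ?_ ?_ ?_).2
  · filter_upwards [lt_mem_nhds ht] with s hs
    exact aux_meas_slice hX hm hg hs.le
  · apply ContinuousOn.intervalIntegrable
    rw [uIcc_of_le hX]
    exact aux_contOn_slice hm hg ht.le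
  · exact aux_meas_slice hX hm hgt ht.le
  · refine Eventually.of_forall fun y hy s hs => ?_
    rw [uIoc_of_le hX] at hy
    exact hB s ⟨hs.1.le, hs.2.le⟩ y ⟨hy.1.le, hy.2⟩
  · exact intervalIntegrable_const
  · refine Eventually.of_forall fun y hy s hs => ?_
    rw [uIoc_of_le hX] at hy
    exact ((hd s hs.1.le y hy.1.le).hasDerivAt (Ici_mem_nhds hs.1)).const_mul _

theorem aux_param_cont {m : ℝ → ℝ} {g : ℝ → ℝ → ℝ} {X : ℝ} (hX : 0 ≤ X)
    (hm : ContinuousOn m (Icc 0 X))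
    (hg : ContinuousOn (fun p : ℝ × ℝ => g p.1 p.2) (Ici 0 ×ˢ Ici 0)) :
    ContinuousWithinAt (fun t => ∫ y in (0:ℝ)..X, m y * g t y) (Ici 0) 0 := by
  obtain ⟨B, hB⟩ := aux_bound_cpt hm hg 1
  refine intervalIntegral.continuousWithinAt_of_dominated_interval (bound := fun _ => B) ?_ ?_ ?_ ?_
  · filter_upwards [self_mem_nhdsWithin] with s hs
    exact aux_meas_slice hX hm hg hs
  · filter_upwards [self_mem_nhdsWithin,
      mem_nhdsWithin_of_mem_nhds (Iio_mem_nhds (zero_lt_one' ℝ))] with s hs hs1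
    refine Eventually.of_forall fun y hy => ?_
    rw [uIoc_of_le hX] at hy
    exact hB s ⟨hs, (show s < 1 from hs1).le⟩ y ⟨hy.1.le, hy.2⟩
  · exact intervalIntegrable_const
  · refine Eventually.of_forall fun y hy => ?_
    rw [uIoc_of_le hX] at hy
    refine ContinuousWithinAt.mul continuousWithinAt_const ?_
    have h1 : ContinuousWithinAt (fun p : ℝ × ℝ => g p.1 p.2) (Ici 0 ×ˢ Ici 0) (0, y) :=
      hg (0, y) ⟨self_mem_Ici, hy.1.le⟩
    refine h1.comp (f := fun s : ℝ => (s, y)) (by fun_prop) ?_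
    exact fun s hs => ⟨hs, hy.1.le⟩

theorem aux_tendsto_exp {κ : ℝ} (hκ : 0 < κ) (C : ℝ) :
    Tendsto (fun t : ℝ => C * Real.exp (-κ * t)) atTop (𝓝 0) := by
  have : Tendsto (fun t : ℝ => Real.exp (-κ * t)) atTop (𝓝 0) :=
    Real.tendsto_exp_atBot.comp (tendsto_id.const_mul_atTop_of_neg (by linarith))
  simpa using this.const_mul C

theorem aux_integrable_decay {r : ℝ → ℝ} {C κ : ℝ} (hκ : 0 < κ)
    (hr : ContinuousOn r (Ici 0)) (hb : ∀ t ∈ Ici (0:ℝ), |r t| ≤ C * Real.exp (-κ * t)) :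
    IntegrableOn r (Ioi 0) := by
  refine ((exp_neg_integrableOn_Ioi 0 hκ).const_mul C).mono'
    ((hr.mono Ioi_subset_Ici_self).aestronglyMeasurable measurableSet_Ioi) ?_
  exact (ae_restrict_iff' measurableSet_Ioi).2 (Eventually.of_forall fun t ht => hb t (show (0:ℝ) ≤ t from le_of_lt ht))

/-- Abstract ODE-in-time argument. -/
theorem aux_time {G G1 G2 r : ℝ → ℝ} {ξ C κ : ℝ} (hκ : 0 < κ)
    (hG : ∀ t > (0:ℝ), HasDerivAt G (G1 t) t) (hG1 : ∀ t > (0:ℝ), HasDerivAt G1 (G2 t) t)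
    (hGc : ContinuousWithinAt G (Ici 0) 0) (hG1c : ContinuousWithinAt G1 (Ici 0) 0)
    (hG10 : G1 0 = 0)
    (hrel : ∀ t > (0:ℝ), G2 t + ξ ^ 2 * G t = r t)
    (hr : ContinuousOn r (Ici 0)) (hrb : ∀ t ∈ Ici (0:ℝ), |r t| ≤ C * Real.exp (-κ * t))
    (hGb : ∀ t ∈ Ici (0:ℝ), |G t| ≤ C * Real.exp (-κ * t)) :
    ∫ t in Ioi (0:ℝ), Real.cos (ξ * t) * r t = 0 := by
  have hGcont : ContinuousOn G (Ici 0) := by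
    intro t ht
    rcases (show (0:ℝ) ≤ t from ht).eq_or_lt with rfl | h
    · exact hGc
    · exact (hG t h).continuousAt.continuousWithinAt
  have hGi := aux_integrable_decay hκ hGcont hGb
  have hri := aux_integrable_decay hκ hr hrb
  have hG0 : Tendsto G atTop (𝓝 0) := by
    refine squeeze_zero_norm' ?_ (aux_tendsto_exp hκ C)
    filter_upwards [eventually_ge_atTop 0] with t ht
    exact hGb t ht
  have hG2i : IntegrableOn G2 (Ioi 0) := by
    refine (hri.sub (hGi.const_mul (ξ ^ 2))).congr_fun (fun t ht => ?_) measurableSet_Ioi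
    have := hrel t ht
    simp only [Pi.sub_apply]
    linarith
  have hL := tendsto_limUnder_of_hasDerivAt_of_integrableOn_Ioi hG1 hG2i
  set L := limUnder atTop G1 with hLd
  have hL0 : L = 0 := by
    have hmv : ∀ t : ℝ, ∃ s, t ≤ s ∧ (0 < t → G1 s = G (t + 1) - G t) := by
      intro t
      by_cases ht : 0 < t
      · obtain ⟨s, hs, e⟩ := exists_hasDerivAt_eq_slope G G1 (show t < t + 1 by linarith)
          (fun s hs => (hG s (ht.trans_le hs.1)).continuousAt.continuousWithinAt)
          (fun s hs => hG s (ht.trans hs.1))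
        refine ⟨s, hs.1.le, fun _ => ?_⟩
        rw [e]; simp
      · exact ⟨t, le_rfl, fun h => absurd h ht⟩
    choose σ hσ1 hσ2 using hmv
    have h1 : Tendsto (fun t => G1 (σ t)) atTop (𝓝 L) :=
      hL.comp (tendsto_atTop_mono hσ1 tendsto_id)
    have h2 : Tendsto (fun t => G (t + 1) - G t) atTop (𝓝 (0 - 0)) :=
      (hG0.comp (tendsto_atTop_add_const_right _ 1 tendsto_id)).sub hG0
    have h3 : Tendsto (fun t => G1 (σ t)) atTop (𝓝 (0 - 0)) := by
      refine h2.congr' ?_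
      filter_upwards [eventually_gt_atTop 0] with t ht
      exact (hσ2 t ht).symm
    simpa using tendsto_nhds_unique h1 h3
  rw [hL0] at hL
  set Φ : ℝ → ℝ := fun t => Real.cos (ξ * t) * G1 t + ξ * (Real.sin (ξ * t) * G t) with hΦ
  have hΦd : ∀ t ∈ Ioi (0:ℝ), HasDerivAt Φ (Real.cos (ξ * t) * r t) t := by
    intro t ht
    have hl : HasDerivAt (fun t => ξ * t) ξ t := by simpa using (hasDerivAt_id t).const_mul ξ
    have e := (hl.cos.mul (hG1 t ht)).add ((hl.sin.mul (hG t ht)).const_mul ξ)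
    refine (e.congr_deriv ?_).congr_of_eventuallyEq (Eventually.of_forall fun _ => rfl)
    rw [← hrel t ht]
    ring
  have hΦc : ContinuousWithinAt Φ (Ici 0) 0 := by
    refine ContinuousWithinAt.add (ContinuousWithinAt.mul ?_ hG1c)
      (continuousWithinAt_const.mul (ContinuousWithinAt.mul ?_ hGc))
    · exact Continuous.continuousWithinAt (by fun_prop)
    · exact Continuous.continuousWithinAt (by fun_prop)
  have hΦt : Tendsto Φ atTop (𝓝 0) := by
    have hb : Tendsto (fun t => |G1 t| + |ξ| * |G t|) atTop (𝓝 0) := by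
      have := hL.abs.add (hG0.abs.const_mul |ξ|)
      simpa using this
    refine squeeze_zero_norm (fun t => ?_) hb
    simp only [hΦ, Real.norm_eq_abs]
    refine (abs_add_le _ _).trans ?_
    rw [abs_mul, abs_mul, abs_mul]
    have h1 := Real.abs_cos_le_one (ξ * t)
    have h2 := Real.abs_sin_le_one (ξ * t)
    gcongr
    · exact mul_le_of_le_one_left (abs_nonneg _) h1
    · exact mul_le_of_le_one_left (abs_nonneg _) h2
  have hint : IntegrableOn (fun t => Real.cos (ξ * t) * r t) (Ioi 0) := by
    refine aux_integrable_decay (C := C) hκ (ContinuousOn.mul (by fun_prop) hr) (fun t ht => ?_)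
    rw [abs_mul]
    exact (mul_le_of_le_one_left (abs_nonneg _) (Real.abs_cos_le_one _)).trans (hrb t ht)
  rw [integral_Ioi_of_hasDerivAt_of_tendsto hΦc hΦd hint hΦt]
  simp [hΦ, hG10]

theorem aux_green {c0 : ℝ} {c f : ℝ → ℝ} (hc : IsWaveSpeed c0 c)
    {u ut ux utt utx uxx : ℝ → ℝ → ℝ} (h : WaveData c f u ut ux utt utx uxx)
    {ψ ψ' : ℝ → ℝ → ℝ} (hψ : FreqData c ψ ψ') {C κ : ℝ} (hκ : 0 < κ)
    (hdec : ∀ t ∈ Ici (0:ℝ), ∀ x ∈ Icc (0:ℝ) 1, |u t x| + |ux t x| ≤ C * Real.exp (-κ * t))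
    (ξ : ℝ) {X : ℝ} (hX : X ∈ Icc (0:ℝ) 1) :
    ∫ t in Ioi (0:ℝ), Real.cos (ξ * t) * (ψ ξ X * ux t X - ψ' ξ X * u t X) = 0 := by
  have hC : 0 ≤ C := by
    have := (add_nonneg (abs_nonneg _) (abs_nonneg _)).trans (hdec 0 self_mem_Ici 0 ⟨le_rfl, zero_le_one⟩)
    simpa using this
  set m : ℝ → ℝ := fun y => ψ ξ y / c y ^ 2 with hmdef
  have hψc : ContinuousOn (ψ ξ) (Icc 0 X) := fun y hy =>
    (hψ.d1 ξ y hy.1).continuousAt.continuousWithinAt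
  have hψ'c : ContinuousOn (ψ' ξ) (Icc 0 X) := fun y hy =>
    (hψ.d2 ξ y hy.1).continuousAt.continuousWithinAt
  have hm : ContinuousOn m (Icc 0 X) := by
    refine hψc.div ((hc.1.continuousOn.mono Icc_subset_Ici_self).pow 2) ?_
    intro y hy
    exact (pow_pos (hc.2.1 y hy.1) 2).ne'
  obtain ⟨B, hB⟩ : ∃ B, ∀ y ∈ Icc 0 X, |m y| ≤ B := by
    obtain ⟨B, hB⟩ := isCompact_Icc.bddAbove_image hm.abs
    exact ⟨B, fun y hy => hB ⟨y, hy, rfl⟩⟩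
  have hB0 : 0 ≤ B := (abs_nonneg _).trans (hB 0 ⟨le_rfl, hX.1⟩)
  set D : ℝ := (|ψ ξ X| + |ψ' ξ X| + B) * C with hD
  refine aux_time (G := fun t => ∫ y in (0:ℝ)..X, m y * u t y)
    (G1 := fun t => ∫ y in (0:ℝ)..X, m y * ut t y)
    (G2 := fun t => ∫ y in (0:ℝ)..X, m y * utt t y) (C := D) hκ ?_ ?_ ?_ ?_ ?_ ?_ ?_ ?_ ?_
  · intro t ht
    exact aux_param_deriv hX.1 hm h.cu h.ct
      (fun t ht x hx => aux_slice_t hx (h.d (t, x) ⟨ht, hx⟩)) ht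
  · intro t ht
    exact aux_param_deriv hX.1 hm h.ct h.ctt
      (fun t ht x hx => aux_slice_t hx (h.dt (t, x) ⟨ht, hx⟩)) ht
  · exact aux_param_cont hX.1 hm h.cu
  · exact aux_param_cont hX.1 hm h.ct
  · rw [intervalIntegral.integral_congr (g := fun _ => 0)]
    · simp
    · intro y hy
      rw [uIcc_of_le hX.1] at hy
      simp [h.iniv y hy.1]
  · intro t ht
    have hs : ∀ g : ℝ → ℝ → ℝ, ContinuousOn (fun p : ℝ × ℝ => g p.1 p.2) (Ici 0 ×ˢ Ici 0) →
        ContinuousOn (fun y => g t y) (Icc 0 X) := fun g hg =>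
      hg.comp (f := fun y => (t, y)) (by fun_prop) (fun y hy => ⟨ht.le, hy.1⟩)
    have hi : ∀ g : ℝ → ℝ → ℝ, ContinuousOn (fun p : ℝ × ℝ => g p.1 p.2) (Ici 0 ×ˢ Ici 0) →
        IntervalIntegrable (fun y => m y * g t y) volume 0 X := by
      intro g hg
      apply ContinuousOn.intervalIntegrable
      rw [uIcc_of_le hX.1]
      exact aux_contOn_slice hm hg ht.le
    rw [← intervalIntegral.integral_const_mul,
      ← intervalIntegral.integral_add (hi utt h.ctt) ((hi u h.cu).const_mul _)]
    have key := intervalIntegral.integral_eq_sub_of_hasDerivAt_of_le hX.1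
      (f := fun y => ψ ξ y * ux t y - ψ' ξ y * u t y)
      (f' := fun y => m y * utt t y + ξ ^ 2 * (m y * u t y)) ?_ ?_ ?_
    · rw [key]
      simp [hψ.z0, h.bdry t ht.le]
    · exact (hψc.mul (hs ux h.cx)).sub (hψ'c.mul (hs u h.cu))
    · intro y hy
      have hy0 : (0:ℝ) ≤ y := hy.1.le
      have e1 := (aux_slice_x ht.le (h.d (t, y) ⟨ht.le, hy0⟩)).hasDerivAt (Ici_mem_nhds hy.1)
      have e2 := (aux_slice_x ht.le (h.dx (t, y) ⟨ht.le, hy0⟩)).hasDerivAt (Ici_mem_nhds hy.1)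
      have e3 := ((hψ.d1 ξ y hy0).mul e2).sub ((hψ.d2 ξ y hy0).mul e1)
      refine (e3.congr_deriv ?_).congr_of_eventuallyEq (Eventually.of_forall fun _ => rfl)
      have hcy := (hc.2.1 y hy0).ne'
      simp only [h.pde t ht y hy.1, hmdef]
      field_simp
      ring
    · exact (hi utt h.ctt).add ((hi u h.cu).const_mul _)
  · have hs : ∀ g : ℝ → ℝ → ℝ, ContinuousOn (fun p : ℝ × ℝ => g p.1 p.2) (Ici 0 ×ˢ Ici 0) →
        ContinuousOn (fun t => g t X) (Ici 0) := fun g hg =>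
      hg.comp (f := fun t => (t, X)) (by fun_prop) (fun t ht => ⟨ht, hX.1⟩)
    exact (continuousOn_const.mul (hs ux h.cx)).sub (continuousOn_const.mul (hs u h.cu))
  · intro t ht
    have e := hdec t ht X hX
    have a1 := abs_nonneg (u t X)
    have a2 := abs_nonneg (ux t X)
    refine (abs_sub _ _).trans ?_
    rw [abs_mul, abs_mul, hD]
    calc |ψ ξ X| * |ux t X| + |ψ' ξ X| * |u t X|
        ≤ |ψ ξ X| * (C * Real.exp (-κ * t)) + |ψ' ξ X| * (C * Real.exp (-κ * t)) := by
          gcongr <;> linarith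
      _ ≤ |ψ ξ X| * (C * Real.exp (-κ * t)) + |ψ' ξ X| * (C * Real.exp (-κ * t)) +
          B * (C * Real.exp (-κ * t)) := le_add_of_nonneg_right (by positivity)
      _ = _ := by ring
  · intro t ht
    have := intervalIntegral.norm_integral_le_of_norm_le_const (a := 0) (b := X)
      (f := fun y => m y * u t y) (C := B * (C * Real.exp (-κ * t))) ?_
    · rw [sub_zero, abs_of_nonneg hX.1] at this
      refine this.trans ?_
      calc _ ≤ B * (C * Real.exp (-κ * t)) * 1 := by gcongr; exact hX.2
        _ ≤ (|ψ ξ X| + |ψ' ξ X|) * (C * Real.exp (-κ * t)) + B * (C * Real.exp (-κ * t)) := by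
          have : 0 ≤ (|ψ ξ X| + |ψ' ξ X|) * (C * Real.exp (-κ * t)) := by positivity
          linarith
        _ = _ := by rw [hD]; ring
    · intro y hy
      rw [uIoc_of_le hX.1] at hy
      rw [norm_mul]
      have e := hdec t ht y ⟨hy.1.le, hy.2.trans hX.2⟩
      have a2 := abs_nonneg (ux t y)
      gcongr
      · exact hB y ⟨hy.1.le, hy.2⟩
      · rw [Real.norm_eq_abs]; linarith

theorem aux_contOn_t {g : ℝ → ℝ → ℝ}
    (hg : ContinuousOn (fun p : ℝ × ℝ => g p.1 p.2) (Ici 0 ×ˢ Ici 0)) {x : ℝ} (hx : 0 ≤ x) :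
    ContinuousOn (fun t => g t x) (Ici 0) :=
  hg.comp (f := fun t => (t, x)) (by fun_prop) (fun _ ht => ⟨ht, hx⟩)

theorem aux_contOn_x {g : ℝ → ℝ → ℝ}
    (hg : ContinuousOn (fun p : ℝ × ℝ => g p.1 p.2) (Ici 0 ×ˢ Ici 0)) {t : ℝ} (ht : 0 ≤ t) :
    ContinuousOn (fun x => g t x) (Ici 0) :=
  hg.comp (f := fun x => (t, x)) (by fun_prop) (fun _ hx => ⟨ht, hx⟩)

theorem aux_cos_integrable {g : ℝ → ℝ} {C κ : ℝ} (hκ : 0 < κ) (ξ : ℝ)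
    (hg : ContinuousOn g (Ici 0)) (hb : ∀ t ∈ Ici (0:ℝ), |g t| ≤ C * Real.exp (-κ * t)) :
    IntegrableOn (fun t => Real.cos (ξ * t) * g t) (Ioi 0) := by
  refine aux_integrable_decay (C := C) hκ (ContinuousOn.mul (by fun_prop) hg) (fun t ht => ?_)
  rw [abs_mul]
  exact (mul_le_of_le_one_left (abs_nonneg _) (Real.abs_cos_le_one _)).trans (hb t ht)

/-- Vanishing of the trace at `x = 1` forces vanishing of the initial datum. -/
theorem aux_nonvanish {c0 : ℝ} {c f : ℝ → ℝ} (hc : IsWaveSpeed c0 c)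
    {u ut ux utt utx uxx : ℝ → ℝ → ℝ} (h : WaveData c f u ut ux utt utx uxx)
    {ψ ψ' : ℝ → ℝ → ℝ} (hψ : FreqData c ψ ψ') {C κ : ℝ} (hκ : 0 < κ)
    (hdec : ∀ t ∈ Ici (0:ℝ), ∀ x ∈ Icc (0:ℝ) 1, |u t x| + |ux t x| ≤ C * Real.exp (-κ * t))
    (h1 : ∀ t ∈ Ici (0:ℝ), u t 1 = 0) :
    ∀ x ∈ Ioo (0:ℝ) 1, f x = 0 := by
  have hdu : ∀ x ∈ Icc (0:ℝ) 1, ∀ t ∈ Ici (0:ℝ), |u t x| ≤ C * Real.exp (-κ * t) :=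
    fun x hx t ht => by linarith [hdec t ht x hx, abs_nonneg (ux t x)]
  have hdx : ∀ x ∈ Icc (0:ℝ) 1, ∀ t ∈ Ici (0:ℝ), |ux t x| ≤ C * Real.exp (-κ * t) :=
    fun x hx t ht => by linarith [hdec t ht x hx, abs_nonneg (u t x)]
  have hiu : ∀ ξ, ∀ x ∈ Icc (0:ℝ) 1, IntegrableOn (fun t => Real.cos (ξ * t) * u t x) (Ioi 0) :=
    fun ξ x hx => aux_cos_integrable hκ ξ (aux_contOn_t h.cu hx.1) (hdu x hx)
  have hix : ∀ ξ, ∀ x ∈ Icc (0:ℝ) 1, IntegrableOn (fun t => Real.cos (ξ * t) * ux t x) (Ioi 0) :=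
    fun ξ x hx => aux_cos_integrable hκ ξ (aux_contOn_t h.cx hx.1) (hdx x hx)
  have hbi : IntegrableOn (fun t => C * Real.exp (-κ * t)) (Ioi 0) :=
    (exp_neg_integrableOn_Ioi 0 hκ).const_mul C
  have hcb : ∀ (ξ t y : ℝ), ‖Real.cos (ξ * t) * y‖ ≤ |y| := fun ξ t y => by
    rw [norm_mul]
    exact mul_le_of_le_one_left (abs_nonneg _) (Real.abs_cos_le_one _)
  set A : ℝ → ℝ → ℝ := fun ξ x => ∫ t in Ioi (0:ℝ), Real.cos (ξ * t) * u t x with hA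
  set B : ℝ → ℝ → ℝ := fun ξ x => ∫ t in Ioi (0:ℝ), Real.cos (ξ * t) * ux t x with hB
  have hAd : ∀ ξ, ∀ x ∈ Ioo (0:ℝ) 1, HasDerivAt (A ξ) (B ξ x) x := by
    intro ξ x hx
    refine (hasDerivAt_integral_of_dominated_loc_of_deriv_le
      (μ := volume.restrict (Ioi (0:ℝ))) (F := fun x t => Real.cos (ξ * t) * u t x)
      (F' := fun x t => Real.cos (ξ * t) * ux t x) (x₀ := x) (s := Ioo 0 1)
      (bound := fun t => C * Real.exp (-κ * t)) (Ioo_mem_nhds hx.1 hx.2) ?_ ?_ ?_ ?_ ?_ ?_).2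
    · filter_upwards [Ioo_mem_nhds hx.1 hx.2] with y hy
      exact (hiu ξ y (Ioo_subset_Icc_self hy)).aestronglyMeasurable
    · exact hiu ξ x (Ioo_subset_Icc_self hx)
    · exact (hix ξ x (Ioo_subset_Icc_self hx)).aestronglyMeasurable
    · refine (ae_restrict_iff' measurableSet_Ioi).2 (Eventually.of_forall fun t ht y hy => ?_)
      exact (hcb _ _ _).trans (hdx y (Ioo_subset_Icc_self hy) t (show (0:ℝ) ≤ t from le_of_lt ht))
    · exact hbi
    · refine (ae_restrict_iff' measurableSet_Ioi).2 (Eventually.of_forall fun t ht y hy => ?_)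
      have ht0 : (0:ℝ) ≤ t := le_of_lt ht
      exact ((aux_slice_x ht0 (h.d (t, y) ⟨ht0, hy.1.le⟩)).hasDerivAt
        (Ici_mem_nhds hy.1)).const_mul _
  have hAc : ∀ ξ, ContinuousOn (A ξ) (Icc 0 1) := by
    intro ξ
    refine continuousOn_of_dominated (bound := fun t => C * Real.exp (-κ * t)) ?_ ?_ hbi ?_
    · exact fun y hy => (hiu ξ y hy).aestronglyMeasurable
    · intro y hy
      refine (ae_restrict_iff' measurableSet_Ioi).2 (Eventually.of_forall fun t ht => ?_)
      exact (hcb _ _ _).trans (hdu y hy t (show (0:ℝ) ≤ t from le_of_lt ht))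
    · refine (ae_restrict_iff' measurableSet_Ioi).2 (Eventually.of_forall fun t ht => ?_)
      exact continuousOn_const.mul ((aux_contOn_x h.cu (le_of_lt ht)).mono Icc_subset_Ici_self)
  have hgreen : ∀ ξ, ∀ x ∈ Icc (0:ℝ) 1, ψ ξ x * B ξ x - ψ' ξ x * A ξ x = 0 := by
    intro ξ x hx
    rw [← aux_green hc h hψ hκ hdec ξ hx, hA, hB, ← integral_const_mul, ← integral_const_mul,
      ← integral_sub ((hix ξ x hx).const_mul _) ((hiu ξ x hx).const_mul _)]
    congr 1
    ext t
    ring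
  have hψ0 : ∀ x ∈ Icc (0:ℝ) 1, ψ' 0 x = 1 := by
    intro x hx
    have := aux_unique (y := fun x => ψ 0 x - x) (y' := fun x => ψ' 0 x - 1) (q := fun _ => 0)
      (a := 0) (b := 1) (M := 0) (fun x hx => (hψ.d1 0 x hx.1).sub (hasDerivAt_id x))
      (fun x hx => by simpa using (hψ.d2 0 x hx.1).sub_const 1) (by simp) (by simp [hψ.z0])
      (by simp [hψ.z1]) x hx
    linarith [this.2]
  have hpos : ∀ᶠ ξ in 𝓝 (0:ℝ), ∀ x ∈ Ioc (0:ℝ) 1, 0 < ψ ξ x := by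
    filter_upwards [hψ.cont hc 0 (show (0:ℝ) < 1 / 2 by norm_num)] with ξ hξ x hx
    obtain ⟨s, hs, e⟩ := exists_hasDerivAt_eq_slope (ψ ξ) (ψ' ξ) hx.1
      (fun s hs => (hψ.d1 ξ s hs.1).continuousAt.continuousWithinAt)
      (fun s hs => hψ.d1 ξ s hs.1.le)
    have hs1 : s ∈ Icc (0:ℝ) 1 := ⟨hs.1.le, hs.2.le.trans hx.2⟩
    have h2 := (abs_lt.1 (hξ s hs1).2).1
    rw [hψ0 s hs1] at h2
    rw [hψ.z0, sub_zero, sub_zero, eq_div_iff hx.1.ne'] at e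
    rw [← e]
    exact mul_pos (by linarith) hx.1
  intro x hx
  have hfin := aux_cos_unique (g := fun t => u t x) hκ (aux_contOn_t h.cu hx.1.le)
    (hdu x (Ioo_subset_Icc_self hx)) (ξ₀ := 0) ?_ 0 self_mem_Ici
  · rw [← h.inip x hx.1.le]; exact hfin
  · filter_upwards [hpos] with ξ hξ
    change A ξ x = 0
    have hA1 : A ξ 1 = 0 := by
      rw [hA]
      simp only
      rw [setIntegral_congr_fun (g := fun _ => 0) measurableSet_Ioi]
      · simp
      · intro t ht
        simp [h1 t (show (0:ℝ) ≤ t from le_of_lt ht)]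
    have hne : ∀ y ∈ Icc x 1, ψ ξ y ≠ 0 := fun y hy => (hξ y ⟨hx.1.trans_le hy.1, hy.2⟩).ne'
    obtain ⟨s, hs, e⟩ := exists_hasDerivAt_eq_slope (fun y => A ξ y / ψ ξ y)
      (fun y => (B ξ y * ψ ξ y - A ξ y * ψ' ξ y) / ψ ξ y ^ 2) hx.2
      (((hAc ξ).mono (Icc_subset_Icc_left hx.1.le)).div (fun y hy =>
        (hψ.d1 ξ y (hx.1.le.trans hy.1)).continuousAt.continuousWithinAt) hne)
      (fun y hy => (hAd ξ y ⟨hx.1.trans hy.1, hy.2⟩).div (hψ.d1 ξ y (hx.1.trans hy.1).le)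
        (hne y (Ioo_subset_Icc_self hy)))
    have hg := hgreen ξ s ⟨(hx.1.trans hs.1).le, hs.2.le⟩
    rw [show B ξ s * ψ ξ s - A ξ s * ψ' ξ s = 0 by linarith, zero_div, hA1, zero_div, zero_sub] at e
    have h3 : A ξ x / ψ ξ x = 0 := by
      rcases div_eq_zero_iff.1 e.symm with h | h
      · linarith
      · linarith [hx.2]
    rcases div_eq_zero_iff.1 h3 with h | h
    · exact h
    · exact absurd h (hne x ⟨le_rfl, hx.2.le⟩)

theorem aux_decay {u ut ux utt utx uxx : ℝ → ℝ → ℝ} (h : C2Data u ut ux utt utx uxx)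
    (hd : DecaysExp u) : ∃ C κ : ℝ, 0 < κ ∧
    ∀ t ∈ Ici (0:ℝ), ∀ x ∈ Icc (0:ℝ) 1, |u t x| + |ux t x| ≤ C * Real.exp (-κ * t) := by
  obtain ⟨C, -, κ, hκ, hb⟩ := hd
  refine ⟨C, κ, hκ, fun t ht x hx => ?_⟩
  have := hb t ht x hx
  rwa [(aux_slice_x ht (h.d (t, x) ⟨ht, hx.1⟩)).derivWithin
    (uniqueDiffOn_Ici (0:ℝ) x hx.1)] at this

theorem FreqData.nonzero {c0 : ℝ} {c : ℝ → ℝ} (hc : IsWaveSpeed c0 c) {ψ ψ' : ℝ → ℝ → ℝ}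
    (h : FreqData c ψ ψ') (ξ : ℝ) (h0 : ψ ξ 1 = 0) (h1 : ψ' ξ 1 = 0) : False := by
  obtain ⟨M, hM0, hM⟩ := aux_speed_bound hc
  have := aux_unique_back (y := ψ ξ) (y' := ψ' ξ) (q := fun x => -(ξ ^ 2 / c x ^ 2)) (a := 0)
    (b := 1) (M := ξ ^ 2 * M) (fun x hx => h.d1 ξ x hx.1) (fun x hx => h.d2 ξ x hx.1) ?_ h0 h1 0
    ⟨le_rfl, zero_le_one⟩
  · rw [h.z1] at this; exact one_ne_zero this.2
  · intro x hx
    have := hM x hx.1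
    rw [abs_neg, abs_of_nonneg (by positivity), div_eq_mul_one_div]
    gcongr

theorem aux_final {c0 : ℝ} {c₁ c₂ : ℝ → ℝ} (hc₁ : IsWaveSpeed c0 c₁) (hc₂ : IsWaveSpeed c0 c₂)
    {ψ₁ ψ₁' ψ₂ ψ₂' : ℝ → ℝ → ℝ} (h₁ : FreqData c₁ ψ₁ ψ₁') (h₂ : FreqData c₂ ψ₂ ψ₂') (ξ : ℝ)
    (hW : ψ₁ ξ 1 * ψ₂' ξ 1 - ψ₂ ξ 1 * ψ₁' ξ 1 = 0) :
    ∃ ρ : ℝ, ρ ≠ 0 ∧ ∀ x ∈ Ici (1:ℝ), ψ₂ ξ x = ρ * ψ₁ ξ x := by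
  obtain ⟨ρ, hρ1, hρ2⟩ : ∃ ρ : ℝ, ψ₂ ξ 1 = ρ * ψ₁ ξ 1 ∧ ψ₂' ξ 1 = ρ * ψ₁' ξ 1 := by
    by_cases h0 : ψ₁ ξ 1 = 0
    · have h1 : ψ₁' ξ 1 ≠ 0 := fun h1 => h₁.nonzero hc₁ ξ h0 h1
      refine ⟨ψ₂' ξ 1 / ψ₁' ξ 1, ?_, by field_simp⟩
      rw [h0, zero_mul, zero_sub, neg_eq_zero] at hW
      rw [h0, mul_zero]
      exact (mul_eq_zero.1 hW).resolve_right h1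
    · refine ⟨ψ₂ ξ 1 / ψ₁ ξ 1, by field_simp, ?_⟩
      field_simp
      linarith
  refine ⟨ρ, ?_, ?_⟩
  · rintro rfl
    exact h₂.nonzero hc₂ ξ (by simpa using hρ1) (by simpa using hρ2)
  · intro x hx
    have hx1 : (1:ℝ) ≤ x := hx
    have key := aux_unique (y := fun x => ψ₂ ξ x - ρ * ψ₁ ξ x) (y' := fun x => ψ₂' ξ x - ρ * ψ₁' ξ x)
      (q := fun _ => -(ξ ^ 2 / c0 ^ 2)) (a := 1) (b := x) (M := |-(ξ ^ 2 / c0 ^ 2)|) ?_ ?_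
      (fun _ _ => le_rfl) (by simp [hρ1]) (by simp [hρ2]) x ⟨hx1, le_rfl⟩
    · linarith [key.1]
    · intro y hy
      have hy0 : (0:ℝ) ≤ y := zero_le_one.trans hy.1
      exact (h₂.d1 ξ y hy0).sub ((h₁.d1 ξ y hy0).const_mul ρ)
    · intro y hy
      have hy0 : (0:ℝ) ≤ y := zero_le_one.trans hy.1
      have hn : y ∉ Ioo (0:ℝ) 1 := fun h => by linarith [h.2, hy.1]
      have e := (h₂.d2 ξ y hy0).sub ((h₁.d2 ξ y hy0).const_mul ρ)
      rw [hc₁.2.2 y hy0 hn, hc₂.2.2 y hy0 hn] at e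
      refine (e.congr_deriv (by ring)).congr_of_eventuallyEq (Eventually.of_forall fun _ => rfl)


/-- equal boundary measurements imply the frequency-domain solutions of the
two media are proportional, for `x ≥ 1`, with a nowhere-vanishing factor `ρ(ξ)`. -/
theorem statement4
    (c0 : ℝ) (hc0 : 0 < c0)
    (c₁ c₂ f₁ f₂ : ℝ → ℝ) (u₁ u₂ : ℝ → ℝ → ℝ)
    (hc₁ : IsWaveSpeed c0 c₁) (hc₂ : IsWaveSpeed c0 c₂)
    (hf₁C : ContDiffOn ℝ 2 f₁ (Ici 0)) (hf₂C : ContDiffOn ℝ 2 f₂ (Ici 0))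
    (hf₁0 : ∃ x ∈ Ici (0:ℝ), f₁ x ≠ 0) (hf₂0 : ∃ x ∈ Ici (0:ℝ), f₂ x ≠ 0)
    (hs₁ : ∀ x ∈ Ici (0:ℝ), x ∉ Ioo (0:ℝ) 1 → f₁ x = 0)
    (hs₂ : ∀ x ∈ Ici (0:ℝ), x ∉ Ioo (0:ℝ) 1 → f₂ x = 0)
    (hu₁ : IsWaveSolution c₁ f₁ u₁) (hu₂ : IsWaveSolution c₂ f₂ u₂)
    (hd₁ : DecaysExp u₁) (hd₂ : DecaysExp u₂)
    (hmeas : ∀ t ∈ Ici (0:ℝ), u₁ t 1 = u₂ t 1)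
    (v₁ v₂ : ℂ → ℝ → ℂ)
    (hv₁ : IsFreqSolution c₁ v₁) (hv₂ : IsFreqSolution c₂ v₂) :
    ∃ ρ : ℝ → ℝ, (∀ ξ : ℝ, ρ ξ ≠ 0) ∧
      ∀ ξ : ℝ, ∀ x ∈ Ici (1:ℝ), v₂ (ξ:ℂ) x = (ρ ξ : ℂ) * v₁ (ξ:ℂ) x := by
  obtain ⟨ψ₁, ψ₁', hψ₁, e₁⟩ := aux_freqData hc₁ hv₁
  obtain ⟨ψ₂, ψ₂', hψ₂, e₂⟩ := aux_freqData hc₂ hv₂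
  obtain ⟨ut₁, ux₁, utt₁, utx₁, uxx₁, hw₁⟩ := aux_waveData hu₁
  obtain ⟨ut₂, ux₂, utt₂, utx₂, uxx₂, hw₂⟩ := aux_waveData hu₂
  obtain ⟨C₁, κ₁, hκ₁, hb₁⟩ := aux_decay hw₁.toC2Data hd₁
  obtain ⟨C₂, κ₂, hκ₂, hb₂⟩ := aux_decay hw₂.toC2Data hd₂
  -- the Cauchy data at `x = 1` agree
  have hux : ∀ t ∈ Ici (0:ℝ), ux₁ t 1 = ux₂ t 1 := by
    intro t ht
    have o₁ := hw₁.outgoing hc0 hc₁ hs₁ t ht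
    have o₂ := hw₂.outgoing hc0 hc₂ hs₂ t ht
    have d₁ := aux_slice_t zero_le_one (hw₁.d (t, 1) ⟨ht, (zero_le_one : (0:ℝ) ≤ 1)⟩)
    have d₂ := aux_slice_t zero_le_one (hw₂.d (t, 1) ⟨ht, (zero_le_one : (0:ℝ) ≤ 1)⟩)
    have d₃ : HasDerivWithinAt (fun s => u₁ s 1) (ut₂ t 1) (Ici 0) t :=
      d₂.congr_of_mem (fun s hs => hmeas s hs) ht
    have hut : ut₁ t 1 = ut₂ t 1 := (uniqueDiffOn_Ici (0:ℝ) t ht).eq_deriv _ d₁ d₃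
    have : c0 * ux₁ t 1 = c0 * ux₂ t 1 := by linarith
    exact mul_left_cancel₀ hc0.ne' this
  have h1mem : (1:ℝ) ∈ Icc (0:ℝ) 1 := ⟨zero_le_one, le_rfl⟩
  have hiu : ∀ ξ, IntegrableOn (fun t => Real.cos (ξ * t) * u₁ t 1) (Ioi 0) := fun ξ =>
    aux_cos_integrable (C := C₁) hκ₁ ξ (aux_contOn_t hw₁.cu zero_le_one)
      (fun t ht => by linarith [hb₁ t ht 1 h1mem, abs_nonneg (ux₁ t 1)])
  have hix : ∀ ξ, IntegrableOn (fun t => Real.cos (ξ * t) * ux₁ t 1) (Ioi 0) := fun ξ =>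
    aux_cos_integrable (C := C₁) hκ₁ ξ (aux_contOn_t hw₁.cx zero_le_one)
      (fun t ht => by linarith [hb₁ t ht 1 h1mem, abs_nonneg (u₁ t 1)])
  have hlin : ∀ ξ a b : ℝ, ∫ t in Ioi (0:ℝ), Real.cos (ξ * t) * (a * ux₁ t 1 - b * u₁ t 1) =
      a * (∫ t in Ioi (0:ℝ), Real.cos (ξ * t) * ux₁ t 1) -
        b * ∫ t in Ioi (0:ℝ), Real.cos (ξ * t) * u₁ t 1 := by
    intro ξ a b
    rw [← integral_const_mul, ← integral_const_mul,
      ← integral_sub ((hix ξ).const_mul _) ((hiu ξ).const_mul _)]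
    congr 1
    ext t
    ring
  have hW : ∀ ξ : ℝ, ψ₁ ξ 1 * ψ₂' ξ 1 - ψ₂ ξ 1 * ψ₁' ξ 1 = 0 := by
    intro ξ₀
    by_contra hne
    have hcont : ∀ {c : ℝ → ℝ} {ψ ψ' : ℝ → ℝ → ℝ}, IsWaveSpeed c0 c → FreqData c ψ ψ' →
        Tendsto (fun ξ => ψ ξ 1) (𝓝 ξ₀) (𝓝 (ψ ξ₀ 1)) ∧
        Tendsto (fun ξ => ψ' ξ 1) (𝓝 ξ₀) (𝓝 (ψ' ξ₀ 1)) := by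
      intro c ψ ψ' hc hψ
      constructor
      · refine Metric.tendsto_nhds.2 fun η hη => ?_
        filter_upwards [hψ.cont hc ξ₀ hη] with ξ hξ
        exact (hξ 1 h1mem).1
      · refine Metric.tendsto_nhds.2 fun η hη => ?_
        filter_upwards [hψ.cont hc ξ₀ hη] with ξ hξ
        exact (hξ 1 h1mem).2
    have t₁ := hcont hc₁ hψ₁
    have t₂ := hcont hc₂ hψ₂
    have hev := ((t₁.1.mul t₂.2).sub (t₂.1.mul t₁.2)).eventually_ne hne
    have hu0 : ∀ t ∈ Ici (0:ℝ), u₁ t 1 = 0 := by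
      refine aux_cos_unique (g := fun t => u₁ t 1) (C := C₁) (ξ₀ := ξ₀) hκ₁
        (aux_contOn_t hw₁.cu zero_le_one)
        (fun t ht => by linarith [hb₁ t ht 1 h1mem, abs_nonneg (ux₁ t 1)]) ?_
      filter_upwards [hev] with ξ hξ
      have g₁ := aux_green hc₁ hw₁ hψ₁ hκ₁ hb₁ ξ h1mem
      have g₂ := aux_green hc₂ hw₂ hψ₂ hκ₂ hb₂ ξ h1mem
      rw [setIntegral_congr_fun (g := fun t => Real.cos (ξ * t) *
        (ψ₂ ξ 1 * ux₁ t 1 - ψ₂' ξ 1 * u₁ t 1)) measurableSet_Ioi] at g₂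
      · rw [hlin] at g₁ g₂
        refine (mul_eq_zero.1 (?_ : (ψ₁ ξ 1 * ψ₂' ξ 1 - ψ₂ ξ 1 * ψ₁' ξ 1) * _ = 0)).resolve_left hξ
        linear_combination ψ₂ ξ 1 * g₁ - ψ₁ ξ 1 * g₂
      · intro t ht
        have ht0 : t ∈ Ici (0:ℝ) := show (0:ℝ) ≤ t from le_of_lt ht
        simp only [hux t ht0, hmeas t ht0]
    have hf := aux_nonvanish hc₁ hw₁ hψ₁ hκ₁ hb₁ hu0
    obtain ⟨x, hx, hfx⟩ := hf₁0
    by_cases hx1 : x ∈ Ioo (0:ℝ) 1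
    · exact hfx (hf x hx1)
    · exact hfx (hs₁ x hx hx1)
  choose ρ hρ0 hρ using fun ξ => aux_final hc₁ hc₂ hψ₁ hψ₂ ξ (hW ξ)
  refine ⟨ρ, hρ0, fun ξ x hx => ?_⟩
  have hx0 : x ∈ Ici (0:ℝ) := zero_le_one.trans (show (1:ℝ) ≤ x from hx)
  rw [e₁ ξ x hx0, e₂ ξ x hx0, hρ ξ x hx]
  push_cast
  rfl
end

section
/- Let ε ∈ (0,1), let V ∈ C([0,1]) with Dirichlet eigenpairs (λ_k, φ_k), k ≥ 1, and assume λ_k = (kπ)² + O(1) as k → ∞. Let h ∈ C([0,1]) be not identically zero with supp h ⊂ [0,ε]. For λ ∈ ℝ define d(λ) = #{k ∈ ℕ : 0 < λ_k ≤ λ and ∫₀¹ h(x) φ_k(x) dx = 0}. Then limsup_{λ→∞} d(λ)/√λ ≤ ε/π. -/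
open Set

/-- `(μ, ψ)` is a Dirichlet eigenpair of `-d²/dx² + V` on `(0,1)`. -/
def IsDirichletEigenpair (V : ℝ → ℝ) (μ : ℝ) (ψ : ℝ → ℝ) : Prop :=
  ContDiffOn ℝ 2 ψ (Icc 0 1) ∧ (∃ x ∈ Icc (0:ℝ) 1, ψ x ≠ 0) ∧
  (∀ x ∈ Ioo (0:ℝ) 1,
    -(derivWithin (derivWithin ψ (Icc 0 1)) (Icc 0 1) x) + V x * ψ x = μ * ψ x) ∧
  ψ 0 = 0 ∧ ψ 1 = 0

/-- `(lam, phi)` enumerates the Dirichlet eigenvalues of `-d²/dx² + V` on `(0,1)` in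
strictly increasing order, with `L²`-normalized eigenfunctions. -/
def IsDirichletSystem (V : ℝ → ℝ) (lam : ℕ → ℝ) (phi : ℕ → ℝ → ℝ) : Prop :=
  StrictMono lam ∧ Filter.Tendsto lam Filter.atTop Filter.atTop ∧
  (∀ k, IsDirichletEigenpair V (lam k) (phi k)) ∧
  (∀ k, ∫ x in (0:ℝ)..1, (phi k x)^2 = 1) ∧
  (∀ μ ψ, IsDirichletEigenpair V μ ψ → ∃ k, μ = lam k)




lemma S15.jensen_le {f : ℂ → ℂ} (hf : Differentiable ℂ f) {c : ℂ} {r : ℝ} (hr : 0 < r)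
    (hc : f c ≠ 0) (T : Finset ℂ) (hT : ∀ u ∈ T, f u = 0 ∧ ‖u - c‖ ≤ r) :
    ∑ u ∈ T, Real.log (r / ‖u - c‖) + Real.log ‖f c‖
      ≤ Real.circleAverage (fun z => Real.log ‖f z‖) c r := by
  have han : AnalyticOnNhd ℂ f (Metric.closedBall c |r|) := fun z _ =>
    hf.analyticAt z
  have han' : AnalyticOnNhd ℂ f univ := fun z _ => hf.analyticAt z
  have hord : ∀ u, analyticOrderAt f u ≠ ⊤ := by
    intro u hu
    rw [analyticOrderAt_eq_top] at hu
    have := han'.eqOn_zero_of_preconnected_of_eventuallyEq_zero isPreconnected_univ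
      (mem_univ u) hu
    exact hc (this (mem_univ c))
  rw [han.circleAverage_log_norm hr.ne' hc]
  gcongr
  have hfin := (MeromorphicOn.divisor f (Metric.closedBall c |r|)).finiteSupport
    (isCompact_closedBall c |r|)
  have hnn : ∀ u, 0 ≤ (MeromorphicOn.divisor f (Metric.closedBall c |r|) u : ℝ) * Real.log (r * ‖c - u‖⁻¹) := by
    intro u
    by_cases hu : u ∈ Metric.closedBall c |r|
    · have h1 : 0 ≤ MeromorphicOn.divisor f (Metric.closedBall c |r|) u :=
        MeromorphicOn.AnalyticOnNhd.divisor_nonneg han u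
      by_cases huc : u = c
      · subst huc; simp
      have h2 : 0 < ‖c - u‖ := norm_pos_iff.2 (sub_ne_zero.2 (Ne.symm huc))
      have h3 : ‖c - u‖ ≤ r := by
        rw [Metric.mem_closedBall, dist_comm, dist_eq_norm, abs_of_pos hr] at hu
        exact hu
      apply mul_nonneg (by exact_mod_cast h1)
      apply Real.log_nonneg
      rw [← div_eq_mul_inv, le_div_iff₀ h2]; linarith
    · rw [Function.locallyFinsuppWithin.apply_eq_zero_of_notMem _ hu]; simp
  have hsupp : (Function.support fun u => (MeromorphicOn.divisor f (Metric.closedBall c |r|) u : ℝ) * Real.log (r * ‖c - u‖⁻¹)) ⊆ ↑(hfin.toFinset ∪ T) := by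
    intro u hu
    simp only [Finset.coe_union, Finite.coe_toFinset, mem_union]
    left
    intro h0
    apply hu
    simp [h0]
  rw [finsum_eq_sum_of_support_subset _ hsupp]
  calc _ ≤ ∑ u ∈ T, (MeromorphicOn.divisor f (Metric.closedBall c |r|) u : ℝ) * Real.log (r * ‖c - u‖⁻¹) := by
        apply Finset.sum_le_sum
        intro u hu
        obtain ⟨h0, hle⟩ := hT u hu
        have hmem : u ∈ Metric.closedBall c |r| := by
          rw [Metric.mem_closedBall, dist_eq_norm, abs_of_pos hr]; exact hle
        have huc : u ≠ c := by rintro rfl; exact hc h0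
        have h2 : 0 < ‖c - u‖ := norm_pos_iff.2 (sub_ne_zero.2 (Ne.symm huc))
        have h1 : 1 ≤ MeromorphicOn.divisor f (Metric.closedBall c |r|) u := by
          rw [MeromorphicOn.AnalyticOnNhd.divisor_apply han hmem]
          have h3 : analyticOrderAt f u ≠ 0 := by
            rw [(hf.analyticAt u).analyticOrderAt_ne_zero]; exact h0
          have h4 : analyticOrderNatAt f u ≠ 0 := by
            intro h5
            apply h3
            rw [← Nat.cast_analyticOrderNatAt (hord u), h5]; simp
          have := Nat.one_le_iff_ne_zero.2 h4
          rw [← Nat.cast_analyticOrderNatAt (hord u)]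
          simp only [ENat.map_natCast, WithTop.untop₀_coe]
          exact_mod_cast this
        have h5 : 0 ≤ Real.log (r * ‖c - u‖⁻¹) := by
          apply Real.log_nonneg
          rw [← div_eq_mul_inv, le_div_iff₀ h2, norm_sub_rev]; linarith
        rw [norm_sub_rev, div_eq_mul_inv]
        have h6 : (1:ℝ) ≤ MeromorphicOn.divisor f (Metric.closedBall c |r|) u := by exact_mod_cast h1
        nlinarith
    _ ≤ _ := Finset.sum_le_sum_of_subset_of_nonneg Finset.subset_union_right (fun u _ _ => hnn u)

/-- average of the negative part of the imaginary part -/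
lemma S15.avg_abs_im {a b X : ℝ} (hb : 0 < b) (hX : 0 < X) :
    Real.circleAverage (fun z : ℂ => |z.im|) (⟨a, b⟩ : ℂ) (Real.sqrt (X^2 + b^2))
      ≤ b + 2 * X^3 / (3 * Real.pi * b^2) := by
  set r := Real.sqrt (X^2 + b^2) with hr
  have hrpos : 0 < r := Real.sqrt_pos.2 (by positivity)
  have hr2 : r^2 = X^2 + b^2 := Real.sq_sqrt (by positivity)
  set α := Real.arctan (X / b) with hα
  have hα0 : 0 < α := Real.arctan_pos.2 (by positivity)
  have hα1 : α < Real.pi / 2 := Real.arctan_lt_pi_div_two _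
  have hsq : Real.sqrt (1 + (X/b)^2) = r / b := by
    rw [hr, show 1 + (X/b)^2 = (X^2+b^2)/b^2 by field_simp; ring, Real.sqrt_div (by positivity),
      Real.sqrt_sq hb.le]
  have hcos : r * Real.cos α = b := by
    rw [hα, Real.cos_arctan, hsq]; field_simp
  have hsin : r * Real.sin α = X := by
    rw [hα, Real.sin_arctan, hsq]; field_simp
  have hcont : Continuous fun θ : ℝ => max 0 (-(b + r * Real.sin θ)) := by fun_prop
  have key : ∫ θ in (0:ℝ)..(2*Real.pi), max 0 (-(b + r * Real.sin θ)) = 2 * (X - b * α) := by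
    have hpi := Real.pi_pos
    have e1 : ∫ θ in (0:ℝ)..(3*Real.pi/2 - α), max 0 (-(b + r * Real.sin θ)) = 0 := by
      rw [intervalIntegral.integral_congr (g := fun _ => (0:ℝ))]; simp
      intro θ hθ
      rw [uIcc_of_le (by linarith)] at hθ
      have : -b ≤ r * Real.sin θ := by
        have h1 : - Real.cos α ≤ Real.sin θ := by
          rcases le_total θ (Real.pi/2) with h | h
          · have : 0 ≤ Real.sin θ := Real.sin_nonneg_of_nonneg_of_le_pi hθ.1 (by linarith)
            have : 0 < Real.cos α := Real.cos_pos_of_mem_Ioo ⟨by linarith, hα1⟩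
            linarith
          · have h2 : Real.cos (Real.pi - α) ≤ Real.cos (θ - Real.pi/2) :=
              Real.cos_le_cos_of_nonneg_of_le_pi (by linarith) (by linarith) (by linarith [hθ.2])
            rw [Real.cos_pi_sub, Real.cos_sub_pi_div_two] at h2
            exact h2
        nlinarith
      simp only; rw [max_eq_left]; linarith
    have e3 : ∫ θ in (3*Real.pi/2 + α)..(2*Real.pi), max 0 (-(b + r * Real.sin θ)) = 0 := by
      rw [intervalIntegral.integral_congr (g := fun _ => (0:ℝ))]; simp
      intro θ hθ
      rw [uIcc_of_le (by linarith)] at hθ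
      have : -b ≤ r * Real.sin θ := by
        have h1 : - Real.cos α ≤ Real.sin θ := by
          have h2 : Real.cos (Real.pi - α) ≤ Real.cos (5*Real.pi/2 - θ) :=
              Real.cos_le_cos_of_nonneg_of_le_pi (by linarith [hθ.2]) (by linarith) (by linarith [hθ.1])
          rw [Real.cos_pi_sub, show 5*Real.pi/2 - θ = (Real.pi/2 - θ) + 2 * Real.pi by ring,
            Real.cos_add_two_pi, Real.cos_pi_div_two_sub] at h2
          exact h2
        nlinarith
      simp only; rw [max_eq_left]; linarith
    have e2 : ∫ θ in (3*Real.pi/2 - α)..(3*Real.pi/2 + α), max 0 (-(b + r * Real.sin θ)) = 2 * (X - b * α) := by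
      rw [intervalIntegral.integral_congr (g := fun θ => (-b - r * Real.sin θ))]
      · rw [intervalIntegral.integral_sub (by simp) (by apply Continuous.intervalIntegrable; fun_prop)]
        rw [intervalIntegral.integral_const_mul, integral_sin, intervalIntegral.integral_const,
          show 3*Real.pi/2 - α = (Real.pi/2 - α) + Real.pi by ring,
          show 3*Real.pi/2 + α = (Real.pi/2 + α) + Real.pi by ring,
          Real.cos_add_pi, Real.cos_add_pi, Real.cos_pi_div_two_sub,
          show Real.pi/2 + α = Real.pi/2 - (-α) by ring, Real.cos_pi_div_two_sub, Real.sin_neg]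
        simp only [smul_eq_mul]
        linear_combination 2 * hsin
      · intro θ hθ
        rw [uIcc_of_le (by linarith)] at hθ
        have : r * Real.sin θ ≤ -b := by
          have h1 : Real.sin θ ≤ - Real.cos α := by
            have h2 : Real.cos α ≤ Real.cos |θ - 3*Real.pi/2| :=
              Real.cos_le_cos_of_nonneg_of_le_pi (abs_nonneg _) (by linarith)
                (by rw [abs_le]; constructor <;> linarith [hθ.1, hθ.2])
            rw [Real.cos_abs, show θ - 3*Real.pi/2 = (θ - Real.pi/2) - Real.pi by ring,
              Real.cos_sub_pi, Real.cos_sub_pi_div_two] at h2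
            linarith
          nlinarith
        simp only; rw [max_eq_right (by linarith)]; ring
    rw [← intervalIntegral.integral_add_adjacent_intervals (b := 3*Real.pi/2 - α)
        (hcont.intervalIntegrable _ _) (hcont.intervalIntegrable _ _),
      ← intervalIntegral.integral_add_adjacent_intervals (b := 3*Real.pi/2 + α) (a := 3*Real.pi/2 - α)
        (hcont.intervalIntegrable _ _) (hcont.intervalIntegrable _ _), e1, e2, e3]
    ring
  have harct : X - b * α ≤ X^3 / (3 * b^2) := by
    have : ∀ u : ℝ, 0 ≤ u → u - u^3/3 ≤ Real.arctan u := by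
      intro u hu
      have hd : ∀ x : ℝ, HasDerivAt (fun x => Real.arctan x - (x - x^3/3)) (1/(1+x^2) - (1 - x^2)) x := by
        intro x
        have := (Real.hasDerivAt_arctan x).sub ((hasDerivAt_id x).sub ((hasDerivAt_pow 3 x).div_const 3))
        have e : 1/(1+x^2) - (1 - x^2) = 1 / (1 + x ^ 2) - (1 - ((3:ℕ):ℝ) * x ^ (3 - 1) / 3) := by
          norm_num
        rw [e]
        exact this
      have hmono : Monotone (fun x => Real.arctan x - (x - x^3/3)) := by
        apply monotone_of_deriv_nonneg (fun x => (hd x).differentiableAt)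
        intro x
        rw [(hd x).deriv]
        have : 1/(1+x^2) - (1 - x^2) = x^4/(1+x^2) := by field_simp; ring
        rw [this]; positivity
      have := hmono hu
      simp at this
      linarith
    have h := this (X/b) (by positivity)
    have : b * (X/b - (X/b)^3/3) ≤ b * α := by gcongr
    have e : b * (X/b - (X/b)^3/3) = X - X^3/(3*b^2) := by field_simp
    linarith
  rw [Real.circleAverage_def]
  have e0 : ∀ θ : ℝ, |(circleMap (⟨a,b⟩:ℂ) r θ).im| = (b + r * Real.sin θ) + 2 * max 0 (-(b + r * Real.sin θ)) := by
    intro θ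
    have : (circleMap (⟨a,b⟩:ℂ) r θ).im = b + r * Real.sin θ := by
      simp [circleMap, Complex.exp_ofReal_mul_I_im]
    rw [this]
    rcases le_total 0 (b + r * Real.sin θ) with h | h
    · rw [abs_of_nonneg h, max_eq_left (by linarith)]; ring
    · rw [abs_of_nonpos h, max_eq_right (by linarith)]; ring
  simp only [e0]
  rw [intervalIntegral.integral_add (by apply Continuous.intervalIntegrable; fun_prop)
    (by apply Continuous.intervalIntegrable; fun_prop), intervalIntegral.integral_const_mul, key,
    intervalIntegral.integral_add (by simp) (by apply Continuous.intervalIntegrable; fun_prop),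
    intervalIntegral.integral_const_mul, integral_sin]
  have hpi := Real.pi_pos
  simp only [intervalIntegral.integral_const, smul_eq_mul, Real.cos_zero, Real.cos_two_pi]
  have : (2*Real.pi)⁻¹ * ((2*Real.pi - 0) * b + r * (1-1) + 2 * (2 * (X - b*α))) = b + 2/Real.pi * (X - b * α) := by
    field_simp; ring
  rw [this]
  have e5 : 2 * X^3 / (3 * Real.pi * b^2) = 2/Real.pi * (X^3/(3*b^2)) := by field_simp
  rw [e5]
  gcongr



/-- growth-deficit in the upper half plane -/
noncomputable def S15.E (f : ℂ → ℂ) (M τ : ℝ) (z : ℂ) : ℝ :=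
  Real.log M + τ * z.im - Real.log ‖f z‖

lemma S15.log_norm_le {f : ℂ → ℂ} {M τ : ℝ} (hM : 1 ≤ M) (hτ : 0 ≤ τ)
    (hfM : ∀ z, ‖f z‖ ≤ M * Real.exp (τ * |z.im|)) (z : ℂ) :
    Real.log ‖f z‖ ≤ Real.log M + τ * |z.im| := by
  by_cases h : f z = 0
  · rw [h]; simp
    have := Real.log_nonneg hM
    positivity
  · have h1 : 0 < ‖f z‖ := norm_pos_iff.2 h
    have h2 := Real.log_le_log h1 (hfM z)
    rwa [Real.log_mul (by positivity) (by positivity), Real.log_exp] at h2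

lemma S15.E_nonneg {f : ℂ → ℂ} {M τ : ℝ} (hM : 1 ≤ M) (hτ : 0 ≤ τ)
    (hfM : ∀ z, ‖f z‖ ≤ M * Real.exp (τ * |z.im|)) (z : ℂ) (hz : 0 ≤ z.im) : 0 ≤ S15.E f M τ z := by
  have := S15.log_norm_le hM hτ hfM z
  rw [abs_of_nonneg hz] at this
  unfold S15.E; linarith

lemma S15.circInt {f : ℂ → ℂ} (hf : Differentiable ℂ f) (c : ℂ) (r : ℝ) :
    CircleIntegrable (fun z => Real.log ‖f z‖) c r := by
  apply MeromorphicOn.circleIntegrable_log_norm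
  intro z _
  exact (hf.analyticAt z).meromorphicAt

lemma S15.window {f : ℂ → ℂ} (hf : Differentiable ℂ f) {M τ : ℝ} (hM : 1 ≤ M) (hτ : 0 ≤ τ)
    (hfM : ∀ z, ‖f z‖ ≤ M * Real.exp (τ * |z.im|)) {a b X : ℝ} (hb : 0 < b) (hX : 0 < X)
    (hc : f ⟨a, b⟩ ≠ 0) (T : Finset ℝ) (hT : ∀ x ∈ T, f x = 0) :
    ∑ x ∈ T, max 0 (X^2 - (x - a)^2) ≤ (1 + X^2/b^2) * (4 * τ / (3 * Real.pi)) * X^3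
      + 2 * (X^2 + b^2) * S15.E f M τ ⟨a, b⟩ := by
  set r := Real.sqrt (X^2 + b^2) with hr
  have hrpos : 0 < r := Real.sqrt_pos.2 (by positivity)
  have hr2 : r^2 = X^2 + b^2 := Real.sq_sqrt (by positivity)
  set T' := T.filter (fun x => |x - a| < X)
  have hd : ∀ x : ℝ, ‖(x:ℂ) - ⟨a, b⟩‖^2 = (x - a)^2 + b^2 := by
    intro x
    rw [← Complex.normSq_eq_norm_sq, Complex.normSq_apply]; simp; ring
  have hJ := S15.jensen_le hf hrpos hc (T'.map ⟨fun x : ℝ => (x:ℂ), Complex.ofReal_injective⟩) (by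
    intro u hu
    simp only [Finset.mem_map, Function.Embedding.coeFn_mk] at hu
    obtain ⟨x, hx, rfl⟩ := hu
    rw [Finset.mem_filter] at hx
    refine ⟨hT x hx.1, ?_⟩
    apply Real.le_sqrt_of_sq_le
    rw [hd]
    have := sq_lt_sq' (abs_lt.1 hx.2).1 (abs_lt.1 hx.2).2
    linarith)
  rw [Finset.sum_map] at hJ
  simp only [Function.Embedding.coeFn_mk] at hJ
  have hlow : ∑ x ∈ T, max 0 (X^2 - (x - a)^2) / (2 * r^2) ≤ ∑ x ∈ T', Real.log (r / ‖(x:ℂ) - ⟨a,b⟩‖) := by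
    rw [← Finset.sum_filter_add_sum_filter_not T (fun x => |x - a| < X)]
    have h0 : ∑ x ∈ T.filter (fun x => ¬ |x - a| < X), max 0 (X^2 - (x - a)^2) / (2 * r^2) = 0 := by
      apply Finset.sum_eq_zero
      intro x hx
      have h1 := (Finset.mem_filter.1 hx).2
      push Not at h1
      have : X^2 ≤ (x-a)^2 := by rw [← sq_abs (x-a)]; gcongr
      rw [max_eq_left (by linarith)]; simp
    rw [h0, add_zero]
    apply Finset.sum_le_sum
    intro x hx
    have h1 := (Finset.mem_filter.1 hx).2
    have h2 := sq_lt_sq' (abs_lt.1 h1).1 (abs_lt.1 h1).2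
    rw [max_eq_right (by linarith)]
    have hdp : 0 < ‖(x:ℂ) - ⟨a,b⟩‖ := by
      by_contra hcon
      have : ‖(x:ℂ) - ⟨a,b⟩‖ = 0 := le_antisymm (not_lt.1 hcon) (norm_nonneg _)
      have h3 := hd x
      rw [this] at h3
      nlinarith [sq_nonneg (x-a)]
    have h3 := Real.one_sub_inv_le_log_of_pos (x := (r / ‖(x:ℂ) - ⟨a,b⟩‖)^2) (by positivity)
    rw [Real.log_pow] at h3
    push_cast at h3
    have e : 1 - ((r / ‖(x:ℂ) - ⟨a,b⟩‖)^2)⁻¹ = (X^2 - (x-a)^2)/r^2 := by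
      rw [div_pow, inv_div, hd, hr2]
      have : X^2 + b^2 ≠ 0 := by positivity
      field_simp; ring
    rw [e] at h3
    have e2 : (X^2 - (x-a)^2)/(2*r^2) = (X^2 - (x-a)^2)/r^2/2 := by field_simp
    rw [e2]; linarith
  have hup : Real.circleAverage (fun z => Real.log ‖f z‖) ⟨a,b⟩ r ≤ Real.log M + τ * (b + 2 * X^3 / (3 * Real.pi * b^2)) := by
    have hci : CircleIntegrable (fun z : ℂ => |z.im|) ⟨a,b⟩ r := by
      apply ContinuousOn.circleIntegrable hrpos.le
      fun_prop
    calc _ ≤ Real.circleAverage (fun z : ℂ => Real.log M + τ * |z.im|) ⟨a,b⟩ r := by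
          apply Real.circleAverage_mono (S15.circInt hf _ _)
          · apply ContinuousOn.circleIntegrable hrpos.le
            fun_prop
          · intro z _
            exact S15.log_norm_le hM hτ hfM z
      _ = Real.log M + τ * Real.circleAverage (fun z : ℂ => |z.im|) ⟨a,b⟩ r := by
          have := Real.circleAverage_fun_add (c := (⟨a,b⟩:ℂ)) (R := r) (f₁ := fun _ => Real.log M) (f₂ := fun z : ℂ => τ * |z.im|)
            (circleIntegrable_const _ _ _) (by
              apply ContinuousOn.circleIntegrable hrpos.le
              fun_prop)
          rw [this, Real.circleAverage_const]
          have := Real.circleAverage_fun_smul (c := (⟨a,b⟩:ℂ)) (R := r) (a := τ) (f := fun z : ℂ => |z.im|)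
          simp only [smul_eq_mul] at this
          rw [this]
      _ ≤ _ := by
          gcongr
          exact S15.avg_abs_im hb hX
  rw [← Finset.sum_div] at hlow
  have h5 : (∑ x ∈ T, max 0 (X^2 - (x - a)^2)) / (2 * r^2) ≤ S15.E f M τ ⟨a,b⟩ + τ * (2 * X^3 / (3 * Real.pi * b^2)) := by
    unfold S15.E
    simp only
    linarith
  rw [div_le_iff₀ (by positivity)] at h5
  have hpi := Real.pi_pos
  have e : (S15.E f M τ ⟨a,b⟩ + τ * (2 * X^3 / (3 * Real.pi * b^2))) * (2 * r^2) = (1 + X^2/b^2) * (4 * τ / (3 * Real.pi)) * X^3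
      + 2 * (X^2 + b^2) * S15.E f M τ ⟨a, b⟩ := by
    rw [hr2]; field_simp; ring
  linarith

lemma S15.mean {f : ℂ → ℂ} (hf : Differentiable ℂ f) {M τ : ℝ} {c : ℂ} {ρ : ℝ} (hρ : 0 < ρ) (hc : f c ≠ 0) :
    IntervalIntegrable (fun θ => S15.E f M τ (circleMap c ρ θ)) MeasureTheory.volume 0 (2 * Real.pi) ∧
    ∫ θ in (0:ℝ)..(2 * Real.pi), S15.E f M τ (circleMap c ρ θ) ≤ 2 * Real.pi * S15.E f M τ c := by
  have hJ := S15.jensen_le hf hρ hc ∅ (by simp)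
  simp only [Finset.sum_empty, zero_add] at hJ
  rw [Real.circleAverage_def, smul_eq_mul] at hJ
  have hpi := Real.pi_pos
  have hci : IntervalIntegrable (fun θ => Real.log ‖f (circleMap c ρ θ)‖) MeasureTheory.volume 0 (2 * Real.pi) := S15.circInt hf c ρ
  have him : ∀ θ, (circleMap c ρ θ).im = c.im + ρ * Real.sin θ := by
    intro θ
    simp [circleMap, Complex.exp_ofReal_mul_I_im]
  unfold S15.E
  simp only [him]
  have hInt : IntervalIntegrable (fun θ => Real.log M + τ * (c.im + ρ * Real.sin θ)) MeasureTheory.volume 0 (2 * Real.pi) := by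
    apply Continuous.intervalIntegrable; fun_prop
  refine ⟨hInt.sub hci, ?_⟩
  rw [intervalIntegral.integral_sub hInt hci]
  have : ∫ θ in (0:ℝ)..(2 * Real.pi), (Real.log M + τ * (c.im + ρ * Real.sin θ)) = 2 * Real.pi * (Real.log M + τ * c.im) := by
    rw [intervalIntegral.integral_add (by simp) (by apply Continuous.intervalIntegrable; fun_prop),
      intervalIntegral.integral_const_mul,
      intervalIntegral.integral_add (by simp) (by apply Continuous.intervalIntegrable; fun_prop),
      intervalIntegral.integral_const_mul, integral_sin]
    simp; ring
  rw [this]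
  have h2 : 2 * Real.pi * Real.log ‖f c‖ ≤ ∫ θ in (0:ℝ)..(2*Real.pi), Real.log ‖f (circleMap c ρ θ)‖ := by
    rw [inv_mul_eq_div, le_div_iff₀ (by positivity)] at hJ
    linarith
  linarith



lemma S15.ae_ne {f : ℂ → ℂ} (hf : Differentiable ℂ f) {c : ℂ} {ρ : ℝ} (hρ : 0 < ρ) (hc : f c ≠ 0) :
    ∀ᵐ θ : ℝ, f (circleMap c ρ θ) ≠ 0 := by
  have han : AnalyticOnNhd ℂ f univ := fun z _ => hf.analyticAt z
  rcases han.eqOn_zero_or_eventually_ne_zero_of_preconnected isPreconnected_univ with h | h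
  · exact absurd (h (mem_univ c)) hc
  · have h1 := circleMap_preimage_codiscrete (c := c) hρ.ne' (Filter.codiscreteWithin_mono (subset_univ _) h)
    have h2 := ae_restrict_le_codiscreteWithin (μ := (MeasureTheory.volume : MeasureTheory.Measure ℝ)) MeasurableSet.univ h1
    rw [MeasureTheory.Measure.restrict_univ] at h2
    exact h2

lemma S15.bump_int {x R X : ℝ} (hX : 0 < X) (hx0 : 0 ≤ x) (hxR : x ≤ R) :
    4/3 * X^3 ≤ ∫ a in (-X)..(R+X), max 0 (X^2 - (x - a)^2) := by
  calc 4/3 * X^3 = ∫ a in (x-X)..(x+X), (X^2 - (x-a)^2) := by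
        rw [intervalIntegral.integral_sub (by simp) (by apply Continuous.intervalIntegrable; fun_prop),
          intervalIntegral.integral_comp_sub_left (fun a => a^2), integral_pow]
        simp; ring
    _ ≤ ∫ a in (x-X)..(x+X), max 0 (X^2 - (x - a)^2) := by
        apply intervalIntegral.integral_mono_on (by linarith)
          (by apply Continuous.intervalIntegrable; fun_prop) (by apply Continuous.intervalIntegrable; fun_prop)
        intro a _
        exact le_max_right _ _
    _ ≤ _ := by
        apply intervalIntegral.integral_mono_interval (by linarith) (by linarith) (by linarith)
        · exact Filter.Eventually.of_forall fun a => le_max_left _ _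
        · apply Continuous.intervalIntegrable; fun_prop

lemma S15.integrated {f : ℂ → ℂ} (hf : Differentiable ℂ f) {M τ : ℝ} (hM : 1 ≤ M) (hτ : 0 ≤ τ)
    (hfM : ∀ z, ‖f z‖ ≤ M * Real.exp (τ * |z.im|)) {a1 b1 X R ρ : ℝ} (hX : 0 < X) (hR : 0 < R)
    (hρ : 0 < ρ) (hρb : ρ < b1) (h1 : a1 - ρ ≤ -X) (h2 : R + X ≤ a1 + ρ)
    (hc : f ⟨a1, b1⟩ ≠ 0) (T : Finset ℝ) (hT : ∀ x ∈ T, f x = 0 ∧ 0 ≤ x ∧ x ≤ R) :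
    (T.card : ℝ) * (4/3 * X^3) ≤ (1 + X^2/(b1-ρ)^2) * (4 * τ / (3 * Real.pi)) * X^3 * (R + 2 * X)
      + 2 * (X^2 + b1^2) * ρ * (2 * Real.pi * S15.E f M τ ⟨a1, b1⟩) := by
  have hpi := Real.pi_pos
  set θ1 := 2 * Real.pi - Real.arccos ((-X - a1)/ρ) with hθ1
  set θ2 := 2 * Real.pi - Real.arccos ((R + X - a1)/ρ) with hθ2
  have hc1 : a1 + ρ * Real.cos θ1 = -X := by
    rw [hθ1, Real.cos_two_pi_sub, Real.cos_arccos]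
    · field_simp; ring
    · rw [le_div_iff₀ hρ]; linarith
    · rw [div_le_iff₀ hρ]; linarith
  have hc2 : a1 + ρ * Real.cos θ2 = R + X := by
    rw [hθ2, Real.cos_two_pi_sub, Real.cos_arccos]
    · field_simp; ring
    · rw [le_div_iff₀ hρ]; linarith
    · rw [div_le_iff₀ hρ]; linarith
  have h12 : θ1 ≤ θ2 := by
    rw [hθ1, hθ2]
    have : Real.arccos ((R + X - a1)/ρ) ≤ Real.arccos ((-X - a1)/ρ) := by
      apply Real.antitone_arccos
      gcongr
      linarith
    linarith
  have hp1 : Real.pi ≤ θ1 := by rw [hθ1]; linarith [Real.arccos_le_pi ((-X - a1)/ρ)]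
  have hp2 : θ2 ≤ 2 * Real.pi := by rw [hθ2]; linarith [Real.arccos_nonneg ((R+X - a1)/ρ)]
  set G : ℝ → ℝ := fun a => ∑ x ∈ T, max 0 (X^2 - (x - a)^2) with hG
  have hGc : Continuous G := by
    apply continuous_finsetSum
    intro x _
    fun_prop
  have hGint : (T.card : ℝ) * (4/3 * X^3) ≤ ∫ a in (-X)..(R+X), G a := by
    rw [hG, intervalIntegral.integral_finsetSum (fun x _ => by apply Continuous.intervalIntegrable; fun_prop)]
    rw [← nsmul_eq_mul]
    apply Finset.card_nsmul_le_sum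
    intro x hx
    exact S15.bump_int hX (hT x hx).2.1 (hT x hx).2.2
  have hder : ∀ θ ∈ uIcc θ1 θ2, HasDerivAt (fun θ => a1 + ρ * Real.cos θ) (-(ρ * Real.sin θ)) θ := by
    intro θ _
    have := ((Real.hasDerivAt_cos θ).const_mul ρ).const_add a1
    exact this.congr_deriv (by ring)
  have hsub := intervalIntegral.integral_comp_mul_deriv hder (by fun_prop) hGc
  have hone := intervalIntegral.integral_comp_mul_deriv hder (by fun_prop) (continuous_const (y := (1:ℝ)))
  rw [hc1, hc2] at hsub hone
  simp only [Function.comp_def, one_mul, intervalIntegral.integral_const, smul_eq_mul, mul_one] at hsub hone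
  obtain ⟨hEi, hEm⟩ := S15.mean hf (M := M) (τ := τ) hρ hc
  have hcm : ∀ θ, circleMap (⟨a1,b1⟩:ℂ) ρ θ = ⟨a1 + ρ * Real.cos θ, b1 + ρ * Real.sin θ⟩ := by
    intro θ
    apply Complex.ext <;> simp [circleMap, Complex.exp_ofReal_mul_I_im, Complex.exp_ofReal_mul_I_re]
  have hEnn : ∀ θ, 0 ≤ S15.E f M τ (circleMap ⟨a1,b1⟩ ρ θ) := by
    intro θ
    apply S15.E_nonneg hM hτ hfM
    rw [hcm]
    simp only
    nlinarith [Real.neg_one_le_sin θ]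
  have hEi' : IntervalIntegrable (fun θ => S15.E f M τ (circleMap ⟨a1,b1⟩ ρ θ)) MeasureTheory.volume θ1 θ2 := by
    apply hEi.mono_set
    rw [uIcc_of_le h12, uIcc_of_le (by linarith)]
    exact Icc_subset_Icc (by linarith) hp2
  set A := (1 + X^2/(b1-ρ)^2) * (4 * τ / (3 * Real.pi)) * X^3 with hA
  have hmain : ∫ θ in θ1..θ2, G (a1 + ρ * Real.cos θ) * -(ρ * Real.sin θ) ≤
      ∫ θ in θ1..θ2, (A * -(ρ * Real.sin θ) + 2 * (X^2 + b1^2) * ρ * S15.E f M τ (circleMap ⟨a1,b1⟩ ρ θ)) := by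
    apply intervalIntegral.integral_mono_ae_restrict h12
    · apply Continuous.intervalIntegrable
      fun_prop
    · apply IntervalIntegrable.add
      · apply Continuous.intervalIntegrable; fun_prop
      · exact hEi'.const_mul _
    · filter_upwards [MeasureTheory.ae_restrict_of_ae (S15.ae_ne hf hρ hc), MeasureTheory.ae_restrict_mem measurableSet_Icc] with θ hne hθ
      have hs : Real.sin θ ≤ 0 := by
        have : 0 ≤ Real.sin (θ - Real.pi) := Real.sin_nonneg_of_nonneg_of_le_pi (by linarith [hθ.1]) (by linarith [hθ.2])
        rw [Real.sin_sub_pi] at this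
        linarith
      have hs1 := Real.neg_one_le_sin θ
      have hb : b1 - ρ ≤ b1 + ρ * Real.sin θ := by nlinarith
      have hb' : b1 + ρ * Real.sin θ ≤ b1 := by nlinarith
      have hE0 := hEnn θ
      rw [hcm] at hne hE0 ⊢
      have hw := S15.window hf hM hτ hfM (by linarith) hX hne T (fun x hx => (hT x hx).1)
      have hbp : 0 < b1 - ρ := by linarith
      have hle : G (a1 + ρ * Real.cos θ) ≤ A + 2 * (X^2 + b1^2) * S15.E f M τ ⟨a1 + ρ * Real.cos θ, b1 + ρ * Real.sin θ⟩ := by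
        refine hw.trans ?_
        rw [hA]
        have hbq : 0 < b1 + ρ * Real.sin θ := by linarith
        gcongr
      have hw1 : 0 ≤ -(ρ * Real.sin θ) := by nlinarith
      have hw2 : -(ρ * Real.sin θ) ≤ ρ := by nlinarith
      calc _ ≤ (A + 2 * (X^2 + b1^2) * S15.E f M τ ⟨a1 + ρ * Real.cos θ, b1 + ρ * Real.sin θ⟩) * -(ρ * Real.sin θ) := by gcongr
        _ = A * -(ρ * Real.sin θ) + (2 * (X^2 + b1^2) * S15.E f M τ ⟨a1 + ρ * Real.cos θ, b1 + ρ * Real.sin θ⟩) * -(ρ * Real.sin θ) := by ring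
        _ ≤ A * -(ρ * Real.sin θ) + (2 * (X^2 + b1^2) * S15.E f M τ ⟨a1 + ρ * Real.cos θ, b1 + ρ * Real.sin θ⟩) * ρ := by gcongr
        _ = _ := by ring
  rw [hsub, intervalIntegral.integral_add (by apply Continuous.intervalIntegrable; fun_prop) (hEi'.const_mul _),
    intervalIntegral.integral_const_mul, intervalIntegral.integral_const_mul, hone] at hmain
  have hEle : ∫ θ in θ1..θ2, S15.E f M τ (circleMap ⟨a1,b1⟩ ρ θ) ≤ 2 * Real.pi * S15.E f M τ ⟨a1,b1⟩ := by
    refine le_trans ?_ hEm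
    apply intervalIntegral.integral_mono_interval (by linarith) h12 hp2 _ hEi
    exact Filter.Eventually.of_forall hEnn
  calc _ ≤ _ := hGint
    _ ≤ _ := hmain
    _ ≤ A * (R + X - -X) + 2 * (X^2 + b1^2) * ρ * (2 * Real.pi * S15.E f M τ ⟨a1, b1⟩) := by gcongr
    _ = _ := by ring



/-- gamma weight -/
noncomputable def S15.wt (n : ℕ) (L s : ℝ) : ℝ := L^(n+1) / (n.factorial : ℝ) * (s^n * Real.exp (-(L * s)))

lemma S15.gam (n : ℕ) {L : ℝ} (hL : 0 < L) :
    MeasureTheory.IntegrableOn (fun s : ℝ => s^n * Real.exp (-(L * s))) (Ioi 0) ∧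
    ∫ s in Ioi (0:ℝ), s^n * Real.exp (-(L * s)) = n.factorial / L^(n+1) := by
  constructor
  · have := integrableOn_rpow_mul_exp_neg_mul_rpow (p := 1) (s := n) (b := L) (by
      have : (0:ℝ) ≤ n := Nat.cast_nonneg n
      linarith) one_pos hL
    simpa using this
  · have := Real.integral_rpow_mul_exp_neg_mul_Ioi (a := (n:ℝ)+1) (r := L) (by positivity) hL
    rw [Real.Gamma_nat_eq_factorial] at this
    simp only [add_sub_cancel_right, Real.rpow_natCast] at this
    rw [this]
    have e : (1/L)^((n:ℝ)+1) = (1/L)^(n+1) := by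
      rw [← Real.rpow_natCast]; push_cast; rfl
    rw [e, div_pow, one_pow]; field_simp

lemma S15.wt_moment (n j : ℕ) {L : ℝ} (hL : 0 < L) :
    MeasureTheory.IntegrableOn (fun s : ℝ => s^j * S15.wt n L s) (Ioi 0) ∧
    ∫ s in Ioi (0:ℝ), s^j * S15.wt n L s = ((n+j).factorial : ℝ) / (n.factorial * L^j) := by
  obtain ⟨h1, h2⟩ := S15.gam (n+j) hL
  have e : (fun s : ℝ => s^j * S15.wt n L s) = fun s => L^(n+1) / (n.factorial : ℝ) * (s^(n+j) * Real.exp (-(L * s))) := by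
    funext s
    unfold S15.wt
    ring
  rw [e]
  refine ⟨h1.const_mul _, ?_⟩
  rw [MeasureTheory.integral_const_mul, h2]
  have : (n.factorial : ℝ) ≠ 0 := by exact_mod_cast n.factorial_ne_zero
  field_simp
  ring

lemma S15.pw_bound {k : ℝ → ℝ} (hk : Measurable k) {B : ℝ} (hB : ∀ s, |k s| ≤ B) {κ η C a : ℝ}
    (hb : ∀ s, 0 < s → |k s - κ| ≤ η + C * (s - a)^2) (n : ℕ) {L : ℝ} (hL : 0 < L) :
    |(∫ s in Ioi (0:ℝ), k s * S15.wt n L s) - κ| ≤ η + C * (((n:ℝ)/L + 1/L) * ((n:ℝ)/L + 2/L) - 2 * a * ((n:ℝ)/L + 1/L) + a^2) := by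
  obtain ⟨i0, m0⟩ := S15.wt_moment n 0 hL
  obtain ⟨i1, m1⟩ := S15.wt_moment n 1 hL
  obtain ⟨i2, m2⟩ := S15.wt_moment n 2 hL
  simp only [pow_zero, one_mul, pow_one, add_zero] at i0 m0 i1 m1
  have hf : (n.factorial : ℝ) ≠ 0 := by exact_mod_cast n.factorial_ne_zero
  have f1 : ((n+1).factorial : ℝ) = (n+1) * n.factorial := by rw [Nat.factorial_succ]; push_cast; ring
  have f2 : ((n+2).factorial : ℝ) = (n+2) * ((n+1) * n.factorial) := by
    rw [Nat.factorial_succ, Nat.factorial_succ]; push_cast; ring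
  rw [mul_one, div_self hf] at m0
  rw [f1] at m1
  rw [f2] at m2
  have hwnn : ∀ s, 0 < s → 0 ≤ S15.wt n L s := by
    intro s hs; unfold S15.wt; positivity
  have hki : MeasureTheory.IntegrableOn (fun s => k s * S15.wt n L s) (Ioi 0) := by
    apply MeasureTheory.Integrable.bdd_mul (c := B) i0 hk.aestronglyMeasurable
    exact Filter.Eventually.of_forall fun s => by rw [Real.norm_eq_abs]; exact hB s
  have e1 : (∫ s in Ioi (0:ℝ), k s * S15.wt n L s) - κ = ∫ s in Ioi (0:ℝ), (k s - κ) * S15.wt n L s := by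
    have : (fun s => (k s - κ) * S15.wt n L s) = fun s => k s * S15.wt n L s - κ * S15.wt n L s := by
      funext s; ring
    rw [this, MeasureTheory.integral_sub hki (i0.const_mul κ), MeasureTheory.integral_const_mul, m0, mul_one]
  rw [e1]
  have e2 : ∀ s, (η + C * (s - a)^2) * S15.wt n L s = ((η + C * a^2) * S15.wt n L s + (- (2 * a * C)) * (s * S15.wt n L s)) + C * (s^2 * S15.wt n L s) := by
    intro s; ring
  have hI : MeasureTheory.IntegrableOn (fun s => (η + C * (s - a)^2) * S15.wt n L s) (Ioi 0) := by
    simp only [e2]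
    exact ((i0.const_mul _).add (i1.const_mul _)).add (i2.const_mul _)
  calc _ ≤ ∫ s in Ioi (0:ℝ), |(k s - κ) * S15.wt n L s| := MeasureTheory.abs_integral_le_integral_abs
    _ ≤ ∫ s in Ioi (0:ℝ), (η + C * (s - a)^2) * S15.wt n L s := by
        apply MeasureTheory.integral_mono_of_nonneg
        · exact Filter.Eventually.of_forall fun s => abs_nonneg _
        · exact hI
        · filter_upwards [MeasureTheory.ae_restrict_mem measurableSet_Ioi] with s hs
          rw [abs_mul, abs_of_nonneg (hwnn s hs)]
          exact mul_le_mul_of_nonneg_right (hb s hs) (hwnn s hs)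
    _ = _ := by
        simp only [e2]
        rw [MeasureTheory.integral_add (by exact (i0.const_mul _).add (i1.const_mul _)) (i2.const_mul _),
          MeasureTheory.integral_add (i0.const_mul _) (i1.const_mul _), MeasureTheory.integral_const_mul,
          MeasureTheory.integral_const_mul, MeasureTheory.integral_const_mul, m0, m1, m2]
        field_simp
        ring

lemma S15.post_widder {k : ℝ → ℝ} (hk : Measurable k) {B : ℝ} (hB : ∀ s, |k s| ≤ B) {a : ℝ} (ha : 0 < a)
    (hca : ContinuousAt k a) :
    Filter.Tendsto (fun L : ℝ => ∫ s in Ioi (0:ℝ), k s * S15.wt ⌊a * L⌋₊ L s) Filter.atTop (nhds (k a)) := by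
  rw [Metric.tendsto_nhds]
  intro η hη
  obtain ⟨r, hr, hrk⟩ := Metric.continuousAt_iff.1 hca (η/2) (by positivity)
  have hB0 : 0 ≤ B := (abs_nonneg _).trans (hB 0)
  set C := 2 * B / r^2 with hC
  have hb : ∀ s, 0 < s → |k s - k a| ≤ η/2 + C * (s - a)^2 := by
    intro s _
    by_cases h : dist s a < r
    · have := hrk h
      rw [Real.dist_eq] at this
      have : 0 ≤ C * (s-a)^2 := by positivity
      linarith
    · push Not at h
      rw [Real.dist_eq] at h
      have h1 : r^2 ≤ (s-a)^2 := by rw [← sq_abs (s-a)]; gcongr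
      have h2 : 2 * B ≤ C * (s-a)^2 := by
        rw [hC, div_mul_eq_mul_div, le_div_iff₀ (by positivity)]
        gcongr
      have h3 : |k s - k a| ≤ |k s| + |k a| := abs_sub _ _
      linarith [hB s, hB a]
  have ht : Filter.Tendsto (fun L : ℝ => η/2 + C * (((⌊a * L⌋₊:ℝ)/L + 1/L) * ((⌊a * L⌋₊:ℝ)/L + 2/L) - 2 * a * ((⌊a * L⌋₊:ℝ)/L + 1/L) + a^2)) Filter.atTop (nhds (η/2 + C * ((a + 0) * (a + 0) - 2 * a * (a + 0) + a^2))) := by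
    have t0 := tendsto_nat_floor_mul_div_atTop (R := ℝ) ha.le
    have t1 : ∀ c : ℝ, Filter.Tendsto (fun L : ℝ => c / L) Filter.atTop (nhds 0) := fun c => Filter.Tendsto.const_div_atTop Filter.tendsto_id c
    exact tendsto_const_nhds.add (((((t0.add (t1 1)).mul (t0.add (t1 2))).sub ((t0.add (t1 1)).const_mul _)).add tendsto_const_nhds).const_mul C)
  rw [show η/2 + C * ((a + 0) * (a + 0) - 2 * a * (a + 0) + a^2) = η/2 by ring] at ht
  filter_upwards [ht.eventually (gt_mem_nhds (show η/2 < η by linarith)), Filter.eventually_gt_atTop 0] with L h1 h2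
  rw [Real.dist_eq]
  exact (S15.pw_bound hk hB hb _ h2).trans_lt h1

noncomputable def S15.W (q : ℝ → ℂ) (b : ℝ) (p : ℂ) : ℂ := ∫ s in (0:ℝ)..b, q s * Complex.exp (-(p * s))

lemma S15.W_hasDeriv {q : ℝ → ℂ} (hq : Continuous q) (b : ℝ) (p : ℂ) :
    HasDerivAt (S15.W q b) (S15.W (fun s => (-s : ℂ) * q s) b p) p := by
  unfold S15.W
  have := (intervalIntegral.hasDerivAt_integral_of_dominated_loc_of_deriv_le (μ := MeasureTheory.volume) (𝕜 := ℂ) (a := 0) (b := b)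
    (F := fun p s => q s * Complex.exp (-(p * s))) (F' := fun p s => (-s : ℂ) * q s * Complex.exp (-(p * s))) (x₀ := p)
    (s := Metric.ball p 1) (bound := fun s => |s| * ‖q s‖ * Real.exp ((‖p‖ + 1) * |s|)) (Metric.ball_mem_nhds p one_pos)
    ?_ ?_ ?_ ?_ ?_ ?_).2
  · exact this
  · exact Filter.Eventually.of_forall fun x => (by fun_prop : Continuous (fun s : ℝ => q s * Complex.exp (-(x * s)))).aestronglyMeasurable
  · apply Continuous.intervalIntegrable; fun_prop
  · exact (by fun_prop : Continuous (fun s : ℝ => (-s : ℂ) * q s * Complex.exp (-(p * s)))).aestronglyMeasurable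
  · refine Filter.Eventually.of_forall fun s _ x hx => ?_
    rw [norm_mul, norm_mul, norm_neg, Complex.norm_real, Real.norm_eq_abs, Complex.norm_exp]
    gcongr
    have h1 : ‖x‖ ≤ ‖p‖ + 1 := by
      rw [Metric.mem_ball, dist_eq_norm] at hx
      have := norm_le_norm_add_norm_sub' x p
      linarith
    calc (-(x * s)).re ≤ ‖-(x * (s:ℂ))‖ := Complex.re_le_norm _
      _ = ‖x‖ * |s| := by rw [norm_neg, norm_mul, Complex.norm_real, Real.norm_eq_abs]
      _ ≤ _ := by gcongr
  · apply Continuous.intervalIntegrable; fun_prop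
  · refine Filter.Eventually.of_forall fun s _ x hx => ?_
    have : HasDerivAt (fun x : ℂ => -(x * (s:ℂ))) (-(1 * s)) x := ((hasDerivAt_id x).mul_const _).neg
    have := (this.cexp).const_mul (q s)
    exact this.congr_deriv (by ring)

lemma S15.W_iter {q : ℝ → ℂ} (hq : Continuous q) (b : ℝ) (n : ℕ) :
    iteratedDeriv n (S15.W q b) = S15.W (fun s => (-s : ℂ)^n * q s) b := by
  induction n with
  | zero => simp [iteratedDeriv_zero]
  | succ n ih =>
    rw [iteratedDeriv_succ, ih]
    funext p
    rw [(S15.W_hasDeriv (by fun_prop) b p).deriv]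
    congr 1
    funext s
    ring

lemma S15.W_diff {q : ℝ → ℂ} (hq : Continuous q) (b : ℝ) : Differentiable ℂ (S15.W q b) :=
  fun p => (S15.W_hasDeriv hq b p).differentiableAt


noncomputable def S15.F (g : ℝ → ℝ) (b : ℝ) (z : ℂ) : ℂ := ∫ t in (0:ℝ)..b, (g t : ℂ) * Complex.sin (z * t)

lemma S15.F_eq {g : ℝ → ℝ} (hg : Continuous g) (b : ℝ) (z : ℂ) :
    S15.F g b z = (Complex.I / 2) * (S15.W (fun t => (g t : ℂ)) b (Complex.I * z) - S15.W (fun t => (g t : ℂ)) b (-(Complex.I * z))) := by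
  unfold S15.F S15.W
  rw [← intervalIntegral.integral_sub (by apply Continuous.intervalIntegrable; fun_prop) (by apply Continuous.intervalIntegrable; fun_prop),
    ← intervalIntegral.integral_const_mul]
  congr 1
  funext t
  rw [Complex.sin]
  rw [show -(z * t) * Complex.I = -(Complex.I * z * t) by ring, show (z * t) * Complex.I = -(-(Complex.I * z) * t) by ring]
  ring

lemma S15.F_diff {g : ℝ → ℝ} (hg : Continuous g) (b : ℝ) : Differentiable ℂ (S15.F g b) := by
  have : S15.F g b = fun z => (Complex.I / 2) * (S15.W (fun t => (g t : ℂ)) b (Complex.I * z) - S15.W (fun t => (g t : ℂ)) b (-(Complex.I * z))) := by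
    funext z; exact S15.F_eq hg b z
  rw [this]
  have hW : Differentiable ℂ (S15.W (fun t => (g t : ℂ)) b) := S15.W_diff (by fun_prop) b
  have h1 : Differentiable ℂ (fun z => S15.W (fun t => (g t : ℂ)) b (Complex.I * z)) := hW.comp (by fun_prop)
  have h2 : Differentiable ℂ (fun z => S15.W (fun t => (g t : ℂ)) b (-(Complex.I * z))) := hW.comp (by fun_prop)
  exact (h1.sub h2).const_mul _

lemma S15.W_norm {g : ℝ → ℝ} (hg : Continuous g) {b : ℝ} (hb : 0 < b) (p : ℂ) :
    ‖S15.W (fun t => (g t : ℂ)) b p‖ ≤ (∫ t in (0:ℝ)..b, |g t|) * Real.exp (b * max 0 (-p.re)) := by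
  unfold S15.W
  rw [← intervalIntegral.integral_mul_const]
  apply intervalIntegral.norm_integral_le_of_norm_le hb.le
  · refine Filter.Eventually.of_forall fun t ht => ?_
    rw [norm_mul, Complex.norm_real, Real.norm_eq_abs, Complex.norm_exp]
    gcongr
    simp only [Complex.neg_re, Complex.mul_re, Complex.ofReal_re, Complex.ofReal_im, mul_zero, sub_zero]
    calc -(p.re * t) = t * (-p.re) := by ring
      _ ≤ t * max 0 (-p.re) := by
        apply mul_le_mul_of_nonneg_left (le_max_right _ _) ht.1.le
      _ ≤ _ := by
        apply mul_le_mul_of_nonneg_right ht.2 (le_max_left _ _)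
  · apply Continuous.intervalIntegrable; fun_prop

lemma S15.F_norm {g : ℝ → ℝ} (hg : Continuous g) {b : ℝ} (hb : 0 < b) (z : ℂ) :
    ‖S15.F g b z‖ ≤ (1 + ∫ t in (0:ℝ)..b, |g t|) * Real.exp (b * |z.im|) := by
  have hG : 0 ≤ ∫ t in (0:ℝ)..b, |g t| := intervalIntegral.integral_nonneg hb.le fun t _ => abs_nonneg _
  rw [S15.F_eq hg, norm_mul]
  have e : ‖Complex.I / 2‖ = 1/2 := by simp
  rw [e]
  have h1 := S15.W_norm hg hb (Complex.I * z)
  have h2 := S15.W_norm hg hb (-(Complex.I * z))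
  have m1 : max 0 (-(Complex.I * z).re) ≤ |z.im| := by
    simp [le_abs_self]
  have m2 : max 0 (-(-(Complex.I * z)).re) ≤ |z.im| := by
    simp [neg_le_abs]
  have h1' := h1.trans (mul_le_mul_of_nonneg_left (Real.exp_le_exp.2 (mul_le_mul_of_nonneg_left m1 hb.le)) hG)
  have h2' := h2.trans (mul_le_mul_of_nonneg_left (Real.exp_le_exp.2 (mul_le_mul_of_nonneg_left m2 hb.le)) hG)
  have h3 := norm_sub_le (S15.W (fun t => (g t : ℂ)) b (Complex.I * z)) (S15.W (fun t => (g t : ℂ)) b (-(Complex.I * z)))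
  have := Real.exp_pos (b * |z.im|)
  nlinarith

lemma S15.W_flip {g : ℝ → ℝ} (b : ℝ) (p : ℂ) :
    S15.W (fun t => (g (b - t) : ℂ)) b p = Complex.exp (-(p * b)) * S15.W (fun t => (g t : ℂ)) b (-p) := by
  unfold S15.W
  have := intervalIntegral.integral_comp_sub_left (a := 0) (b := b) (fun t => (g t : ℂ) * Complex.exp (-(p * ((b - t : ℝ) : ℂ)))) b
  simp only [sub_sub_cancel, sub_self, sub_zero] at this
  rw [this, ← intervalIntegral.integral_const_mul]
  congr 1
  funext t
  rw [mul_left_comm, ← Complex.exp_add]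
  congr 2
  push_cast
  ring

lemma S15.lower {g : ℝ → ℝ} (hg : Continuous g) {b : ℝ} (hb : 0 < b)
    (hnz : ∀ δ > 0, ∃ t ∈ Ioo (b - δ) b, g t ≠ 0) {δ : ℝ} (hδ : 0 < δ) :
    ∀ᶠ L : ℝ in Filter.atTop, ∃ z1 : ℂ, ‖z1 - L * Complex.I‖ ≤ L / 10 ∧
      Real.exp (b * z1.im - δ * L) ≤ ‖S15.F g b z1‖ := by
  by_contra hcon
  rw [Filter.not_eventually] at hcon
  set G := ∫ t in (0:ℝ)..b, |g t| with hGdef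
  have hG : 0 ≤ G := intervalIntegral.integral_nonneg hb.le fun t _ => abs_nonneg _
  set δ' := min δ (b/2) with hδ'
  have hδ'0 : 0 < δ' := lt_min hδ (by positivity)
  obtain ⟨t, ht, hgt⟩ := hnz (min (δ'/20) b) (lt_min (by positivity) hb)
  set a := b - t with ha
  have ha0 : 0 < a := by linarith [ht.2]
  have hab : a < b := by have := min_le_right (δ'/20) b; linarith [ht.1]
  have haδ : a < δ'/20 := by have := min_le_left (δ'/20) b; linarith [ht.1]
  set k : ℝ → ℝ := fun s => g (b - s) with hk
  have hkc : Continuous k := by fun_prop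
  have hka : k a ≠ 0 := by simpa [hk, ha] using hgt
  set kt := (Ioc 0 b).indicator k with hkt
  have hkta : kt a = k a := indicator_of_mem (show a ∈ Ioc 0 b from ⟨ha0, hab.le⟩) k
  have hktm : Measurable kt := hkc.measurable.indicator measurableSet_Ioc
  obtain ⟨B, hB⟩ := (isCompact_Icc (a := (0:ℝ)) (b := b)).exists_bound_of_continuousOn hkc.continuousOn
  have hktB : ∀ s, |kt s| ≤ B := by
    intro s
    by_cases hs : s ∈ Ioc 0 b
    · rw [hkt, indicator_of_mem hs]; exact hB s ⟨hs.1.le, hs.2⟩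
    · rw [hkt, indicator_of_notMem hs, abs_zero]
      exact (norm_nonneg _).trans (hB 0 ⟨le_refl _, hb.le⟩)
  have hktc : ContinuousAt kt a := by
    apply hkc.continuousAt.congr
    filter_upwards [Ioo_mem_nhds ha0 hab] with s hs
    rw [hkt, indicator_of_mem (show s ∈ Ioc 0 b from ⟨hs.1, hs.2.le⟩)]
  have hpw := S15.post_widder hktm hktB ha0 hktc
  rw [hkta] at hpw
  have hbig := hpw.abs.eventually (lt_mem_nhds (show |k a|/2 < |k a| by have := abs_pos.2 hka; linarith))
  have hsmall : Filter.Tendsto (fun L : ℝ => (2 + G) * (L^(1:ℝ) * Real.exp (-(δ'/2) * L))) Filter.atTop (nhds ((2+G) * 0)) :=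
    (tendsto_rpow_mul_exp_neg_mul_atTop_nhds_zero 1 (δ'/2) (by positivity)).const_mul _
  rw [mul_zero] at hsmall
  have hsm := hsmall.eventually (gt_mem_nhds (show 0 < |k a|/2 by have := abs_pos.2 hka; positivity))
  obtain ⟨L, hL, hL1, hL2, hL0⟩ := (hcon.and_eventually (hbig.and (hsm.and (Filter.eventually_gt_atTop 0)))).exists
  push Not at hL
  rw [Real.rpow_one] at hL2
  set n := ⌊a * L⌋₊ with hn
  have hK : ∀ p ∈ Metric.sphere (L:ℂ) (L/10), ‖S15.W (fun s => (k s : ℂ)) b p‖ ≤ (2 + G) * Real.exp (-(δ' * L)) := by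
    intro p hp
    rw [mem_sphere_iff_norm] at hp
    have hre : 9/10 * L ≤ p.re := by
      have h1 := Complex.abs_re_le_norm (p - L)
      rw [hp, Complex.sub_re, Complex.ofReal_re] at h1
      have := (abs_le.1 h1).1
      linarith
    have hf := hL (Complex.I * p) (by
      rw [show Complex.I * p - L * Complex.I = Complex.I * (p - L) by ring, norm_mul, Complex.norm_I, one_mul, hp])
    rw [S15.F_eq hg] at hf
    have e1 : Complex.I * (Complex.I * p) = -p := by rw [← mul_assoc, Complex.I_mul_I]; ring
    rw [e1, neg_neg, norm_mul] at hf
    have e2 : ‖Complex.I / 2‖ = 1/2 := by simp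
    have e3 : (Complex.I * p).im = p.re := by simp
    rw [e2, e3] at hf
    have h1 := S15.W_norm hg hb p
    rw [max_eq_left (by linarith), mul_zero, Real.exp_zero, mul_one] at h1
    have h2 := norm_le_norm_add_norm_sub' (S15.W (fun t => (g t : ℂ)) b (-p)) (S15.W (fun t => (g t : ℂ)) b p)
    have h3 : ‖S15.W (fun t => (g t : ℂ)) b (-p)‖ ≤ G + 2 * Real.exp (b * p.re - δ * L) := by linarith
    rw [hk, S15.W_flip, norm_mul, Complex.norm_exp]
    have e4 : (-(p * (b:ℂ))).re = -(p.re * b) := by simp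
    rw [e4]
    calc _ ≤ Real.exp (-(p.re * b)) * (G + 2 * Real.exp (b * p.re - δ * L)) := by gcongr
      _ = 2 * Real.exp (-(δ * L)) + G * Real.exp (-(p.re * b)) := by
          rw [mul_add, mul_left_comm, ← Real.exp_add]; ring_nf
      _ ≤ 2 * Real.exp (-(δ' * L)) + G * Real.exp (-(δ' * L)) := by
          have i1 : δ' ≤ δ := min_le_left _ _
          have i2 : δ' ≤ b/2 := min_le_right _ _
          have i3 : δ' * L ≤ p.re * b := by nlinarith
          gcongr
      _ = _ := by ring
  have hcau := Complex.norm_iteratedDeriv_le_of_forall_mem_sphere_norm_le n (by positivity : 0 < L/10)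
    (S15.W_diff (q := fun s => (k s : ℂ)) (by fun_prop) b).diffContOnCl hK
  rw [S15.W_iter (by fun_prop)] at hcau
  have hreal : S15.W (fun s => (-s : ℂ)^n * (k s : ℂ)) b L = (-1)^n * ((∫ s in (0:ℝ)..b, k s * (s^n * Real.exp (-(L * s))) : ℝ) : ℂ) := by
    unfold S15.W
    rw [← intervalIntegral.integral_ofReal, ← intervalIntegral.integral_const_mul]
    congr 1
    funext s
    push_cast
    rw [neg_pow]
    ring
  rw [hreal, norm_mul, norm_pow, norm_neg, norm_one, one_pow, one_mul, Complex.norm_real, Real.norm_eq_abs] at hcau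
  have hA : ∫ s in Ioi (0:ℝ), kt s * S15.wt n L s = L^(n+1)/(n.factorial:ℝ) * ∫ s in (0:ℝ)..b, k s * (s^n * Real.exp (-(L * s))) := by
    have : (fun s => kt s * S15.wt n L s) = (Ioc 0 b).indicator (fun s => k s * S15.wt n L s) := by
      funext s
      rw [hkt, ← indicator_mul_left]
    rw [this, MeasureTheory.setIntegral_indicator measurableSet_Ioc, inter_eq_right.2 (fun s hs => hs.1), ← intervalIntegral.integral_of_le hb.le,
      ← intervalIntegral.integral_const_mul]
    congr 1
    funext s
    unfold S15.wt
    ring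
  rw [hA, abs_mul, abs_of_nonneg (show 0 ≤ L^(n+1)/(n.factorial:ℝ) by positivity)] at hL1
  have hfac : (0:ℝ) < n.factorial := by exact_mod_cast n.factorial_pos
  have hfin : L^(n+1)/(n.factorial:ℝ) * |∫ s in (0:ℝ)..b, k s * (s^n * Real.exp (-(L * s)))| ≤ (2 + G) * (L * Real.exp (-(δ'/2) * L)) := by
    calc _ ≤ L^(n+1)/(n.factorial:ℝ) * (n.factorial * ((2 + G) * Real.exp (-(δ' * L))) / (L/10)^n) := by gcongr
      _ = (2 + G) * (L * (10^n * Real.exp (-(δ' * L)))) := by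
          rw [div_pow]; field_simp; ring
      _ ≤ _ := by
          gcongr
          have h10 : (10:ℝ)^n ≤ Real.exp (10 * n) := by
            rw [mul_comm, Real.exp_nat_mul]
            gcongr
            have := Real.add_one_le_exp (10:ℝ)
            linarith
          have hnl : (n:ℝ) ≤ a * L := Nat.floor_le (by positivity)
          calc _ ≤ Real.exp (10 * n) * Real.exp (-(δ' * L)) := by gcongr
            _ = Real.exp (10 * n + -(δ' * L)) := by rw [Real.exp_add]
            _ ≤ _ := by
              apply Real.exp_le_exp.2
              nlinarith
  linarith


set_option maxHeartbeats 1000000 in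
lemma S15.zeros_count {g : ℝ → ℝ} (hg : Continuous g) {b : ℝ} (hb : 0 < b)
    (hnz : ∀ δ > 0, ∃ t ∈ Ioo (b - δ) b, g t ≠ 0) {η : ℝ} (hη : 0 < η) :
    ∀ᶠ R : ℝ in Filter.atTop, ∀ T : Finset ℝ, (∀ x ∈ T, S15.F g b x = 0 ∧ 0 ≤ x ∧ x ≤ R) →
      (T.card : ℝ) ≤ (b / Real.pi + η) * R := by
  have hpi := Real.pi_pos
  set M := 1 + ∫ t in (0:ℝ)..b, |g t| with hM
  have hG : 0 ≤ ∫ t in (0:ℝ)..b, |g t| := intervalIntegral.integral_nonneg hb.le fun t _ => abs_nonneg _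
  have hM1 : 1 ≤ M := by linarith
  set β := b / Real.pi with hβ
  have hβ0 : 0 < β := by positivity
  set κ := min (1/10) (η / (36 * β)) with hκ
  have hκ0 : 0 < κ := lt_min (by norm_num) (by positivity)
  have hκ1 : κ ≤ 1/10 := min_le_left _ _
  have hκ2 : κ * (36 * β) ≤ η := by
    rw [← le_div_iff₀ (by positivity)]; exact min_le_right _ _
  set δ := η * κ^3 / 108 with hδ
  have hδ0 : 0 < δ := by positivity
  have hl := (Filter.tendsto_id.const_mul_atTop (show (0:ℝ) < 2 by norm_num)).eventually (S15.lower hg hb hnz hδ0)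
  filter_upwards [hl, Filter.eventually_gt_atTop 0, Filter.eventually_ge_atTop (Real.log M / δ)] with R hz hR hRM T hT
  simp only [id] at hz
  obtain ⟨z1, hz1, hlow⟩ := hz
  set L := 2 * R with hL
  have hL0 : 0 < L := by positivity
  have hlogM : Real.log M ≤ δ * R := by
    rw [div_le_iff₀ hδ0] at hRM; linarith
  have hre := Complex.abs_re_le_norm (z1 - L * Complex.I)
  have him := Complex.abs_im_le_norm (z1 - L * Complex.I)
  have er : (z1 - L * Complex.I).re = z1.re := by simp
  have ei : (z1 - L * Complex.I).im = z1.im - L := by simp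
  rw [er] at hre
  rw [ei] at him
  have hre' := abs_le.1 (hre.trans hz1)
  have him' := abs_le.1 (him.trans hz1)
  have hFpos : 0 < ‖S15.F g b z1‖ := lt_of_lt_of_le (Real.exp_pos _) hlow
  have hFne : S15.F g b ⟨z1.re, z1.im⟩ ≠ 0 := norm_pos_iff.1 hFpos
  have hfM : ∀ z, ‖S15.F g b z‖ ≤ M * Real.exp (b * |z.im|) := S15.F_norm hg hb
  have hE : S15.E (S15.F g b) M b z1 ≤ Real.log M + δ * L := by
    have := Real.log_le_log (Real.exp_pos _) hlow
    rw [Real.log_exp] at this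
    unfold S15.E
    linarith
  have hE0 : 0 ≤ S15.E (S15.F g b) M b z1 := S15.E_nonneg hM1 hb.le hfM z1 (by linarith [him'.1])
  have hmain := S15.integrated (S15.F_diff hg b) hM1 hb.le hfM (a1 := z1.re) (b1 := z1.im) (X := κ * L) (R := R) (ρ := 8/10 * L)
    (by positivity) hR (by positivity) (by linarith [him'.1]) (by nlinarith [hre'.2]) (by nlinarith [hre'.1]) hFne T hT
  have hz1' : (⟨z1.re, z1.im⟩ : ℂ) = z1 := rfl
  rw [hz1'] at hmain
  set E1 := S15.E (S15.F g b) M b z1 with hE1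
  have hb1 : 1/10 * L ≤ z1.im - 8/10 * L := by linarith [him'.1]
  have hratio : (κ * L)^2 / (z1.im - 8/10*L)^2 ≤ 100 * κ^2 := by
    rw [div_le_iff₀ (by
      have : 0 < z1.im - 8/10*L := by linarith
      positivity)]
    have : (1/10 * L)^2 ≤ (z1.im - 8/10 * L)^2 := by gcongr
    calc (κ * L)^2 = 100 * κ^2 * (1/10 * L)^2 := by ring
      _ ≤ _ := by gcongr
  have hsq : (κ * L)^2 + z1.im^2 ≤ 2 * L^2 := by
    have i1 : (κ*L)^2 ≤ (1/10 * L)^2 := by gcongr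
    have i2 : z1.im^2 ≤ (11/10 * L)^2 := by
      have : 0 ≤ z1.im := by linarith [him'.1]
      have : z1.im ≤ 11/10 * L := by linarith [him'.2]
      gcongr
    have i3 : (1/10 * L)^2 + (11/10 * L)^2 ≤ 2 * L^2 := by nlinarith [sq_nonneg L]
    exact (add_le_add i1 i2).trans i3
  have h1 : (1 + (κ*L)^2/(z1.im - 8/10*L)^2) * (4 * b / (3 * Real.pi)) * (κ*L)^3 * (R + 2 * (κ*L))
      ≤ (1 + 18 * κ) * β * R * (4/3 * (κ*L)^3) := by
    have e : (4 * b / (3 * Real.pi)) = β * (4/3) := by rw [hβ]; field_simp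
    have e2 : R + 2 * (κ * L) = (1 + 4 * κ) * R := by rw [hL]; ring
    rw [e, e2]
    have i3 : (1 + 100 * κ^2) * (1 + 4 * κ) ≤ 1 + 18 * κ := by nlinarith [sq_nonneg κ]
    calc _ ≤ (1 + 100 * κ^2) * (β * (4/3)) * (κ*L)^3 * ((1 + 4 * κ) * R) := by gcongr
      _ = ((1 + 100 * κ^2) * (1 + 4 * κ)) * (β * R * (4/3 * (κ*L)^3)) := by ring
      _ ≤ (1 + 18 * κ) * (β * R * (4/3 * (κ*L)^3)) := by gcongr
      _ = _ := by ring
  have h2 : 2 * ((κ*L)^2 + z1.im^2) * (8/10 * L) * (2 * Real.pi * E1) ≤ (η/2 * R) * (4/3 * (κ*L)^3) := by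
    have hpi4 : Real.pi ≤ 3.15 := Real.pi_lt_d2.le
    calc _ ≤ 2 * (2 * L^2) * (8/10 * L) * (2 * 3.15 * (3 * δ * R)) := by
          have : E1 ≤ 3 * δ * R := by rw [hL] at hE; linarith
          gcongr
      _ ≤ 24 * L^3 * (3 * δ * R) := by
          have : 0 ≤ L^3 * (3 * δ * R) := by positivity
          nlinarith
      _ = _ := by rw [hδ]; ring
  have hX3 : 0 < 4/3 * (κ*L)^3 := by positivity
  have h3 : (T.card : ℝ) * (4/3 * (κ*L)^3) ≤ ((1 + 18 * κ) * β * R + η/2 * R) * (4/3 * (κ*L)^3) := by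
    rw [add_mul]; linarith
  have h4 := le_of_mul_le_mul_right h3 hX3
  nlinarith


lemma S15.cont_param {X : Type*} [TopologicalSpace X] [LocallyCompactSpace X] {f : X → ℝ → ℝ}
    (hf : Continuous (Function.uncurry f)) {a b : X → ℝ} (ha : Continuous a) (hb : Continuous b) :
    Continuous (fun x => ∫ t in (a x)..(b x), f x t) := by
  have h1 := intervalIntegral.continuous_parametric_intervalIntegral_of_continuous (μ := MeasureTheory.volume) (a₀ := 0) hf hb
  have h2 := intervalIntegral.continuous_parametric_intervalIntegral_of_continuous (μ := MeasureTheory.volume) (a₀ := 0) hf ha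
  have : (fun x => ∫ t in (a x)..(b x), f x t) = fun x => (∫ t in (0:ℝ)..(b x), f x t) - ∫ t in (0:ℝ)..(a x), f x t := by
    funext x
    have hc : Continuous (f x) := hf.comp (by fun_prop : Continuous fun t : ℝ => (x, t))
    rw [intervalIntegral.integral_interval_sub_left (hc.intervalIntegrable _ _) (hc.intervalIntegrable _ _)]
  rw [this]
  exact h1.sub h2

/-- inner function of the Goursat integral equation -/
noncomputable def S15.psi (V : ℝ → ℝ) (K : ℝ → ℝ → ℝ) (x w : ℝ) : ℝ :=
  1/2 * V ((x - w)/2) - ∫ r in ((x - w)/2)..x, V r * K r (r - (x - w))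

/-- right-hand side of the Goursat integral equation -/
noncomputable def S15.op (V : ℝ → ℝ) (K : ℝ → ℝ → ℝ) (x u : ℝ) : ℝ :=
  1/2 * ∫ w in (-u)..u, S15.psi V K x w

lemma S15.psi_cont {V : ℝ → ℝ} (hV : Continuous V) {K : ℝ → ℝ → ℝ} (hK : Continuous (Function.uncurry K)) :
    Continuous (Function.uncurry (S15.psi V K)) := by
  have hK' : Continuous fun p : ℝ × ℝ => K p.1 p.2 := hK
  have h : Continuous (fun p : ℝ × ℝ => ∫ r in ((p.1 - p.2)/2)..p.1, V r * K r (r - (p.1 - p.2))) := by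
    refine S15.cont_param (f := fun (p : ℝ × ℝ) (r : ℝ) => V r * K r (r - (p.1 - p.2))) ?_ (a := fun p : ℝ × ℝ => (p.1 - p.2)/2) (b := fun p : ℝ × ℝ => p.1) (by fun_prop) (by fun_prop)
    have : Continuous fun q : (ℝ × ℝ) × ℝ => K q.2 (q.2 - (q.1.1 - q.1.2)) :=
      hK'.comp (by fun_prop : Continuous fun q : (ℝ × ℝ) × ℝ => (q.2, q.2 - (q.1.1 - q.1.2)))
    simp only [Function.uncurry_def]
    fun_prop
  simp only [Function.uncurry_def, S15.psi]
  exact (by fun_prop : Continuous fun p : ℝ × ℝ => 1/2 * V ((p.1 - p.2)/2)).sub h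

lemma S15.op_cont {V : ℝ → ℝ} (hV : Continuous V) {K : ℝ → ℝ → ℝ} (hK : Continuous (Function.uncurry K)) :
    Continuous (Function.uncurry (S15.op V K)) := by
  simp only [Function.uncurry_def, S15.op]
  refine continuous_const.mul ?_
  refine S15.cont_param (f := fun (p : ℝ × ℝ) w => S15.psi V K p.1 w) ?_ (a := fun p : ℝ × ℝ => -p.2) (b := fun p : ℝ × ℝ => p.2) (by fun_prop) (by fun_prop)
  exact (S15.psi_cont hV hK).comp (by fun_prop : Continuous fun q : (ℝ × ℝ) × ℝ => (q.1.1, q.2))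

lemma S15.op_odd (V : ℝ → ℝ) (K : ℝ → ℝ → ℝ) (x u : ℝ) : S15.op V K x (-u) = - S15.op V K x u := by
  unfold S15.op
  rw [neg_neg, intervalIntegral.integral_symm]
  ring

abbrev S15.Sp := C(↥(Icc (0:ℝ) 1) × ↥(Icc (-1:ℝ) 1), ℝ)

noncomputable def S15.ext (m : ℝ) (L : S15.Sp) (r v : ℝ) : ℝ :=
  Real.exp (m * r) * L (projIcc 0 1 zero_le_one r, projIcc (-1) 1 (by norm_num) v)

lemma S15.ext_cont (m : ℝ) (L : S15.Sp) : Continuous (Function.uncurry (S15.ext m L)) := by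
  simp only [Function.uncurry_def, S15.ext]
  have h1 : Continuous (projIcc (0:ℝ) 1 zero_le_one) := continuous_projIcc
  have h2 : Continuous (projIcc (-1:ℝ) 1 (by norm_num)) := continuous_projIcc
  fun_prop

noncomputable def S15.Phi (V : ℝ → ℝ) (hV : Continuous V) (m : ℝ) (L : S15.Sp) : S15.Sp where
  toFun p := Real.exp (-(m * p.1)) * S15.op V (S15.ext m L) p.1 (max (-p.1) (min p.2 p.1))
  continuous_toFun := by
    have h := (S15.op_cont hV (S15.ext_cont m L)).comp
      (by fun_prop : Continuous fun p : ↥(Icc (0:ℝ) 1) × ↥(Icc (-1:ℝ) 1) => ((p.1:ℝ), max (-(p.1:ℝ)) (min (p.2:ℝ) p.1)))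
    have h' : Continuous fun p : ↥(Icc (0:ℝ) 1) × ↥(Icc (-1:ℝ) 1) => S15.op V (S15.ext m L) p.1 (max (-(p.1:ℝ)) (min (p.2:ℝ) p.1)) := h
    fun_prop

lemma S15.psi_diff {V : ℝ → ℝ} (hV : Continuous V) {B : ℝ} (hB0 : 0 < B) (hB : ∀ x, |V x| ≤ B) (L1 L2 : S15.Sp)
    {x w : ℝ} (hw : |w| ≤ x) :
    |S15.psi V (S15.ext (2*B) L1) x w - S15.psi V (S15.ext (2*B) L2) x w| ≤ dist L1 L2 * Real.exp (2*B*x) / 2 := by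
  have hq : (x - w)/2 ≤ x := by have := (abs_le.1 hw).1; linarith
  have hc : ∀ L : S15.Sp, Continuous fun r => V r * S15.ext (2*B) L r (r - (x - w)) := by
    intro L
    exact hV.mul ((S15.ext_cont (2*B) L).comp (by fun_prop : Continuous fun r : ℝ => (r, r - (x-w))))
  unfold S15.psi
  rw [sub_sub_sub_cancel_left, ← intervalIntegral.integral_sub ((hc _).intervalIntegrable _ _) ((hc _).intervalIntegrable _ _)]
  have hbd : ∀ r, |V r * S15.ext (2*B) L2 r (r - (x - w)) - V r * S15.ext (2*B) L1 r (r - (x - w))| ≤ B * dist L1 L2 * Real.exp (2 * B * r) := by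
    intro r
    unfold S15.ext
    rw [← mul_sub, ← mul_sub, abs_mul, abs_mul, abs_of_pos (Real.exp_pos _), ← Real.dist_eq, dist_comm]
    calc _ ≤ B * (Real.exp (2*B*r) * dist L1 L2) := by
          gcongr
          · exact hB r
          · exact ContinuousMap.dist_apply_le_dist _
      _ = _ := by ring
  calc _ ≤ ∫ r in ((x - w)/2)..x, B * dist L1 L2 * Real.exp (2 * B * r) := by
        rw [← Real.norm_eq_abs]
        apply intervalIntegral.norm_integral_le_of_norm_le hq
        · exact Filter.Eventually.of_forall fun r _ => hbd r
        · apply Continuous.intervalIntegrable; fun_prop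
    _ = dist L1 L2 / 2 * (Real.exp (2*B*x) - Real.exp (2*B*((x-w)/2))) := by
        rw [intervalIntegral.integral_const_mul]
        rw [intervalIntegral.integral_comp_mul_left (fun r => Real.exp r) (by positivity), integral_exp, smul_eq_mul]
        field_simp
    _ ≤ _ := by
        have := Real.exp_pos (2*B*((x-w)/2))
        have := dist_nonneg (x := L1) (y := L2)
        nlinarith

lemma S15.Phi_contr {V : ℝ → ℝ} (hV : Continuous V) {B : ℝ} (hB0 : 0 < B) (hB : ∀ x, |V x| ≤ B) :
    ContractingWith (1/2) (S15.Phi V hV (2*B)) := by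
  refine ⟨by norm_num, LipschitzWith.of_dist_le_mul fun L1 L2 => ?_⟩
  rw [ContinuousMap.dist_le (by positivity)]
  rintro ⟨⟨x, hx⟩, ⟨v, hv⟩⟩
  simp only [S15.Phi, ContinuousMap.coe_mk]
  set u := max (-x) (min v x) with hu
  have hux : |u| ≤ x := by
    rw [abs_le]
    refine ⟨le_max_left _ _, max_le (by linarith [hx.1]) (min_le_right _ _)⟩
  have hc : ∀ L : S15.Sp, Continuous fun w => S15.psi V (S15.ext (2*B) L) x w := by
    intro L
    exact (S15.psi_cont hV (S15.ext_cont (2*B) L)).comp (by fun_prop : Continuous fun w : ℝ => (x, w))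
  rw [Real.dist_eq, ← mul_sub, abs_mul, abs_of_pos (Real.exp_pos _)]
  unfold S15.op
  rw [← mul_sub, ← intervalIntegral.integral_sub ((hc _).intervalIntegrable _ _) ((hc _).intervalIntegrable _ _), abs_mul]
  have h1 : |∫ w in (-u)..u, (S15.psi V (S15.ext (2*B) L1) x w - S15.psi V (S15.ext (2*B) L2) x w)| ≤ dist L1 L2 * Real.exp (2*B*x) / 2 * |u - -u| := by
    rw [← Real.norm_eq_abs]
    apply intervalIntegral.norm_integral_le_of_norm_le_const
    intro w hw
    apply S15.psi_diff hV hB0 hB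
    refine le_trans ?_ hux
    rcases le_total 0 u with h | h
    · rw [uIoc_of_le (by linarith)] at hw
      rw [abs_of_nonneg h, abs_le]; exact ⟨hw.1.le, hw.2⟩
    · rw [uIoc_of_ge (by linarith)] at hw
      rw [abs_of_nonpos h, abs_le]
      constructor <;> linarith [hw.1, hw.2]
  have h2 : |u - -u| ≤ 2 := by
    rw [show u - -u = 2 * u by ring, abs_mul, abs_two]
    linarith [hx.2]
  have hd := dist_nonneg (x := L1) (y := L2)
  calc _ ≤ Real.exp (-(2*B*x)) * (|(1/2:ℝ)| * (dist L1 L2 * Real.exp (2*B*x) / 2 * 2)) := by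
        gcongr
        exact h1.trans (by gcongr)
    _ = 1/2 * dist L1 L2 * (Real.exp (-(2*B*x)) * Real.exp (2*B*x)) := by
        rw [abs_of_pos (by norm_num : (0:ℝ) < 1/2)]; ring
    _ = _ := by rw [← Real.exp_add]; simp

lemma S15.kernel_exists {V : ℝ → ℝ} (hV : Continuous V) {B : ℝ} (hB : ∀ x, |V x| ≤ B) :
    ∃ K : ℝ → ℝ → ℝ, Continuous (Function.uncurry K) ∧
      ∀ x ∈ Icc (0:ℝ) 1, ∀ u, |u| ≤ x → K x u = S15.op V K x u := by
  have hB0 : 0 < B + 1 := by have := (abs_nonneg _).trans (hB 0); linarith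
  have hcon := S15.Phi_contr hV hB0 (fun x => (hB x).trans (by linarith))
  set L := hcon.fixedPoint with hL
  have hfix : S15.Phi V hV (2*(B+1)) L = L := hcon.fixedPoint_isFixedPt
  refine ⟨S15.ext (2*(B+1)) L, S15.ext_cont _ L, ?_⟩
  intro x hx u hu
  have hu1 := abs_le.1 hu
  have huI : u ∈ Icc (-1:ℝ) 1 := ⟨by linarith [hx.2], by linarith [hx.2]⟩
  have h := congrArg (fun M : S15.Sp => M (⟨x, hx⟩, ⟨u, huI⟩)) hfix
  simp only [S15.Phi, ContinuousMap.coe_mk] at h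
  rw [min_eq_left hu1.2, max_eq_right hu1.1] at h
  have e : S15.ext (2*(B+1)) L x u = Real.exp (2*(B+1)*x) * L (⟨x, hx⟩, ⟨u, huI⟩) := by
    unfold S15.ext
    rw [projIcc_of_mem _ hx, projIcc_of_mem _ huI]
  rw [e, ← h, ← mul_assoc, ← Real.exp_add]
  simp


lemma S15.tri {φ : ℝ → ℝ → ℝ} (hφ : Continuous (Function.uncurry φ)) {x : ℝ} (hx : 0 ≤ x) :
    ∫ q in (0:ℝ)..x, ∫ r in q..x, φ q r = ∫ r in (0:ℝ)..x, ∫ q in (0:ℝ)..r, φ q r := by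
  set D : Set (ℝ × ℝ) := {p | p.1 < p.2} with hD
  have hDm : MeasurableSet D := measurableSet_lt measurable_fst measurable_snd
  have hInt : MeasureTheory.Integrable (D.indicator (Function.uncurry φ))
      ((MeasureTheory.volume.restrict (Ioc 0 x)).prod (MeasureTheory.volume.restrict (Ioc 0 x))) := by
    apply MeasureTheory.Integrable.indicator _ hDm
    rw [MeasureTheory.Measure.prod_restrict]
    have hc : IsCompact (Icc (0:ℝ) x ×ˢ Icc (0:ℝ) x) := isCompact_Icc.prod isCompact_Icc
    have := hφ.continuousOn.integrableOn_compact (μ := MeasureTheory.volume.prod MeasureTheory.volume) hc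
    exact this.mono_set (prod_mono Ioc_subset_Icc_self Ioc_subset_Icc_self)
  have hswap := MeasureTheory.integral_integral_swap (f := fun q r => D.indicator (Function.uncurry φ) (q, r)) hInt
  rw [intervalIntegral.integral_of_le hx, intervalIntegral.integral_of_le hx]
  have e1 : ∫ q in Ioc 0 x, ∫ r in q..x, φ q r = ∫ q in Ioc 0 x, ∫ r in Ioc 0 x, D.indicator (Function.uncurry φ) (q, r) := by
    apply MeasureTheory.setIntegral_congr_fun measurableSet_Ioc
    intro q hq
    simp only
    have : (fun r => D.indicator (Function.uncurry φ) (q, r)) = (Ioi q).indicator (φ q) := by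
      funext r
      by_cases h : q < r
      · rw [indicator_of_mem (show (q, r) ∈ D from h), indicator_of_mem (show r ∈ Ioi q from h)]; rfl
      · rw [indicator_of_notMem (show (q, r) ∉ D from h), indicator_of_notMem (show r ∉ Ioi q from h)]
    rw [this, MeasureTheory.setIntegral_indicator measurableSet_Ioi, intervalIntegral.integral_of_le hq.2]
    congr 2
    ext r
    simp only [mem_Ioc, mem_inter_iff, mem_Ioi]
    constructor
    · rintro ⟨h1, h2⟩; exact ⟨⟨hq.1.trans h1, h2⟩, h1⟩
    · rintro ⟨⟨_, h2⟩, h1⟩; exact ⟨h1, h2⟩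
  have e2 : ∫ r in Ioc 0 x, ∫ q in (0:ℝ)..r, φ q r = ∫ r in Ioc 0 x, ∫ q in Ioc 0 x, D.indicator (Function.uncurry φ) (q, r) := by
    apply MeasureTheory.setIntegral_congr_fun measurableSet_Ioc
    intro r hr
    simp only
    have : (fun q => D.indicator (Function.uncurry φ) (q, r)) = (Iio r).indicator (fun q => φ q r) := by
      funext q
      by_cases h : q < r
      · rw [indicator_of_mem (show (q, r) ∈ D from h), indicator_of_mem (show q ∈ Iio r from h)]; rfl
      · rw [indicator_of_notMem (show (q, r) ∉ D from h), indicator_of_notMem (show q ∉ Iio r from h)]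
    rw [this, MeasureTheory.setIntegral_indicator measurableSet_Iio, intervalIntegral.integral_of_le hr.1.le,
      MeasureTheory.integral_Ioc_eq_integral_Ioo]
    congr 2
    ext q
    simp only [mem_Ioc, mem_inter_iff, mem_Iio, mem_Ioo]
    constructor
    · rintro ⟨h1, h2⟩; exact ⟨⟨h1, h2.le.trans hr.2⟩, h2⟩
    · rintro ⟨⟨h2, _⟩, h1⟩; exact ⟨h2, h1⟩
  rw [e1, e2, hswap]

lemma S15.fold {φ : ℝ → ℝ} (hφ : Continuous φ) (x : ℝ) :
    ∫ w in (-x)..x, φ w = ∫ t in (0:ℝ)..x, (φ t + φ (-t)) := by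
  have hφn : Continuous fun t => φ (-t) := by fun_prop
  rw [intervalIntegral.integral_add (hφ.intervalIntegrable _ _) (hφn.intervalIntegrable _ _),
    intervalIntegral.integral_comp_neg, neg_zero, add_comm,
    intervalIntegral.integral_add_adjacent_intervals (hφ.intervalIntegrable _ _) (hφ.intervalIntegrable _ _)]

/-- the free solution -/
noncomputable def S15.sn (z u : ℝ) : ℝ := Real.sin (z * u) / z

noncomputable def S15.cn (z u : ℝ) : ℝ := - Real.cos (z * u) / z^2

lemma S15.sn_cont (z : ℝ) : Continuous (S15.sn z) := by unfold S15.sn; fun_prop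
lemma S15.cn_cont (z : ℝ) : Continuous (S15.cn z) := by unfold S15.cn; fun_prop

lemma S15.cn_deriv {z : ℝ} (hz : z ≠ 0) (u : ℝ) : HasDerivAt (S15.cn z) (S15.sn z u) u := by
  unfold S15.cn S15.sn
  have h1 : HasDerivAt (fun u => z * u) (z * 1) u := (hasDerivAt_id u).const_mul z
  have := (h1.cos.neg).div_const (z^2)
  refine this.congr_deriv ?_
  field_simp

lemma S15.cn_sub {z : ℝ} (hz : z ≠ 0) (x q : ℝ) : S15.cn z x - S15.cn z (x - 2 * q) = 2 * (S15.sn z (x - q) * S15.sn z q) := by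
  unfold S15.cn S15.sn
  have h := Real.cos_sub_cos (z * (x - 2*q)) (z * x)
  rw [show (z * (x - 2*q) + z * x)/2 = z * (x - q) by ring, show (z * (x - 2*q) - z * x)/2 = -(z * q) by ring, Real.sin_neg] at h
  field_simp
  linarith

lemma S15.sn_comb {z : ℝ} (hz : z ≠ 0) (x r t : ℝ) :
    -(S15.sn z (x - (r - t)/2) * S15.sn z ((r - t)/2)) + S15.sn z (x - (r + t)/2) * S15.sn z ((r+t)/2) = S15.sn z (x - r) * S15.sn z t := by
  have h1 := S15.cn_sub hz x ((r-t)/2)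
  have h2 := S15.cn_sub hz x ((r+t)/2)
  have h3 := S15.cn_sub hz (x - r + t) t
  rw [show x - 2 * ((r-t)/2) = x - r + t by ring] at h1
  rw [show x - 2 * ((r+t)/2) = x - r - t by ring] at h2
  rw [show x - r + t - 2 * t = x - r - t by ring, show x - r + t - t = x - r by ring] at h3
  linarith

lemma S15.byparts {ψ : ℝ → ℝ} (hψ : Continuous ψ) {z : ℝ} (hz : z ≠ 0) (x : ℝ) :
    ∫ u in (0:ℝ)..x, (1/2 * ∫ w in (-u)..u, ψ w) * S15.sn z u = ∫ q in (0:ℝ)..x, ψ (x - 2 * q) * (2 * (S15.sn z (x - q) * S15.sn z q)) := by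
  have hd : ∀ u ∈ uIcc 0 x, HasDerivAt (fun u => 1/2 * ∫ w in (0:ℝ)..u, (ψ w + ψ (-w))) (1/2 * (ψ u + ψ (-u))) u := by
    intro u _
    have hc : Continuous fun w => ψ w + ψ (-w) := by fun_prop
    exact (hc.integral_hasStrictDerivAt 0 u).hasDerivAt.const_mul _
  have hIBP := intervalIntegral.integral_mul_deriv_eq_deriv_mul hd (fun u _ => S15.cn_deriv hz u)
    (by apply Continuous.intervalIntegrable; fun_prop) ((S15.sn_cont z).intervalIntegrable _ _)
  simp only [S15.fold hψ]
  rw [hIBP]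
  simp only [intervalIntegral.integral_same, mul_zero, zero_mul, sub_zero]
  have hcn := S15.cn_cont z
  have heven : ∀ u, S15.cn z (-u) = S15.cn z u := by intro u; unfold S15.cn; simp
  have e1 : ∫ u in (0:ℝ)..x, 1/2 * (ψ u + ψ (-u)) * S15.cn z u = 1/2 * ∫ w in (-x)..x, ψ w * S15.cn z w := by
    rw [S15.fold (by fun_prop), ← intervalIntegral.integral_const_mul]
    congr 1
    funext u
    rw [heven]; ring
  rw [e1, ← S15.fold hψ, mul_right_comm, mul_assoc, ← mul_sub, ← intervalIntegral.integral_const_mul, ← intervalIntegral.integral_sub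
    (by apply Continuous.intervalIntegrable; fun_prop) (by apply Continuous.intervalIntegrable; fun_prop)]
  have e2 := intervalIntegral.integral_comp_sub_mul (a := 0) (b := x) (fun w => ψ w * (S15.cn z x - S15.cn z w)) (two_ne_zero) x
  simp only [S15.cn_sub hz] at e2
  rw [e2, smul_eq_mul]
  rw [show x - 2 * x = -x by ring, mul_zero, sub_zero, one_div]
  congr 2
  funext w
  ring

lemma S15.rep {V : ℝ → ℝ} (hV : Continuous V) {K : ℝ → ℝ → ℝ} (hK : Continuous (Function.uncurry K))
    (hKe : ∀ x ∈ Icc (0:ℝ) 1, ∀ u, |u| ≤ x → K x u = S15.op V K x u) {z : ℝ} (hz : z ≠ 0) {x : ℝ} (hx : x ∈ Icc (0:ℝ) 1) :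
    ∫ t in (0:ℝ)..x, K x t * S15.sn z t =
      ∫ r in (0:ℝ)..x, S15.sn z (x - r) * (V r * (S15.sn z r + ∫ t in (0:ℝ)..r, K r t * S15.sn z t)) := by
  have hsn := S15.sn_cont z
  have hK' : Continuous fun p : ℝ × ℝ => K p.1 p.2 := hK
  have hKc : ∀ r, Continuous (K r) := fun r => hK'.comp (by fun_prop : Continuous fun t : ℝ => (r, t))
  have hψ : Continuous (S15.psi V K x) := (S15.psi_cont hV hK).comp (by fun_prop : Continuous fun w : ℝ => (x, w))
  have hL : ∫ t in (0:ℝ)..x, K x t * S15.sn z t = ∫ q in (0:ℝ)..x, S15.psi V K x (x - 2 * q) * (2 * (S15.sn z (x - q) * S15.sn z q)) := by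
    rw [← S15.byparts hψ hz x]
    apply intervalIntegral.integral_congr
    intro t ht
    rw [uIcc_of_le hx.1] at ht
    simp only
    rw [hKe x hx t (by rw [abs_of_nonneg ht.1]; exact ht.2)]
    rfl
  have hψe : ∀ q, S15.psi V K x (x - 2 * q) = 1/2 * V q - ∫ r in q..x, V r * K r (r - 2 * q) := by
    intro q
    unfold S15.psi
    rw [sub_sub_cancel, show 2 * q / 2 = q by ring]
  have hinner : ∀ r ∈ Icc (0:ℝ) 1, -2 * ∫ q in (0:ℝ)..r, K r (r - 2 * q) * (S15.sn z (x - q) * S15.sn z q) = S15.sn z (x - r) * ∫ t in (0:ℝ)..r, K r t * S15.sn z t := by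
    intro r hr
    have e2 := intervalIntegral.integral_comp_sub_mul (a := 0) (b := r) (fun t => K r t * (S15.sn z (x - (r - t)/2) * S15.sn z ((r - t)/2))) (two_ne_zero) r
    have e3 : ∀ q : ℝ, (r - (r - 2 * q))/2 = q := by intro q; ring
    simp only [e3] at e2
    have hc := hKc r
    rw [e2, smul_eq_mul, show r - 2 * r = -r by ring, mul_zero, sub_zero, S15.fold (by fun_prop), ← intervalIntegral.integral_const_mul,
      ← intervalIntegral.integral_const_mul, ← intervalIntegral.integral_const_mul]
    apply intervalIntegral.integral_congr
    intro t ht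
    rw [uIcc_of_le hr.1] at ht
    have hodd : K r (-t) = - K r t := by
      rw [hKe r hr t (by rw [abs_of_nonneg ht.1]; exact ht.2), hKe r hr (-t) (by rw [abs_neg, abs_of_nonneg ht.1]; exact ht.2), S15.op_odd]
    simp only
    rw [hodd, sub_neg_eq_add]
    have := S15.sn_comb hz x r t
    linear_combination (K r t) * this
  have hφ : Continuous (Function.uncurry fun q r => V r * K r (r - 2 * q) * (-2 * (S15.sn z (x - q) * S15.sn z q))) := by
    have : Continuous fun p : ℝ × ℝ => K p.2 (p.2 - 2 * p.1) := hK'.comp (by fun_prop : Continuous fun p : ℝ × ℝ => (p.2, p.2 - 2 * p.1))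
    simp only [Function.uncurry_def]
    fun_prop
  have htri := S15.tri hφ hx.1
  have hm : Continuous fun q => ∫ r in q..x, V r * K r (r - 2 * q) * (-2 * (S15.sn z (x - q) * S15.sn z q)) :=
    S15.cont_param hφ continuous_id continuous_const
  have hk1 : Continuous fun r => ∫ t in (0:ℝ)..r, K r t * S15.sn z t := by
    refine S15.cont_param (f := fun r t => K r t * S15.sn z t) ?_ continuous_const continuous_id
    simp only [Function.uncurry_def]
    fun_prop
  rw [hL]
  calc _ = ∫ q in (0:ℝ)..x, (V q * (S15.sn z (x - q) * S15.sn z q) + ∫ r in q..x, V r * K r (r - 2 * q) * (-2 * (S15.sn z (x - q) * S15.sn z q))) := by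
        congr 1
        funext q
        rw [hψe, intervalIntegral.integral_mul_const]
        ring
    _ = (∫ q in (0:ℝ)..x, V q * (S15.sn z (x - q) * S15.sn z q)) + ∫ r in (0:ℝ)..x, ∫ q in (0:ℝ)..r, V r * K r (r - 2 * q) * (-2 * (S15.sn z (x - q) * S15.sn z q)) := by
        rw [intervalIntegral.integral_add (by apply Continuous.intervalIntegrable; fun_prop) (hm.intervalIntegrable _ _), htri]
    _ = (∫ q in (0:ℝ)..x, V q * (S15.sn z (x - q) * S15.sn z q)) + ∫ r in (0:ℝ)..x, V r * (S15.sn z (x - r) * ∫ t in (0:ℝ)..r, K r t * S15.sn z t) := by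
        congr 1
        apply intervalIntegral.integral_congr
        intro r hr
        rw [uIcc_of_le hx.1] at hr
        simp only
        rw [← hinner r ⟨hr.1, hr.2.trans hx.2⟩, ← intervalIntegral.integral_const_mul, ← intervalIntegral.integral_const_mul]
        congr 1
        funext q
        ring
    _ = _ := by
        rw [← intervalIntegral.integral_add (by apply Continuous.intervalIntegrable; fun_prop) (by apply Continuous.intervalIntegrable; fun_prop)]
        congr 1
        funext r
        ring


lemma S15.gron {d : ℝ → ℝ} (hd : Continuous d) {B : ℝ}
    (h : ∀ x ∈ Icc (0:ℝ) 1, |d x| ≤ B * ∫ r in (0:ℝ)..x, |d r|) : ∀ x ∈ Icc (0:ℝ) 1, d x = 0 := by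
  have hda : Continuous fun r => |d r| := hd.abs
  have hG : ∀ x, HasDerivAt (fun x => ∫ r in (0:ℝ)..x, |d r|) |d x| x := fun x =>
    (hda.integral_hasStrictDerivAt 0 x).hasDerivAt
  have hu : ∀ x, HasDerivAt (fun x => Real.exp (-B * x) * ∫ r in (0:ℝ)..x, |d r|)
      (Real.exp (-B * x) * (|d x| - B * ∫ r in (0:ℝ)..x, |d r|)) x := by
    intro x
    have h1 : HasDerivAt (fun x => -B * x) (-B * 1) x := (hasDerivAt_id x).const_mul (-B)
    refine (h1.exp.mul (hG x)).congr_deriv ?_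
    ring
  have hanti : AntitoneOn (fun x => Real.exp (-B * x) * ∫ r in (0:ℝ)..x, |d r|) (Icc 0 1) := by
    apply antitoneOn_of_deriv_nonpos (convex_Icc 0 1)
    · exact fun x _ => (hu x).continuousAt.continuousWithinAt
    · exact fun x _ => (hu x).differentiableAt.differentiableWithinAt
    · intro x hx
      rw [interior_Icc] at hx
      rw [(hu x).deriv]
      have := h x (Ioo_subset_Icc_self hx)
      exact mul_nonpos_of_nonneg_of_nonpos (Real.exp_pos _).le (by linarith)
  intro x hx
  have h0 := hanti (left_mem_Icc.2 zero_le_one) hx hx.1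
  simp only [intervalIntegral.integral_same, mul_zero] at h0
  have hnn : 0 ≤ ∫ r in (0:ℝ)..x, |d r| := intervalIntegral.integral_nonneg hx.1 fun _ _ => abs_nonneg _
  have hz : ∫ r in (0:ℝ)..x, |d r| = 0 := by
    have := Real.exp_pos (-B * x)
    by_contra hne
    have : 0 < ∫ r in (0:ℝ)..x, |d r| := lt_of_le_of_ne hnn (Ne.symm hne)
    have := mul_pos ‹0 < Real.exp (-B * x)› this
    linarith
  have := h x hx
  rw [hz, mul_zero] at this
  exact abs_eq_zero.1 (le_antisymm this (abs_nonneg _))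

lemma S15.exists_extension {f : ℝ → ℝ} (hf : ContinuousOn f (Icc 0 1)) :
    ∃ g : ℝ → ℝ, Continuous g ∧ (∃ B, ∀ x, |g x| ≤ B) ∧ ∀ x ∈ Icc (0:ℝ) 1, g x = f x := by
  refine ⟨IccExtend (zero_le_one) ((Icc (0:ℝ) 1).domRestrict f), ?_, ?_, ?_⟩
  · exact (continuousOn_iff_continuous_domRestrict.1 hf).Icc_extend'
  · obtain ⟨B, hB⟩ := isCompact_Icc.exists_bound_of_continuousOn hf
    refine ⟨B, fun x => ?_⟩
    simp only [IccExtend, Function.comp]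
    exact hB _ (projIcc 0 1 zero_le_one x).2
  · intro x hx
    rw [IccExtend_of_mem _ _ hx]; rfl

/-- Volterra equation for an eigenfunction -/
lemma S15.volterra {V : ℝ → ℝ} (hV : ContinuousOn V (Icc 0 1)) {z : ℝ} (hz : z ≠ 0) {φ : ℝ → ℝ}
    (h2 : ContDiffOn ℝ 2 φ (Icc 0 1)) (h0 : φ 0 = 0)
    (hode : ∀ x ∈ Ioo (0:ℝ) 1,
      -(derivWithin (derivWithin φ (Icc 0 1)) (Icc 0 1) x) + V x * φ x = z^2 * φ x)
    {x : ℝ} (hx : x ∈ Icc (0:ℝ) 1) :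
    φ x = derivWithin φ (Icc 0 1) 0 * S15.sn z x + ∫ r in (0:ℝ)..x, S15.sn z (x - r) * (V r * φ r) := by
  have hun : UniqueDiffOn ℝ (Icc (0:ℝ) 1) := uniqueDiffOn_Icc zero_lt_one
  have hc1 : ContDiffOn ℝ 1 (derivWithin φ (Icc 0 1)) (Icc 0 1) :=
    h2.derivWithin hun (by norm_num)
  have hsub : Icc 0 x ⊆ Icc (0:ℝ) 1 := Icc_subset_Icc_right hx.2
  set p := derivWithin φ (Icc 0 1) with hp
  have hpc : ContinuousOn p (Icc 0 1) := hc1.continuousOn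
  have hsn := S15.sn_cont z
  have hd : ∀ r ∈ Ioo 0 x, HasDerivAt (fun r => S15.sn z (x - r) * p r + Real.cos (z * (x - r)) * φ r)
      (S15.sn z (x - r) * (V r * φ r)) r := by
    intro r hr
    have hr1 : r ∈ Ioo (0:ℝ) 1 := ⟨hr.1, hr.2.trans_le hx.2⟩
    have hnb : Icc (0:ℝ) 1 ∈ nhds r := Icc_mem_nhds hr1.1 hr1.2
    have hφ : HasDerivAt φ (p r) r :=
      ((h2.differentiableOn (by norm_num)) r (Ioo_subset_Icc_self hr1)).hasDerivWithinAt.hasDerivAt hnb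
    have hpd : HasDerivAt p (derivWithin p (Icc 0 1) r) r :=
      ((hc1.differentiableOn (by norm_num)) r (Ioo_subset_Icc_self hr1)).hasDerivWithinAt.hasDerivAt hnb
    have hl : HasDerivAt (fun r => z * (x - r)) (z * (-1)) r := ((hasDerivAt_id r).const_sub x).const_mul z
    have hs : HasDerivAt (fun r => S15.sn z (x - r)) (- Real.cos (z * (x - r))) r := by
      unfold S15.sn
      refine (hl.sin.div_const z).congr_deriv ?_
      field_simp
    refine ((hs.mul hpd).add (hl.cos.mul hφ)).congr_deriv ?_
    have := hode r hr1
    have e : derivWithin p (Icc 0 1) r = V r * φ r - z^2 * φ r := by linarith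
    rw [e]
    unfold S15.sn
    field_simp
    ring
  have hcont : ContinuousOn (fun r => S15.sn z (x - r) * p r + Real.cos (z * (x - r)) * φ r) (Icc 0 x) := by
    have a1 := hpc.mono hsub
    have a2 := h2.continuousOn.mono hsub
    have b1 : Continuous fun r => S15.sn z (x - r) := by fun_prop
    have b2 : Continuous fun r => Real.cos (z * (x - r)) := by fun_prop
    exact (b1.continuousOn.mul a1).add (b2.continuousOn.mul a2)
  have hInt : IntervalIntegrable (fun r => S15.sn z (x - r) * (V r * φ r)) MeasureTheory.volume 0 x := by
    apply ContinuousOn.intervalIntegrable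
    rw [uIcc_of_le hx.1]
    have b1 : Continuous fun r => S15.sn z (x - r) := by fun_prop
    exact b1.continuousOn.mul ((hV.mono hsub).mul (h2.continuousOn.mono hsub))
  have := intervalIntegral.integral_eq_sub_of_hasDerivAt_of_le hx.1 hcont hd hInt
  rw [this, h0]
  simp [S15.sn]
  ring

lemma S15.sn_bound {z : ℝ} (hz : 0 < z) (u : ℝ) : |S15.sn z u| ≤ 1 / z := by
  unfold S15.sn
  rw [abs_div, abs_of_pos hz]
  gcongr
  exact Real.abs_sin_le_one _

lemma S15.eigfun {V : ℝ → ℝ} (hV : Continuous V) {B : ℝ} (hB : ∀ x, |V x| ≤ B) {K : ℝ → ℝ → ℝ}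
    (hK : Continuous (Function.uncurry K))
    (hKe : ∀ x ∈ Icc (0:ℝ) 1, ∀ u, |u| ≤ x → K x u = S15.op V K x u) {z : ℝ} (hz : 0 < z) {φ : ℝ → ℝ}
    (h2 : ContDiffOn ℝ 2 φ (Icc 0 1)) (h0 : φ 0 = 0)
    (hode : ∀ x ∈ Ioo (0:ℝ) 1,
      -(derivWithin (derivWithin φ (Icc 0 1)) (Icc 0 1) x) + V x * φ x = z^2 * φ x) :
    ∃ c : ℝ, ∀ x ∈ Icc (0:ℝ) 1, φ x = c * (S15.sn z x + ∫ t in (0:ℝ)..x, K x t * S15.sn z t) := by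
  obtain ⟨φg, hφc, -, hφe⟩ := S15.exists_extension h2.continuousOn
  set c := derivWithin φ (Icc 0 1) 0 with hc
  have hsn := S15.sn_cont z
  set y : ℝ → ℝ := fun x => S15.sn z x + ∫ t in (0:ℝ)..x, K x t * S15.sn z t with hy
  have hk1 : Continuous fun r => ∫ t in (0:ℝ)..r, K r t * S15.sn z t := by
    refine S15.cont_param (f := fun r t => K r t * S15.sn z t) ?_ continuous_const continuous_id
    have hK' : Continuous fun p : ℝ × ℝ => K p.1 p.2 := hK
    simp only [Function.uncurry_def]
    fun_prop
  have hyc : Continuous y := hsn.add hk1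
  have hyv : ∀ x ∈ Icc (0:ℝ) 1, y x = S15.sn z x + ∫ r in (0:ℝ)..x, S15.sn z (x - r) * (V r * y r) := by
    intro x hx
    have := S15.rep hV hK hKe hz.ne' hx
    rw [← this]
  have hdv : ∀ x ∈ Icc (0:ℝ) 1, φg x - c * y x = ∫ r in (0:ℝ)..x, S15.sn z (x - r) * (V r * (φg r - c * y r)) := by
    intro x hx
    have e1 := S15.volterra hV.continuousOn hz.ne' h2 h0 hode hx
    have e2 : ∫ r in (0:ℝ)..x, S15.sn z (x - r) * (V r * φ r) = ∫ r in (0:ℝ)..x, S15.sn z (x - r) * (V r * φg r) := by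
      apply intervalIntegral.integral_congr
      intro r hr
      rw [uIcc_of_le hx.1] at hr
      simp only
      rw [hφe r ⟨hr.1, hr.2.trans hx.2⟩]
    rw [hφe x hx, e1, e2, hyv x hx, mul_add, ← intervalIntegral.integral_const_mul, add_sub_add_left_eq_sub,
      ← intervalIntegral.integral_sub (by apply Continuous.intervalIntegrable; fun_prop)
        (by apply Continuous.intervalIntegrable; fun_prop)]
    congr 1
    funext r
    ring
  have hzero := S15.gron (d := fun x => φg x - c * y x) (by fun_prop) (B := 1 / z * B) (by
    intro x hx
    rw [hdv x hx, ← intervalIntegral.integral_const_mul]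
    refine (intervalIntegral.abs_integral_le_integral_abs hx.1).trans ?_
    apply intervalIntegral.integral_mono_on hx.1
    · apply Continuous.intervalIntegrable; fun_prop
    · apply Continuous.intervalIntegrable; fun_prop
    · intro r _
      rw [abs_mul, abs_mul, ← mul_assoc]
      gcongr
      · exact S15.sn_bound hz _
      · exact hB r)
  refine ⟨c, fun x hx => ?_⟩
  have := hzero x hx
  rw [← hφe x hx]
  linarith

noncomputable def S15.ht (h : ℝ → ℝ) (K : ℝ → ℝ → ℝ) (t : ℝ) : ℝ := h t + ∫ x in t..1, K x t * h x

lemma S15.ht_cont {h : ℝ → ℝ} (hh : Continuous h) {K : ℝ → ℝ → ℝ} (hK : Continuous (Function.uncurry K)) :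
    Continuous (S15.ht h K) := by
  apply hh.add
  refine S15.cont_param (f := fun t x => K x t * h x) ?_ continuous_id continuous_const
  have hK' : Continuous fun p : ℝ × ℝ => K p.1 p.2 := hK
  have : Continuous fun p : ℝ × ℝ => K p.2 p.1 := hK'.comp continuous_swap
  simp only [Function.uncurry_def]
  fun_prop

lemma S15.ht_pair {h : ℝ → ℝ} (hh : Continuous h) {K : ℝ → ℝ → ℝ} (hK : Continuous (Function.uncurry K)) (z : ℝ) :
    ∫ x in (0:ℝ)..1, h x * (S15.sn z x + ∫ t in (0:ℝ)..x, K x t * S15.sn z t) =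
      ∫ t in (0:ℝ)..1, S15.ht h K t * S15.sn z t := by
  have hsn := S15.sn_cont z
  have hK' : Continuous fun p : ℝ × ℝ => K p.1 p.2 := hK
  have hKs : Continuous fun p : ℝ × ℝ => K p.2 p.1 := hK'.comp continuous_swap
  have hk1 : Continuous fun r => ∫ t in (0:ℝ)..r, K r t * S15.sn z t := by
    refine S15.cont_param (f := fun r t => K r t * S15.sn z t) ?_ continuous_const continuous_id
    simp only [Function.uncurry_def]
    fun_prop
  have hφ : Continuous (Function.uncurry fun t x => K x t * h x * S15.sn z t) := by
    simp only [Function.uncurry_def]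
    fun_prop
  have htri := S15.tri hφ (zero_le_one)
  have hm : Continuous fun t => ∫ x in t..1, K x t * h x * S15.sn z t :=
    S15.cont_param hφ continuous_id continuous_const
  calc _ = ∫ x in (0:ℝ)..1, (h x * S15.sn z x + h x * ∫ t in (0:ℝ)..x, K x t * S15.sn z t) := by
        congr 1; funext x; ring
    _ = (∫ x in (0:ℝ)..1, h x * S15.sn z x) + ∫ x in (0:ℝ)..1, h x * ∫ t in (0:ℝ)..x, K x t * S15.sn z t := by
        rw [intervalIntegral.integral_add (by apply Continuous.intervalIntegrable; fun_prop)
          (by apply Continuous.intervalIntegrable; fun_prop)]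
    _ = (∫ x in (0:ℝ)..1, h x * S15.sn z x) + ∫ t in (0:ℝ)..1, ∫ x in t..1, K x t * h x * S15.sn z t := by
        rw [htri]
        congr 2
        funext x
        rw [← intervalIntegral.integral_const_mul]
        congr 1
        funext t
        ring
    _ = _ := by
        rw [← intervalIntegral.integral_add (by apply Continuous.intervalIntegrable; fun_prop)
          (hm.intervalIntegrable _ _)]
        congr 1
        funext t
        rw [intervalIntegral.integral_mul_const, S15.ht]
        ring

lemma S15.ht_ne {h : ℝ → ℝ} (hh : Continuous h) {K : ℝ → ℝ → ℝ} (hK : Continuous (Function.uncurry K))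
    (h0 : ∀ t ∈ Icc (0:ℝ) 1, S15.ht h K t = 0) : ∀ x ∈ Icc (0:ℝ) 1, h x = 0 := by
  obtain ⟨C, hC⟩ := (isCompact_Icc.prod isCompact_Icc : IsCompact (Icc (0:ℝ) 1 ×ˢ Icc (0:ℝ) 1)).exists_bound_of_continuousOn
    hK.continuousOn
  have hK' : Continuous fun p : ℝ × ℝ => K p.1 p.2 := hK
  have key := S15.gron (d := fun s => h (1 - s)) (by fun_prop) (B := C) (by
    intro s hs
    have hs1 : (1 - s) ∈ Icc (0:ℝ) 1 := ⟨by linarith [hs.2], by linarith [hs.1]⟩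
    have hKc : Continuous fun x => K x (1 - s) := hK'.comp (by fun_prop : Continuous fun x : ℝ => (x, 1 - s))
    have e := h0 (1 - s) hs1
    rw [S15.ht] at e
    have e1 : h (1 - s) = - ∫ x in (1 - s)..1, K x (1 - s) * h x := by linarith
    have e2 := intervalIntegral.integral_comp_sub_left (a := 0) (b := s) (fun r => |h r|) 1
    rw [e2, e1, abs_neg, sub_zero, ← intervalIntegral.integral_const_mul]
    refine (intervalIntegral.abs_integral_le_integral_abs hs1.2).trans ?_
    apply intervalIntegral.integral_mono_on hs1.2
    · apply Continuous.intervalIntegrable; fun_prop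
    · apply Continuous.intervalIntegrable; fun_prop
    · intro r hr
      rw [abs_mul]
      gcongr
      exact hC (r, 1 - s) ⟨⟨hs1.1.trans hr.1, hr.2⟩, hs1⟩)
  intro x hx
  have := key (1 - x) ⟨by linarith [hx.2], by linarith [hx.1]⟩
  simpa using this


lemma S15.zero_closure {g : ℝ → ℝ} (hg : Continuous g) {a b : ℝ} (hab : a < b) (h : ∀ t ∈ Ioo a b, g t = 0) :
    ∀ t ∈ Icc a b, g t = 0 := by
  have hcl : IsClosed {t | g t = 0} := isClosed_eq hg continuous_const
  have : closure (Ioo a b) ⊆ {t | g t = 0} := closure_minimal h hcl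
  rw [closure_Ioo hab.ne] at this
  exact this

/-- the effective endpoint of the support -/
lemma S15.endpoint {g : ℝ → ℝ} (hg : Continuous g) {ε : ℝ} (hε : ε ∈ Ioo (0:ℝ) 1)
    (hz : ∀ t ∈ Ioo ε 1, g t = 0) (hne : ∃ t ∈ Icc (0:ℝ) 1, g t ≠ 0) :
    ∃ b, 0 < b ∧ b ≤ ε ∧ (∀ t ∈ Icc b 1, g t = 0) ∧ ∀ δ > 0, ∃ t ∈ Ioo (b - δ) b, g t ≠ 0 := by
  set S : Set ℝ := {t | t ∈ Ioo (0:ℝ) 1 ∧ g t ≠ 0} with hS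
  have hSne : S.Nonempty := by
    by_contra hcon
    rw [not_nonempty_iff_eq_empty] at hcon
    obtain ⟨t, ht, htn⟩ := hne
    apply htn
    refine S15.zero_closure hg zero_lt_one (fun s hs => ?_) t ht
    by_contra hsn
    have : s ∈ S := ⟨hs, hsn⟩
    rw [hcon] at this
    exact this
  have hub : ∀ s ∈ S, s ≤ ε := by
    intro s hs
    by_contra hlt
    exact hs.2 (hz s ⟨not_le.1 hlt, hs.1.2⟩)
  have hbdd : BddAbove S := ⟨ε, hub⟩
  have hle : sSup S ≤ ε := csSup_le hSne hub
  refine ⟨sSup S, ?_, hle, ?_, ?_⟩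
  · obtain ⟨s, hs⟩ := hSne
    exact hs.1.1.trans_le (le_csSup hbdd hs)
  · have hpos : 0 ≤ sSup S := by
      obtain ⟨s, hs⟩ := hSne
      exact hs.1.1.le.trans (le_csSup hbdd hs)
    apply S15.zero_closure hg (hle.trans_lt hε.2)
    intro t ht
    by_contra hn
    have : t ∈ S := ⟨⟨hpos.trans_lt ht.1, ht.2⟩, hn⟩
    exact absurd (le_csSup hbdd this) (not_le.2 ht.1)
  · intro δ hδ
    by_contra hcon
    push Not at hcon
    have := S15.zero_closure hg (by linarith : sSup S - δ < sSup S) hcon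
    obtain ⟨s, hs, hs2⟩ := exists_lt_of_lt_csSup hSne (by linarith : sSup S - δ < sSup S)
    exact hs.2 (this s ⟨hs2.le, le_csSup hbdd hs⟩)

lemma S15.reduce {ε : ℝ} (hε : ε ∈ Ioo (0:ℝ) 1)
    {V : ℝ → ℝ} (hV : ContinuousOn V (Icc 0 1))
    {h : ℝ → ℝ} (hh : ContinuousOn h (Icc 0 1))
    (hne : ∃ x ∈ Icc (0:ℝ) 1, h x ≠ 0)
    (hsupp : ∀ x ∈ Icc (0:ℝ) 1, x ∉ Icc (0:ℝ) ε → h x = 0) :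
    ∃ g : ℝ → ℝ, Continuous g ∧ ∃ b, 0 < b ∧ b ≤ ε ∧ (∀ δ > 0, ∃ t ∈ Ioo (b - δ) b, g t ≠ 0) ∧
      ∀ μ ψ, IsDirichletEigenpair V μ ψ → 0 < μ → ∫ x in (0:ℝ)..1, h x * ψ x = 0 →
        S15.F g b ((Real.sqrt μ : ℝ) : ℂ) = 0 := by
  obtain ⟨Vg, hVc, ⟨B, hB⟩, hVe⟩ := S15.exists_extension hV
  obtain ⟨hg, hhc, -, hhe⟩ := S15.exists_extension hh
  obtain ⟨K, hK, hKe⟩ := S15.kernel_exists hVc hB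
  have hgc := S15.ht_cont hhc hK
  have hz : ∀ t ∈ Ioo ε 1, S15.ht hg K t = 0 := by
    intro t ht
    have hzz : ∀ x ∈ Icc t 1, hg x = 0 := by
      intro x hx
      have hx1 : x ∈ Icc (0:ℝ) 1 := ⟨hε.1.le.trans (ht.1.le.trans hx.1), hx.2⟩
      rw [hhe x hx1]
      exact hsupp x hx1 fun hxx => absurd hxx.2 (not_le.2 (ht.1.trans_le hx.1))
    have e : ∫ x in t..1, K x t * hg x = ∫ x in t..1, (0:ℝ) := by
      apply intervalIntegral.integral_congr
      intro x hx
      rw [uIcc_of_le ht.2.le] at hx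
      simp only
      rw [hzz x hx, mul_zero]
    rw [S15.ht, e, hzz t ⟨le_rfl, ht.2.le⟩]
    simp
  have hnz : ∃ t ∈ Icc (0:ℝ) 1, S15.ht hg K t ≠ 0 := by
    by_contra hcon
    push Not at hcon
    obtain ⟨x, hx, hxn⟩ := hne
    apply hxn
    rw [← hhe x hx]
    exact S15.ht_ne hhc hK hcon x hx
  obtain ⟨b, hb0, hbε, hb1, hb2⟩ := S15.endpoint hgc hε hz hnz
  refine ⟨S15.ht hg K, hgc, b, hb0, hbε, hb2, ?_⟩
  rintro μ ψ ⟨h2, ⟨x0, hx0, hψn⟩, hode, h0, -⟩ hμ hInt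
  set z := Real.sqrt μ with hzd
  have hzp : 0 < z := Real.sqrt_pos.2 hμ
  have hz2 : z^2 = μ := Real.sq_sqrt hμ.le
  obtain ⟨c, hc⟩ := S15.eigfun hVc hB hK hKe hzp h2 h0 (by
    intro x hx
    rw [hz2, hVe x (Ioo_subset_Icc_self hx)]
    exact hode x hx)
  have hcn : c ≠ 0 := by
    rintro rfl
    apply hψn
    rw [hc x0 hx0, zero_mul]
  have e1 : ∫ x in (0:ℝ)..1, h x * ψ x = c * ∫ x in (0:ℝ)..1, hg x * (S15.sn z x + ∫ t in (0:ℝ)..x, K x t * S15.sn z t) := by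
    rw [← intervalIntegral.integral_const_mul]
    apply intervalIntegral.integral_congr
    intro x hx
    rw [uIcc_of_le zero_le_one] at hx
    simp only
    rw [hc x hx, hhe x hx]
    ring
  rw [e1, S15.ht_pair hhc hK] at hInt
  have e2 : ∫ t in (0:ℝ)..1, S15.ht hg K t * S15.sn z t = 0 := (mul_eq_zero.1 hInt).resolve_left hcn
  have hsn := S15.sn_cont z
  rw [← intervalIntegral.integral_add_adjacent_intervals (b := b)
    (by apply Continuous.intervalIntegrable; fun_prop) (by apply Continuous.intervalIntegrable; fun_prop)] at e2
  have e3 : ∫ t in b..1, S15.ht hg K t * S15.sn z t = ∫ t in b..1, (0:ℝ) := by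
    apply intervalIntegral.integral_congr
    intro x hx
    rw [uIcc_of_le (hbε.trans hε.2.le)] at hx
    simp only
    rw [hb1 x hx, zero_mul]
  rw [e3, intervalIntegral.integral_zero, add_zero] at e2
  have e4 : ∫ t in (0:ℝ)..b, S15.ht hg K t * Real.sin (z * t) = 0 := by
    have : ∀ t, S15.ht hg K t * Real.sin (z * t) = z * (S15.ht hg K t * S15.sn z t) := by
      intro t
      unfold S15.sn
      field_simp
    simp only [this]
    rw [intervalIntegral.integral_const_mul, e2, mul_zero]
  have e5 : S15.F (S15.ht hg K) b ((z : ℝ) : ℂ) = ((∫ t in (0:ℝ)..b, S15.ht hg K t * Real.sin (z * t) : ℝ) : ℂ) := by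
    rw [S15.F, ← intervalIntegral.integral_ofReal]
    congr 1
    funext t
    push_cast
    rfl
  rw [e5, e4]
  simp

/-- upper density bound for the spectral modes annihilated by an initial
datum supported in `[0,ε]`. -/
theorem statement15
    (ε : ℝ) (hε : ε ∈ Ioo (0:ℝ) 1)
    (V : ℝ → ℝ) (hV : ContinuousOn V (Icc 0 1))
    (lam : ℕ → ℝ) (phi : ℕ → ℝ → ℝ) (hsys : IsDirichletSystem V lam phi)
    (hasymp : ∃ C : ℝ, ∀ k, |lam k - (((k:ℝ) + 1) * Real.pi)^2| ≤ C)
    (h : ℝ → ℝ) (hh : ContinuousOn h (Icc 0 1))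
    (hne : ∃ x ∈ Icc (0:ℝ) 1, h x ≠ 0)
    (hsupp : ∀ x ∈ Icc (0:ℝ) 1, x ∉ Icc (0:ℝ) ε → h x = 0) :
    Filter.limsup
      (fun lambda : ℝ =>
        (Nat.card {k : ℕ | 0 < lam k ∧ lam k ≤ lambda ∧
            ∫ x in (0:ℝ)..1, h x * phi k x = 0} : ℝ) / Real.sqrt lambda)
      Filter.atTop ≤ ε / Real.pi := by
  obtain ⟨g, hgc, b, hb0, hbε, hnz, hF⟩ := S15.reduce hε hV hh hne hsupp
  obtain ⟨hmono, htend, heig, -, -⟩ := hsys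
  apply le_of_forall_pos_le_add
  intro η hη
  apply Filter.limsup_le_of_le
  · refine Filter.isCoboundedUnder_le_of_le (x := 0) Filter.atTop fun lambda => ?_
    positivity
  have hev := Real.tendsto_sqrt_atTop.eventually (S15.zeros_count hgc hb0 hnz hη)
  filter_upwards [hev, Filter.eventually_gt_atTop (0:ℝ)] with lambda hl hlpos
  have hs : 0 < Real.sqrt lambda := Real.sqrt_pos.2 hlpos
  set A : Set ℕ := {k : ℕ | 0 < lam k ∧ lam k ≤ lambda ∧
            ∫ x in (0:ℝ)..1, h x * phi k x = 0} with hA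
  have hfin : A.Finite := by
    obtain ⟨N, hN⟩ := Filter.eventually_atTop.1 (htend.eventually_gt_atTop lambda)
    apply (finite_lt_nat N).subset
    intro k hk
    by_contra hkN
    exact absurd hk.2.1 (not_le.2 (hN k (not_lt.1 hkN)))
  have hinj : InjOn (fun k => Real.sqrt (lam k)) A := by
    intro i hi j hj hij
    exact hmono.injective ((Real.sqrt_inj hi.1.le hj.1.le).1 hij)
  have hcard := hl (hfin.toFinset.image fun k => Real.sqrt (lam k)) (by
    intro x hx
    obtain ⟨k, hk, rfl⟩ := Finset.mem_image.1 hx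
    rw [hfin.mem_toFinset] at hk
    exact ⟨hF _ _ (heig k) hk.1 hk.2.2, Real.sqrt_nonneg _, Real.sqrt_le_sqrt hk.2.1⟩)
  rw [Finset.card_image_of_injOn (by simpa using hinj)] at hcard
  have hc : Nat.card A = hfin.toFinset.card := Nat.card_eq_card_finite_toFinset hfin
  rw [hc, div_le_iff₀ hs]
  refine hcard.trans ?_
  have hpi := Real.pi_pos
  gcongr
end
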